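/- arXiv:2410.18259 — 3 statements merged into one kernel-verified Lean document; each statement's English description precedes it below -/
import Mathlib

section
/- Let k be a positive integer. For every integer n ≥ 2 and every function f from the primes to the real numbers, Σ_{d | n, d > 1, ω(d) ≥ k} μ(d) f(p_k(d)) = (−1)^k · C(ω(n)−1, k−1) · f(P(n)), where C(·,·) is the binomial coefficient (equal to 0 when ω(n)−1 < k−1) and the sum runs over divisors d > 1 of n having at least k distinct prime factors. -/
open Finset ArithmeticFunction

/-- The largest prime factor of `n` (junk value `0` for `n ≤ 1`). -/
def maxPrimeFac (n : ℕ) : ℕ := n.primeFactors.sup _root_.id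

/-- The `k`-th smallest distinct prime factor of `n` (for `k ≥ 1`), defined when
`ω(n) ≥ k`; junk value `1` otherwise. -/
def kthSmallestPrimeFac (k n : ℕ) : ℕ :=
  (n.primeFactors.sort (· ≤ ·)).getD (k - 1) 1

lemma kth_aux (f : ℕ → ℝ) (s : Finset ℕ) : s.Nonempty → ∀ j : ℕ,
    ∑ t ∈ s.powerset, (if j < t.card then
      (-1 : ℝ) ^ t.card * f ((t.sort (· ≤ ·)).getD j 1) else 0)
      = (-1) ^ (j + 1) * ((s.card - 1).choose j : ℝ) * f (s.sup _root_.id) := by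
  induction s using Finset.induction_on_min with
  | empty => intro h; simp at h
  | insert a s ha ih =>
    intro _ j
    have has : a ∉ s := fun h => lt_irrefl _ (ha a h)
    have hsort : ∀ t ∈ s.powerset, (insert a t).sort (· ≤ ·) = a :: t.sort (· ≤ ·) := by
      intro t ht
      rw [Finset.mem_powerset] at ht
      exact Finset.sort_insert _ (fun b hb => (ha b (ht hb)).le) (fun h => has (ht h))
    have hcard : ∀ t ∈ s.powerset, (insert a t).card = t.card + 1 := by
      intro t ht
      rw [Finset.mem_powerset] at ht
      exact Finset.card_insert_of_notMem (fun h => has (ht h))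
    rw [Finset.sum_powerset_insert has]
    rcases s.eq_empty_or_nonempty with rfl | hs
    · cases j with
      | zero => simp
      | succ j => simp
    · have hsup : (insert a s).sup _root_.id = s.sup _root_.id := by
        rw [Finset.sup_insert, sup_eq_right]
        obtain ⟨x, hx⟩ := hs
        exact (ha x hx).le.trans (Finset.le_sup (f := _root_.id) hx)
      have hc : (insert a s).card - 1 = (s.card - 1) + 1 := by
        rw [Finset.card_insert_of_notMem has]
        have := hs.card_pos
        omega
      rw [hsup, hc, ih hs]
      cases j with
      | zero =>
        have h2 : ∑ t ∈ s.powerset, (if 0 < (insert a t).card then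
            (-1 : ℝ) ^ (insert a t).card * f (((insert a t).sort (· ≤ ·)).getD 0 1) else 0)
            = 0 := by
          have h3 : ∑ t ∈ s.powerset, (-1 : ℝ) ^ t.card = 0 := by
            have := Finset.sum_powerset_neg_one_pow_card_of_nonempty hs
            exact_mod_cast this
          rw [← mul_zero (-f a), ← h3, Finset.mul_sum]
          refine Finset.sum_congr rfl fun t ht => ?_
          rw [hsort t ht, hcard t ht, if_pos (Nat.succ_pos _), List.getD_cons_zero]
          ring
        rw [h2]
        simp
      | succ j =>
        have h2 : ∑ t ∈ s.powerset, (if j + 1 < (insert a t).card then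
            (-1 : ℝ) ^ (insert a t).card * f (((insert a t).sort (· ≤ ·)).getD (j + 1) 1) else 0)
            = - ((-1) ^ (j + 1) * ((s.card - 1).choose j : ℝ) * f (s.sup _root_.id)) := by
          rw [← ih hs j, ← Finset.sum_neg_distrib]
          refine Finset.sum_congr rfl fun t ht => ?_
          rw [hsort t ht, hcard t ht, List.getD_cons_succ]
          simp only [Nat.add_lt_add_iff_right]
          split_ifs <;> ring
        rw [h2, Nat.choose_succ_succ]
        push_cast
        ring

/-- Duality identity: for `k ≥ 1`, `n ≥ 2` and any real-valued function `f` on the primes,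
`Σ_{d ∣ n, d > 1, ω(d) ≥ k} μ(d) f(p_k(d)) = (−1)^k C(ω(n)−1, k−1) f(P(n))`. -/
theorem duality_kth_smallest (k : ℕ) (hk : 1 ≤ k) (n : ℕ) (hn : 2 ≤ n) (f : ℕ → ℝ) :
    ∑ d ∈ n.divisors.filter (fun d => 1 < d ∧ k ≤ d.primeFactors.card),
        (moebius d : ℝ) * f (kthSmallestPrimeFac k d)
      = (-1) ^ k * ((n.primeFactors.card - 1).choose (k - 1) : ℝ) * f (maxPrimeFac n) := by
  obtain ⟨j, rfl⟩ : ∃ j, k = j + 1 := ⟨k - 1, by omega⟩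
  have hne : n.primeFactors.Nonempty := Nat.nonempty_primeFactors.2 (by omega)
  have key := kth_aux f n.primeFactors hne j
  unfold maxPrimeFac
  rw [Nat.add_sub_cancel, ← key, ← Finset.sum_filter]
  have h1 : ∑ d ∈ n.divisors.filter (fun d => 1 < d ∧ j + 1 ≤ d.primeFactors.card),
        (moebius d : ℝ) * f (kthSmallestPrimeFac (j + 1) d)
      = ∑ d ∈ (n.divisors.filter (fun d => 1 < d ∧ j + 1 ≤ d.primeFactors.card)).filter Squarefree,
        (moebius d : ℝ) * f (kthSmallestPrimeFac (j + 1) d) := by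
    symm
    apply Finset.sum_filter_of_ne
    intro d _ h
    by_contra hsq
    exact h (by rw [moebius_eq_zero_of_not_squarefree hsq]; simp)
  rw [h1]
  have hpr : ∀ t ⊆ n.primeFactors, (∏ p ∈ t, p).primeFactors = t := fun t ht =>
    Nat.primeFactors_prod (fun p hp => Nat.prime_of_mem_primeFactors (ht hp))
  refine Finset.sum_nbij' (fun d => d.primeFactors) (fun t => ∏ p ∈ t, p) ?_ ?_ ?_ ?_ ?_
  · intro d hd
    simp only [Finset.mem_filter, Nat.mem_divisors, Finset.mem_powerset] at hd ⊢
    exact ⟨Nat.primeFactors_mono hd.1.1.1 hd.1.1.2, by omega⟩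
  · intro t ht
    simp only [Finset.mem_filter, Nat.mem_divisors, Finset.mem_powerset] at ht ⊢
    obtain ⟨ht, hc⟩ := ht
    have hp := hpr t ht
    refine ⟨⟨⟨?_, by omega⟩, ?_, by rw [hp]; omega⟩, ?_⟩
    · exact (Finset.prod_dvd_prod_of_subset _ _ _ ht).trans (Nat.prod_primeFactors_dvd n)
    · apply Nat.nonempty_primeFactors.1
      rw [hp]
      exact Finset.card_pos.1 (by omega)
    · refine Finset.squarefree_prod_of_pairwise_isCoprime (fun p hp q hq hpq => ?_) (fun p hp => ?_)
      · exact Nat.coprime_iff_isRelPrime.1 ((Nat.coprime_primes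
          (Nat.prime_of_mem_primeFactors (ht hp)) (Nat.prime_of_mem_primeFactors (ht hq))).2 hpq)
      · exact (Nat.prime_of_mem_primeFactors (ht hp)).prime.squarefree
  · intro d hd
    simp only [Finset.mem_filter] at hd
    exact Nat.prod_primeFactors_of_squarefree hd.2
  · intro t ht
    simp only [Finset.mem_filter, Finset.mem_powerset] at ht
    exact hpr t ht.1
  · intro d hd
    simp only [Finset.mem_filter] at hd
    unfold kthSmallestPrimeFac
    rw [moebius_apply_of_squarefree hd.2, Nat.add_sub_cancel,
      (cardDistinctFactors_eq_cardFactors_iff_squarefree hd.2.ne_zero).2 hd.2 |>.symm]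
    rw [cardDistinctFactors_apply, ← List.card_toFinset, Nat.toFinset_factors]
    push_cast
    rfl
end

section
/- There exist positive constants c and C such that for every prime p and every real x ≥ 2, |Σ_{n ≤ x, p ∤ n} μ(n)| ≤ C · x · exp(−c·√(log x)), where the sum runs over positive integers n ≤ x not divisible by p. -/
section PA
open Complex Metric Set

/-- log branch + Borel-Caratheodory -/
lemma bc_log {F : ℂ → ℂ} {R M : ℝ} (hR : 0 < R) (hM : 0 < M)
    (hF : DifferentiableOn ℂ F (ball 0 R)) (h0 : ∀ z ∈ ball (0:ℂ) R, F z ≠ 0)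
    (hb : ∀ z ∈ ball (0:ℂ) R, ‖F z‖ ≤ Real.exp M * ‖F 0‖) :
    ∃ L : ℂ → ℂ, DifferentiableOn ℂ L (ball 0 R) ∧ L 0 = 0 ∧
      (∀ z ∈ ball (0:ℂ) R, F z = F 0 * exp (L z)) ∧
      (∀ z ∈ ball (0:ℂ) R, ‖L z‖ ≤ 2 * M * ‖z‖ / (R - ‖z‖)) := by
  have h00 : (0:ℂ) ∈ ball (0:ℂ) R := by simpa using hR
  have hd : DifferentiableOn ℂ (fun z => deriv F z / F z) (ball 0 R) :=
    (hF.deriv isOpen_ball).div hF h0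
  obtain ⟨L0, hL0⟩ := hd.isExactOn_ball
  let L := fun z => L0 z - L0 0
  have hL : ∀ z ∈ ball (0:ℂ) R, HasDerivAt L (deriv F z / F z) z := fun z hz =>
    (hL0 z hz).sub_const _
  have hLd : DifferentiableOn ℂ L (ball 0 R) := fun z hz =>
    (hL z hz).differentiableAt.differentiableWithinAt
  have hFd : ∀ z ∈ ball (0:ℂ) R, HasDerivAt F (deriv F z) z := fun z hz =>
    (hF.differentiableAt (isOpen_ball.mem_nhds hz)).hasDerivAt
  have key : ∀ z ∈ ball (0:ℂ) R, F z * exp (-(L z)) = F 0 := by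
    intro z hz
    have hder : ∀ w ∈ ball (0:ℂ) R, HasDerivAt (fun z => F z * exp (-(L z))) 0 w := by
      intro w hw
      have := (hFd w hw).mul ((hL w hw).neg.cexp)
      convert! this using 1
      have := h0 w hw
      field_simp
      ring
    have := (convex_ball (0:ℂ) R).is_const_of_fderivWithin_eq_zero (𝕜 := ℂ)
      (f := fun z => F z * exp (-(L z))) (fun w hw => (hder w hw).differentiableAt.differentiableWithinAt)
      (fun w hw => by
        rw [fderivWithin_of_isOpen isOpen_ball hw]
        have := (hder w hw).hasFDerivAt.fderiv
        rw [this]; ext; simp) hz h00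
    simpa [L] using this
  have hexp : ∀ z ∈ ball (0:ℂ) R, F z = F 0 * exp (L z) := by
    intro z hz
    rw [← key z hz, mul_assoc, ← Complex.exp_add]; simp
  refine ⟨L, hLd, by simp [L], hexp, fun z hz => ?_⟩
  refine borelCaratheodory_zero hM hLd ?_ hR hz (by simp [L])
  intro w hw
  have h1 := hb w hw
  rw [hexp w hw, norm_mul, mul_comm, norm_exp] at h1
  have h2 : 0 < ‖F 0‖ := norm_pos_iff.mpr (h0 0 h00)
  have := le_of_mul_le_mul_right h1 h2
  simpa using Real.exp_le_exp.mp this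

lemma bc_lower {F : ℂ → ℂ} {R M : ℝ} (hR : 0 < R) (hM : 0 < M)
    (hF : DifferentiableOn ℂ F (ball 0 R)) (h0 : ∀ z ∈ ball (0:ℂ) R, F z ≠ 0)
    (hb : ∀ z ∈ ball (0:ℂ) R, ‖F z‖ ≤ Real.exp M * ‖F 0‖) (z : ℂ) (hz : z ∈ ball (0:ℂ) R) :
    ‖F 0‖ * Real.exp (-(2 * M * ‖z‖ / (R - ‖z‖))) ≤ ‖F z‖ := by
  obtain ⟨L, hLd, hL0, hexp, hbd⟩ := bc_log hR hM hF h0 hb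
  rw [hexp z hz, norm_mul, norm_exp]
  gcongr
  have := (abs_le.mp ((abs_re_le_norm (L z)).trans (hbd z hz))).1
  linarith

lemma bc_deriv {F : ℂ → ℂ} {R M : ℝ} (hR : 0 < R) (hM : 0 < M)
    (hF : DifferentiableOn ℂ F (ball 0 R)) (h0 : ∀ z ∈ ball (0:ℂ) R, F z ≠ 0)
    (hb : ∀ z ∈ ball (0:ℂ) R, ‖F z‖ ≤ Real.exp M * ‖F 0‖) :
    ‖deriv F 0 / F 0‖ ≤ 4 * M / R := by
  obtain ⟨L, hLd, hL0, hexp, hbd⟩ := bc_log hR hM hF h0 hb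
  have h00 : (0:ℂ) ∈ ball (0:ℂ) R := by simpa using hR
  have hLat : DifferentiableAt ℂ L 0 := hLd.differentiableAt (isOpen_ball.mem_nhds h00)
  have hev : F =ᶠ[nhds 0] fun z => F 0 * exp (L z) := by
    filter_upwards [isOpen_ball.mem_nhds h00] with z hz using hexp z hz
  have hder : deriv F 0 = F 0 * deriv L 0 := by
    rw [hev.deriv_eq]
    have := (hLat.hasDerivAt.cexp).const_mul (F 0)
    rw [this.deriv, hL0]; simp
  have hF0 := h0 0 h00
  rw [hder, mul_div_cancel_left₀ _ hF0]
  have := norm_deriv_le_of_forall_mem_sphere_norm_le (f := L) (c := 0) (R := R/2) (C := 2*M)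
    (by positivity) ?_ ?_
  · refine this.trans (le_of_eq ?_); field_simp; ring
  · refine DifferentiableOn.diffContOnCl (hLd.mono ?_)
    rw [closure_ball _ (by positivity)]
    exact closedBall_subset_ball (by linarith)
  · intro z hz
    have hz' : ‖z‖ = R/2 := by simpa using hz
    have := hbd z (by simp [hz']; linarith)
    rw [hz'] at this
    refine this.trans (le_of_eq ?_)
    field_simp; ring
end PA


section PB
open Complex Metric Set

lemma factor_zeros {f : ℂ → ℂ} (hf : Differentiable ℂ f) {R : ℝ} (hR : 0 < R) (h0 : f 0 ≠ 0) :
    ∃ (S : Finset ℂ) (n : ℂ → ℕ) (g : ℂ → ℂ), AnalyticOnNhd ℂ g (closedBall 0 R) ∧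
      (∀ z ∈ closedBall (0:ℂ) R, g z ≠ 0) ∧ (∀ r ∈ S, r ∈ closedBall (0:ℂ) R ∧ n r ≠ 0) ∧
      (∀ z ∈ closedBall (0:ℂ) R, f z = (∏ r ∈ S, (z - r) ^ n r) * g z) := by
  have hfa : AnalyticOnNhd ℂ f (closedBall 0 R) := fun z _ => hf.analyticAt z
  have h00 : (0:ℂ) ∈ closedBall (0:ℂ) R := by simpa using hR.le
  have hord : ∀ u : closedBall (0:ℂ) R, meromorphicOrderAt f u ≠ ⊤ := by
    intro u
    have hu : AnalyticOnNhd ℂ f univ := fun z _ => hf.analyticAt z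
    rw [(hf.analyticAt u).meromorphicOrderAt_eq]
    have : analyticOrderAt f u ≠ ⊤ := by
      intro h
      rw [analyticOrderAt_eq_top] at h
      have := hu.eqOn_zero_of_preconnected_of_eventuallyEq_zero isPreconnected_univ (mem_univ _) h
      exact h0 (this (mem_univ 0))
    simpa using this
  have hfin := (MeromorphicOn.divisor f (closedBall 0 R)).finiteSupport (isCompact_closedBall 0 R)
  obtain ⟨g, hg, hg0, hfg⟩ := MeromorphicOn.extract_zeros_poles
    (fun z hz => (hfa z hz).meromorphicAt) hord hfin
  set D := MeromorphicOn.divisor f (closedBall 0 R) with hD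
  have hDn : ∀ u, 0 ≤ D u := fun u => MeromorphicOn.AnalyticOnNhd.divisor_nonneg hfa u
  refine ⟨hfin.toFinset, fun u => (D u).toNat, g, hg, fun z hz => hg0 ⟨z, hz⟩, ?_, ?_⟩
  · intro r hr
    rw [Finite.mem_toFinset] at hr
    refine ⟨?_, ?_⟩
    · by_contra hc
      exact hr (D.apply_eq_zero_of_notMem hc)
    · have := hDn r
      have h2 : D r ≠ 0 := hr
      show (D r).toNat ≠ 0
      omega
  · have hprod : (∏ᶠ u, (fun z : ℂ => z - u) ^ D u) =
        fun z => ∏ r ∈ hfin.toFinset, (z - r) ^ (D r).toNat := by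
      rw [finprod_eq_prod_of_mulSupport_subset_of_finite _ _ hfin]
      · ext z
        rw [Finset.prod_apply]
        refine Finset.prod_congr rfl fun r _ => ?_
        rw [Pi.pow_apply]
        conv_lhs => rw [← Int.toNat_of_nonneg (hDn r)]
        rw [zpow_natCast]
      · intro u hu
        by_contra hc
        have : D u = 0 := by simpa using hc
        simp [this] at hu
    rw [hprod] at hfg
    have han : AnalyticOnNhd ℂ (fun z => (∏ r ∈ hfin.toFinset, (z - r) ^ (D r).toNat) * g z)
        (closedBall 0 R) := by
      intro z hz
      refine AnalyticAt.mul ?_ (hg z hz)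
      exact Finset.analyticAt_fun_prod _ (fun r _ => by fun_prop)
    refine hfa.eqOn_of_preconnected_of_frequently_eq han (convex_closedBall 0 R).isPreconnected h00 ?_
    have h1 := hfg
    rw [Filter.EventuallyEq, Filter.Eventually, mem_codiscreteWithin] at h1
    have h2 := h1 0 h00
    rw [Filter.disjoint_principal_right] at h2
    have h3 : ball (0:ℂ) R ∈ nhdsWithin (0:ℂ) {0}ᶜ :=
      nhdsWithin_le_nhds (isOpen_ball.mem_nhds (by simpa using hR))
    refine Filter.Eventually.frequently ?_
    filter_upwards [h2, h3] with z hz hz'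
    have hzc := ball_subset_closedBall hz'
    by_contra hc
    apply hz
    refine ⟨hzc, ?_⟩
    simpa using hc

lemma landau {f : ℂ → ℂ} (hf : Differentiable ℂ f) {R M : ℝ} (hR : 0 < R) (hM : 0 < M)
    (h0 : f 0 ≠ 0) (hb : ∀ z ∈ closedBall (0:ℂ) R, ‖f z‖ ≤ Real.exp M * ‖f 0‖)
    (hz : ∀ z ∈ closedBall (0:ℂ) R, f z = 0 → z.re < 0) :
    -(4 * M / R) ≤ (deriv f 0 / f 0).re ∧ ∀ b : ℝ, 0 < b → b < R → f (-b) = 0 →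
      1 / b - b / R ^ 2 - 4 * M / R ≤ (deriv f 0 / f 0).re := by
  obtain ⟨S, n, g, hg, hg0, hS, hfac⟩ := factor_zeros hf hR h0
  have h00 : (0:ℂ) ∈ closedBall (0:ℂ) R := by simpa using hR.le
  have hSre : ∀ r ∈ S, r.re < 0 := by
    intro r hr
    refine hz r (hS r hr).1 ?_
    rw [hfac r (hS r hr).1, Finset.prod_eq_zero hr (by simp [(hS r hr).2]), zero_mul]
  have hSne : ∀ r ∈ S, r ≠ 0 := by
    intro r hr h; have := hSre r hr; simp [h] at this
  have hRc : (R:ℂ) ≠ 0 := by exact_mod_cast hR.ne'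
  let F : ℂ → ℂ := fun z => (∏ r ∈ S, ((R ^ 2 - (starRingEnd ℂ) r * z) / R) ^ n r) * g z
  have hFa : AnalyticOnNhd ℂ F (closedBall 0 R) := by
    intro z hz
    refine AnalyticAt.mul ?_ (hg z hz)
    exact Finset.analyticAt_fun_prod _ (fun r _ => by fun_prop (disch := exact hRc))
  have hFd : DifferentiableOn ℂ F (closedBall 0 R) := hFa.differentiableOn
  -- norm on the sphere
  have hsph : ∀ z ∈ sphere (0:ℂ) R, ‖F z‖ = ‖f z‖ := by
    intro z hz'
    rw [hfac z (sphere_subset_closedBall hz')]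
    simp only [F, norm_mul, norm_prod, norm_pow]
    congr 1
    refine Finset.prod_congr rfl fun r hr => ?_
    congr 1
    have hzn : ‖z‖ = R := by simpa using hz'
    have : ((R:ℂ) ^ 2 - (starRingEnd ℂ) r * z) = z * (starRingEnd ℂ) (z - r) := by
      rw [map_sub, mul_sub, mul_conj, normSq_eq_norm_sq, hzn]; push_cast; ring
    rw [this, norm_div, norm_mul, RCLike.norm_conj, hzn]
    simp [abs_of_pos hR]
    field_simp
  have hF0 : ‖f 0‖ ≤ ‖F 0‖ := by
    rw [hfac 0 h00]
    simp only [F, norm_mul, norm_prod, norm_pow]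
    gcongr with r hr
    have := (hS r hr).1
    have h1 : ‖r‖ ≤ R := by simpa using this
    have : ((R:ℂ) ^ 2 - (starRingEnd ℂ) r * 0) / R = R := by field_simp; simp
    rw [this]; simp [abs_of_pos hR, h1]
  have hFb : ∀ z ∈ ball (0:ℂ) R, ‖F z‖ ≤ Real.exp M * ‖F 0‖ := by
    intro z hz'
    refine Complex.norm_le_of_forall_mem_frontier_norm_le (U := ball 0 R) isBounded_ball
      (DifferentiableOn.diffContOnCl ?_) ?_ (subset_closure hz')
    · rwa [closure_ball _ hR.ne']
    · rw [frontier_ball _ hR.ne']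
      intro w hw
      rw [hsph w hw]
      exact (hb w (sphere_subset_closedBall hw)).trans (by gcongr)
  have hFn : ∀ z ∈ ball (0:ℂ) R, ∀ r ∈ S, ((R ^ 2 - (starRingEnd ℂ) r * z) / R : ℂ) ≠ 0 := by
    intro z hz' r hr
    refine div_ne_zero ?_ hRc
    intro h
    have h1 : ‖r‖ ≤ R := by simpa using (hS r hr).1
    have h2 : ‖z‖ < R := by simpa using hz'
    have h3 : (R:ℂ)^2 = (starRingEnd ℂ) r * z := sub_eq_zero.mp h
    have h4 := congrArg norm h3
    rw [norm_mul, RCLike.norm_conj, norm_pow, norm_real, Real.norm_eq_abs, abs_of_pos hR] at h4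
    nlinarith [norm_nonneg r, norm_nonneg z]
  have hFne : ∀ z ∈ ball (0:ℂ) R, F z ≠ 0 := by
    intro z hz'
    refine mul_ne_zero (Finset.prod_ne_zero_iff.mpr fun r hr => pow_ne_zero _ (hFn z hz' r hr))
      (hg0 z (ball_subset_closedBall hz'))
  have hbc := bc_deriv hR hM (hFd.mono ball_subset_closedBall) hFne hFb
  -- log derivatives
  have h0b : (0:ℂ) ∈ ball (0:ℂ) R := by simpa using hR
  have hgd : DifferentiableAt ℂ g 0 := (hg 0 h00).differentiableAt
  have hg00 := hg0 0 h00
  have hlF : logDeriv F 0 = (∑ r ∈ S, (n r : ℂ) * (-(starRingEnd ℂ) r / R ^ 2)) + logDeriv g 0 := by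
    have := logDeriv_mul (f := fun z => ∏ r ∈ S, ((R ^ 2 - (starRingEnd ℂ) r * z) / R) ^ n r) (g := g)
      (0:ℂ) (Finset.prod_ne_zero_iff.mpr fun r hr => pow_ne_zero _ (hFn 0 h0b r hr)) hg00
      (by fun_prop (disch := exact hRc)) hgd
    rw [show F = fun z => (∏ r ∈ S, ((R ^ 2 - (starRingEnd ℂ) r * z) / R) ^ n r) * g z from rfl, this]
    congr 1
    rw [logDeriv_prod (f := fun r (z:ℂ) => ((R ^ 2 - (starRingEnd ℂ) r * z) / R) ^ n r) (fun r hr => pow_ne_zero _ (hFn 0 h0b r hr))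
      (fun r _ => by fun_prop (disch := exact hRc))]
    refine Finset.sum_congr rfl fun r hr => ?_
    rw [logDeriv_fun_pow (by fun_prop (disch := exact hRc))]
    congr 1
    rw [logDeriv_apply]
    have : HasDerivAt (fun z : ℂ => ((R:ℂ) ^ 2 - (starRingEnd ℂ) r * z) / R) (-((starRingEnd ℂ) r) / R) 0 := by
      have := (((hasDerivAt_id (0:ℂ)).const_mul ((starRingEnd ℂ) r)).const_sub ((R:ℂ)^2)).div_const (R:ℂ)
      simpa using this
    rw [this.deriv]
    simp
    field_simp
  have hlf : logDeriv f 0 = (∑ r ∈ S, (n r : ℂ) * (-1 / r)) + logDeriv g 0 := by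
    have hev : f =ᶠ[nhds 0] fun z => (∏ r ∈ S, (z - r) ^ n r) * g z := by
      filter_upwards [isOpen_ball.mem_nhds h0b] with z hz using hfac z (ball_subset_closedBall hz)
    have hne : ∀ r ∈ S, ((0:ℂ) - r) ^ n r ≠ 0 := fun r hr => pow_ne_zero _ (by simpa using hSne r hr)
    rw [logDeriv_apply, hev.deriv_eq, hev.eq_of_nhds, ← logDeriv_apply]
    rw [logDeriv_mul (f := fun z => ∏ r ∈ S, (z - r) ^ n r) (g := g)
      (0:ℂ) (Finset.prod_ne_zero_iff.mpr hne) hg00 (by fun_prop) hgd]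
    congr 1
    rw [logDeriv_prod (f := fun r (z:ℂ) => (z - r) ^ n r) hne (fun r _ => by fun_prop)]
    refine Finset.sum_congr rfl fun r hr => ?_
    rw [logDeriv_fun_pow (by fun_prop)]
    congr 1
    rw [logDeriv_apply, deriv_sub_const]
    have := hSne r hr
    simp [div_eq_mul_inv]
  have hdiff : (deriv f 0 / f 0).re = (deriv F 0 / F 0).re +
      ∑ r ∈ S, (n r : ℝ) * (-1 / r + (starRingEnd ℂ) r / R ^ 2).re := by
    rw [← logDeriv_apply, ← logDeriv_apply, hlf, hlF]
    have hn : ∀ (k : ℕ) (w : ℂ), ((k:ℂ) * w).re = k * w.re := fun k w => by simp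
    simp only [add_re, re_sum, hn]
    rw [add_right_comm, ← Finset.sum_add_distrib]
    congr 1
    refine Finset.sum_congr rfl fun r hr => ?_
    simp only [neg_div, neg_re]; ring
  have hterm : ∀ r ∈ S, 0 ≤ (-1 / r + (starRingEnd ℂ) r / R ^ 2).re := by
    intro r hr
    have h1 : ‖r‖ ≤ R := by simpa using (hS r hr).1
    have h2 : 0 < normSq r := normSq_pos.mpr (hSne r hr)
    have h3 : normSq r ≤ R ^ 2 := by rw [normSq_eq_norm_sq]; gcongr
    have : (-1 / r + (starRingEnd ℂ) r / R ^ 2).re = (-r.re) * (1 / normSq r - 1 / R ^ 2) := by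
      have e : ((starRingEnd ℂ) r / (R:ℂ) ^ 2).re = r.re / R ^ 2 := by
        rw [← ofReal_pow, div_ofReal_re, conj_re]
      rw [add_re, e, div_re]
      simp
      ring
    rw [this]
    refine mul_nonneg (by linarith [hSre r hr]) (sub_nonneg.mpr ?_)
    gcongr
  have hFre := (abs_le.mp ((abs_re_le_norm _).trans hbc)).1
  rw [hdiff]
  constructor
  · have : 0 ≤ ∑ r ∈ S, (n r : ℝ) * (-1 / r + (starRingEnd ℂ) r / R ^ 2).re :=
      Finset.sum_nonneg fun r hr => mul_nonneg (by positivity) (hterm r hr)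
    linarith
  · intro b hb0 hbR hfb
    have hbm : (-(b:ℂ)) ∈ closedBall (0:ℂ) R := by simp [abs_of_pos hb0, hbR.le]
    have hmem : (-(b:ℂ)) ∈ S := by
      rw [hfac _ hbm] at hfb
      rcases mul_eq_zero.mp hfb with h | h
      · obtain ⟨r, hr, h⟩ := Finset.prod_eq_zero_iff.mp h
        have := pow_eq_zero_iff (hS r hr).2 |>.mp h
        rw [sub_eq_zero] at this
        rwa [this]
      · exact absurd h (hg0 _ hbm)
    have h1 := Finset.single_le_sum (f := fun r : ℂ => (n r : ℝ) * (-1 / r + (starRingEnd ℂ) r / R ^ 2).re)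
      (fun r hr => mul_nonneg (by positivity) (hterm r hr)) hmem
    have h2 := hterm _ hmem
    have h3 : (1:ℝ) ≤ n (-(b:ℂ)) := by
      exact_mod_cast Nat.one_le_iff_ne_zero.mpr (hS _ hmem).2
    have h4 : (-1 / (-(b:ℂ)) + (starRingEnd ℂ) (-(b:ℂ)) / R ^ 2).re = 1 / b - b / R ^ 2 := by
      have : (-1 / (-(b:ℂ)) + (starRingEnd ℂ) (-(b:ℂ)) / R ^ 2) = ((1 / b - b / R ^ 2 : ℝ) : ℂ) := by
        rw [map_neg, conj_ofReal]; push_cast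
        rw [neg_div_neg_eq]; ring
      rw [this, ofReal_re]
    have h5 := le_mul_of_one_le_left h2 h3
    rw [h4] at h5
    simp only [h4] at h1
    linarith
end PB


section PC
open Complex Metric Set MeasureTheory Filter Asymptotics

noncomputable def frIoi (u : ℝ) : ℂ := (Ioi (1:ℝ)).indicator (fun u => ((Int.fract u : ℝ) : ℂ)) u

lemma frIoi_norm_le (u : ℝ) : ‖frIoi u‖ ≤ 1 := by
  unfold frIoi
  refine (norm_indicator_le_norm_self _ _).trans ?_
  rw [norm_real, Real.norm_eq_abs, abs_of_nonneg (Int.fract_nonneg u)]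
  exact (Int.fract_lt_one u).le

lemma frIoi_meas : Measurable frIoi := by
  unfold frIoi
  exact (measurable_ofReal.comp measurable_fract).indicator measurableSet_Ioi

lemma frIoi_locInt : LocallyIntegrableOn frIoi (Ioi 0) := by
  refine LocallyIntegrable.locallyIntegrableOn ?_ _
  refine (locallyIntegrable_const (1:ℝ)).mono frIoi_meas.aestronglyMeasurable ?_
  filter_upwards with x
  simpa using frIoi_norm_le x

lemma frIoi_top : frIoi =O[atTop] (fun x : ℝ => x ^ (-(0:ℝ))) := by
  simp only [neg_zero, Real.rpow_zero]
  exact IsBigO.of_bound 1 (Eventually.of_forall fun x => by simpa using frIoi_norm_le x)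

lemma frIoi_bot (b : ℝ) : frIoi =O[nhdsWithin 0 (Ioi 0)] (fun x : ℝ => x ^ (-b)) := by
  refine IsBigO.of_bound 1 ?_
  filter_upwards [mem_nhdsWithin_of_mem_nhds (Iio_mem_nhds (zero_lt_one))] with x hx
  have : frIoi x = 0 := by
    unfold frIoi; rw [indicator_of_notMem]; simp; exact le_of_lt hx
  rw [this]; simp

lemma frIoi_diff {s : ℂ} (hs : 0 < s.re) : DifferentiableAt ℂ (fun s => mellin frIoi (-s)) s := by
  have := mellin_differentiableAt_of_isBigO_rpow (a := 0) (b := (-s).re - 1) (s := -s) frIoi_locInt frIoi_top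
    (by simpa using hs) (frIoi_bot _) (by linarith)
  exact this.comp s (by fun_prop)

lemma frIoi_mellin (s : ℂ) : mellin frIoi (-s) = ∫ t in Ioi (1:ℝ), ((Int.fract t : ℝ) : ℂ) * (t:ℂ) ^ (-(s+1)) := by
  unfold mellin
  have : ∀ t : ℝ, (t:ℂ) ^ (-s-1) • frIoi t =
      (Ioi (1:ℝ)).indicator (fun t : ℝ => ((Int.fract t : ℝ) : ℂ) * (t:ℂ) ^ (-(s+1))) t := by
    intro t
    unfold frIoi
    by_cases h : t ∈ Ioi (1:ℝ)
    · rw [indicator_of_mem h, indicator_of_mem h, smul_eq_mul, mul_comm, neg_add']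
    · rw [indicator_of_notMem h, indicator_of_notMem h, smul_zero]
  simp_rw [this]
  rw [setIntegral_indicator measurableSet_Ioi]
  congr 2
  ext x; simp

lemma frIoi_mellin_norm {s : ℂ} (hs : 0 < s.re) : ‖mellin frIoi (-s)‖ ≤ 1 / s.re := by
  rw [frIoi_mellin]
  have h1 : ∫ t in Ioi (1:ℝ), t ^ (-s.re - 1) = 1 / s.re := by
    rw [integral_Ioi_rpow_of_lt (by linarith) zero_lt_one]
    simp
  rw [← h1]
  refine norm_integral_le_of_norm_le (integrableOn_Ioi_rpow_of_lt (by linarith) zero_lt_one) ?_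
  filter_upwards [ae_restrict_mem measurableSet_Ioi] with t ht
  have ht0 : (0:ℝ) < t := lt_trans zero_lt_one ht
  rw [norm_mul, norm_cpow_eq_rpow_re_of_pos ht0, norm_real, Real.norm_eq_abs,
    abs_of_nonneg (Int.fract_nonneg t)]
  have : (-(s+1)).re = -s.re - 1 := by simp; ring
  rw [this]
  have := Real.rpow_nonneg ht0.le (-s.re - 1)
  nlinarith [Int.fract_lt_one t]

lemma zeta1_formula_gt {s : ℂ} (hs : 1 < s.re) :
    riemannZeta₁ s = s - (s - 1) * s * mellin frIoi (-s) := by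
  have hs1 : s ≠ 1 := by rintro rfl; simp at hs
  have hs1' : s - 1 ≠ 0 := sub_ne_zero.mpr hs1
  have e1 : riemannZeta s = s * ∫ t in Ioi (1 : ℝ), (∑ k ∈ Finset.Icc 1 ⌊t⌋₊, (1:ℂ)) * (t:ℂ) ^ (-(s + 1)) := by
    rw [← LSeries_one_eq_riemannZeta hs]
    refine LSeries_eq_mul_integral' (r := 1) 1 zero_le_one hs ?_
    refine IsBigO.of_bound 1 (Eventually.of_forall fun n => ?_)
    simp
  have e2 : ∫ t in Ioi (1 : ℝ), (∑ k ∈ Finset.Icc 1 ⌊t⌋₊, (1:ℂ)) * (t:ℂ) ^ (-(s + 1)) =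
      1 / (s - 1) - mellin frIoi (-s) := by
    have h3 : ∫ t in Ioi (1:ℝ), (t:ℂ) ^ (-s) = 1 / (s-1) := by
      rw [integral_Ioi_cpow_of_lt (by simpa using hs) zero_lt_one]
      rw [ofReal_one, one_cpow, neg_div, ← div_neg]; congr 1; ring
    rw [frIoi_mellin, ← h3, ← integral_sub]
    · refine setIntegral_congr_fun measurableSet_Ioi fun t ht => ?_
      have ht0 : (0:ℝ) < t := lt_trans zero_lt_one ht
      have htc : (t:ℂ) ≠ 0 := by exact_mod_cast ht0.ne'
      simp only [Finset.sum_const, Nat.card_Icc, nsmul_eq_mul, mul_one, Nat.add_sub_cancel]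
      have h4 : ((⌊t⌋₊ : ℕ) : ℂ) = (t:ℂ) - ((Int.fract t : ℝ) : ℂ) := by
        rw [← ofReal_sub, Int.self_sub_fract, ← natCast_floor_eq_intCast_floor ht0.le]; simp
      rw [h4, sub_mul]
      congr 1
      rw [show -s = -(s+1) + 1 by ring, cpow_add _ _ htc, cpow_one, mul_comm]
    · exact integrableOn_Ioi_cpow_of_lt (by simpa using hs) zero_lt_one
    · have := integrableOn_Ioi_rpow_of_lt (a := -s.re - 1) (by linarith) zero_lt_one
      refine Integrable.mono' this ?_ ?_
      · refine AEStronglyMeasurable.mul (measurable_ofReal.comp measurable_fract).aestronglyMeasurable ?_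
        refine ContinuousOn.aestronglyMeasurable ?_ measurableSet_Ioi
        intro t ht
        have ht0 : (0:ℝ) < t := lt_trans zero_lt_one ht
        exact (continuousAt_ofReal_cpow_const _ _ (Or.inr ht0.ne')).continuousWithinAt
      · filter_upwards [ae_restrict_mem measurableSet_Ioi] with t ht
        have ht0 : (0:ℝ) < t := lt_trans zero_lt_one ht
        rw [norm_mul, norm_cpow_eq_rpow_re_of_pos ht0, norm_real, Real.norm_eq_abs,
          abs_of_nonneg (Int.fract_nonneg t)]
        have : (-(s+1)).re = -s.re - 1 := by simp; ring
        rw [this]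
        have := Real.rpow_nonneg ht0.le (-s.re - 1)
        nlinarith [Int.fract_lt_one t]
  have e3 := riemannZeta_eq_inv_sub_mul hs1
  have e4 : riemannZeta₁ s = (s - 1) * riemannZeta s := by rw [e3]; field_simp
  rw [e4, e1, e2]; field_simp

lemma zeta1_formula {s : ℂ} (hs : 0 < s.re) :
    riemannZeta₁ s = s - (s - 1) * s * mellin frIoi (-s) := by
  have hopen : IsOpen {s : ℂ | 0 < s.re} := isOpen_lt continuous_const continuous_re
  have hconv : Convex ℝ {s : ℂ | 0 < s.re} := convex_halfSpace_re_gt 0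
  have h1 : AnalyticOnNhd ℂ riemannZeta₁ {s : ℂ | 0 < s.re} := fun z _ =>
    differentiable_riemannZeta₁.analyticAt z
  have h2 : AnalyticOnNhd ℂ (fun s => s - (s - 1) * s * mellin frIoi (-s)) {s : ℂ | 0 < s.re} := by
    refine DifferentiableOn.analyticOnNhd (fun z hz => ?_) hopen
    have := frIoi_diff hz
    refine DifferentiableAt.differentiableWithinAt ?_
    fun_prop
  refine h1.eqOn_of_preconnected_of_eventuallyEq h2 hconv.isPreconnected (z₀ := 2) (by simp) ?_ hs
  have : {s : ℂ | 1 < s.re} ∈ nhds (2:ℂ) :=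
    (isOpen_lt continuous_const continuous_re).mem_nhds (by simp)
  filter_upwards [this] with z hz using zeta1_formula_gt hz

lemma zeta1_bound {s : ℂ} (hs : 1/2 ≤ s.re) (hs' : s.re ≤ 3) :
    ‖riemannZeta₁ s‖ ≤ 4 * (|s.im| + 3) ^ 2 := by
  rw [zeta1_formula (by linarith)]
  have h0 : ‖mellin frIoi (-s)‖ ≤ 2 := (frIoi_mellin_norm (by linarith)).trans (by
    rw [div_le_iff₀ (by linarith)]; linarith)
  have h1 : ‖s‖ ≤ |s.im| + 3 := by
    refine (norm_le_abs_re_add_abs_im s).trans ?_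
    rw [abs_of_nonneg (by linarith)]; linarith
  have h2 : ‖s - 1‖ ≤ |s.im| + 3 := by
    refine (norm_le_abs_re_add_abs_im _).trans ?_
    have : |(s-1).re| ≤ 3 := by rw [abs_le]; simp; constructor <;> linarith
    simp at this ⊢; linarith
  refine (norm_sub_le _ _).trans ?_
  rw [norm_mul, norm_mul]
  have : ‖s - 1‖ * ‖s‖ * ‖mellin frIoi (-s)‖ ≤ (|s.im| + 3) * (|s.im| + 3) * 2 := by gcongr
  nlinarith [abs_nonneg s.im]
end PC


section PD
open Complex Metric Set MeasureTheory Filter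

lemma tsum_rpow_le {σ : ℝ} (h1 : 1 < σ) (h2 : σ ≤ 2) : ∑' n : ℕ, 1 / (n:ℝ) ^ σ ≤ 3 / (σ - 1) := by
  have e : ((∑' n : ℕ, 1 / (n:ℝ) ^ σ : ℝ) : ℂ) = riemannZeta σ := by
    rw [zeta_eq_tsum_one_div_nat_cpow (by simpa using h1), ofReal_tsum]
    refine tsum_congr fun n => ?_
    rw [ofReal_div, ofReal_cpow (by positivity)]; simp
  have e2 : ∑' n : ℕ, 1 / (n:ℝ) ^ σ = ‖riemannZeta σ‖ := by
    rw [← e, norm_real, Real.norm_of_nonneg]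
    exact tsum_nonneg fun n => by positivity
  have hs1 : (σ:ℂ) ≠ 1 := by exact_mod_cast h1.ne'
  have h3 : ‖riemannZeta₁ σ‖ ≤ 3 := by
    rw [zeta1_formula (by simp; linarith)]
    have hm := frIoi_mellin_norm (s := (σ:ℂ)) (by simp; linarith)
    rw [ofReal_re] at hm
    refine (norm_sub_le _ _).trans ?_
    rw [norm_mul, norm_mul, norm_real, Real.norm_of_nonneg (by linarith)]
    have : ‖(σ:ℂ) - 1‖ = σ - 1 := by
      rw [← ofReal_one, ← ofReal_sub, norm_real, Real.norm_of_nonneg (by linarith)]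
    rw [this]
    have : (σ - 1) * σ * ‖mellin frIoi (-(σ:ℂ))‖ ≤ (σ - 1) * σ * (1 / σ) := by
      refine mul_le_mul_of_nonneg_left hm (by nlinarith)
    have h4 : (σ - 1) * σ * (1 / σ) = σ - 1 := by field_simp
    linarith
  rw [e2, riemannZeta_eq_inv_sub_mul hs1, norm_mul, norm_inv]
  have : ‖(σ:ℂ) - 1‖ = σ - 1 := by
    rw [← ofReal_one, ← ofReal_sub, norm_real, Real.norm_of_nonneg (by linarith)]
  rw [this, div_eq_inv_mul]
  exact mul_le_mul_of_nonneg_left h3 (by simp; linarith)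

lemma zeta_inv_bound {s : ℂ} (h1 : 1 < s.re) (h2 : s.re ≤ 2) : ‖(riemannZeta s)⁻¹‖ ≤ 3 / (s.re - 1) := by
  have e := ArithmeticFunction.LSeries_zeta_mul_Lseries_moebius h1
  rw [ArithmeticFunction.LSeries_zeta_eq_riemannZeta h1] at e
  rw [← eq_inv_of_mul_eq_one_right e]
  refine le_trans ?_ (tsum_rpow_le h1 h2)
  have hs : Summable fun n : ℕ => 1 / (n:ℝ) ^ s.re := Real.summable_one_div_nat_rpow.mpr h1
  have hle : ∀ n : ℕ, ‖LSeries.term (fun n => ((ArithmeticFunction.moebius n : ℤ) : ℂ)) s n‖ ≤ 1 / (n:ℝ) ^ s.re := by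
    intro n
    rw [LSeries.norm_term_eq]
    split_ifs with h
    · positivity
    · gcongr
      have := ArithmeticFunction.abs_moebius_le_one (n := n)
      rw [norm_intCast]; exact_mod_cast this
  exact tsum_of_norm_bounded hs.hasSum hle

lemma zeta1_ne_zero {s : ℂ} (h : 1 ≤ s.re) : riemannZeta₁ s ≠ 0 := by
  by_cases hs : s = 1
  · rw [hs, riemannZeta₁_one]; exact one_ne_zero
  · have := riemannZeta_ne_zero_of_one_le_re h
    rw [riemannZeta_eq_inv_sub_mul hs] at this
    exact right_ne_zero_of_mul this

lemma zeta1_lower {s : ℂ} (h1 : 1 < s.re) (h2 : s.re ≤ 2) : (s.re - 1)^2 / 3 ≤ ‖riemannZeta₁ s‖ := by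
  have hs1 : s ≠ 1 := by rintro rfl; simp at h1
  have h3 := zeta_inv_bound h1 h2
  rw [riemannZeta_eq_inv_sub_mul hs1] at h3
  have hz := norm_pos_iff.mpr (zeta1_ne_zero h1.le)
  rw [mul_inv, inv_inv, norm_mul, norm_inv, ← div_eq_mul_inv, div_le_div_iff₀ hz (by linarith)] at h3
  have h4 : s.re - 1 ≤ ‖s - 1‖ := by
    have := re_le_norm (s - 1); simpa using this
  nlinarith
end PD


section PE
open Complex Metric Set MeasureTheory Filter

lemma three_four_one {σ : ℝ} (t : ℝ) (h1 : 1 < σ) :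
    0 ≤ 3 * (-deriv riemannZeta σ / riemannZeta σ).re
      + 4 * (-deriv riemannZeta (σ + t * I) / riemannZeta (σ + t * I)).re
      + (-deriv riemannZeta (σ + (2 * t : ℝ) * I) / riemannZeta (σ + (2 * t : ℝ) * I)).re := by
  have a0 : 1 < (σ : ℂ).re := by simpa using h1
  have a1 : 1 < (σ + t * I : ℂ).re := by simpa using h1
  have a2 : 1 < (σ + (2 * t : ℝ) * I : ℂ).re := by simpa using h1
  have S0 := (ArithmeticFunction.LSeriesSummable_vonMangoldt a0).hasSum
  have S1 := (ArithmeticFunction.LSeriesSummable_vonMangoldt a1).hasSum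
  have S2 := (ArithmeticFunction.LSeriesSummable_vonMangoldt a2).hasSum
  change HasSum _ (LSeries _ _) at S0
  change HasSum _ (LSeries _ _) at S1
  change HasSum _ (LSeries _ _) at S2
  rw [ArithmeticFunction.LSeries_vonMangoldt_eq_deriv_riemannZeta_div a0] at S0
  rw [ArithmeticFunction.LSeries_vonMangoldt_eq_deriv_riemannZeta_div a1] at S1
  rw [ArithmeticFunction.LSeries_vonMangoldt_eq_deriv_riemannZeta_div a2] at S2
  have H := ((hasSum_re S0).mul_left 3).add ((hasSum_re S1).mul_left 4) |>.add (hasSum_re S2)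
  refine H.nonneg fun n => ?_
  rcases eq_or_ne n 0 with rfl | hn
  · simp
  have hn0 : (0:ℝ) < n := by exact_mod_cast Nat.pos_of_ne_zero hn
  have hnc : (n:ℂ) ≠ 0 := by exact_mod_cast hn
  rw [LSeries.term_of_ne_zero hn, LSeries.term_of_ne_zero hn, LSeries.term_of_ne_zero hn]
  set w : ℂ := (n:ℂ) ^ (-(t * I)) with hw
  set A : ℝ := ArithmeticFunction.vonMangoldt n / (n:ℝ) ^ σ with hA
  have hA0 : 0 ≤ A := div_nonneg ArithmeticFunction.vonMangoldt_nonneg (by positivity)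
  have hAc : (A:ℂ) = (ArithmeticFunction.vonMangoldt n : ℂ) / (n:ℂ) ^ (σ:ℂ) := by
    rw [hA, ofReal_div, ofReal_cpow hn0.le]; simp
  have e1 : (ArithmeticFunction.vonMangoldt n : ℂ) / (n:ℂ) ^ (σ + t * I : ℂ) = A * w := by
    rw [hAc, hw, cpow_add _ _ hnc, cpow_neg]; field_simp
  have e2 : (ArithmeticFunction.vonMangoldt n : ℂ) / (n:ℂ) ^ (σ + (2 * t : ℝ) * I : ℂ) = A * (w * w) := by
    have : (σ + (2 * t : ℝ) * I : ℂ) = σ + t * I + t * I := by push_cast; ring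
    rw [hAc, hw, this, cpow_add _ _ hnc, cpow_add _ _ hnc, cpow_neg]; field_simp
  rw [e1, e2, ← hAc]
  have hw1 : ‖w‖ = 1 := by
    rw [hw, ← ofReal_natCast, norm_cpow_eq_rpow_re_of_pos hn0]; simp
  have hw2 : w.re * w.re + w.im * w.im = 1 := by
    have := Complex.normSq_apply w; rw [Complex.normSq_eq_norm_sq, hw1] at this; linarith
  simp only [mul_re, ofReal_re, ofReal_im, zero_mul, sub_zero]
  have : 3 * A + 4 * (A * w.re) + A * (w.re * w.re - w.im * w.im) = 2 * A * (1 + w.re)^2 := by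
    linear_combination (-A) * hw2
  rw [this]; positivity

lemma logderiv_zeta {s : ℂ} (h1 : 1 < s.re) :
    (-deriv riemannZeta s / riemannZeta s) = 1 / (s - 1) - deriv riemannZeta₁ s / riemannZeta₁ s := by
  have hs1 : s ≠ 1 := by rintro rfl; simp at h1
  have hs1' : s - 1 ≠ 0 := sub_ne_zero.mpr hs1
  have hz := zeta1_ne_zero h1.le
  have e : deriv riemannZeta s = -(s-1)⁻¹^2 * riemannZeta₁ s + (s-1)⁻¹ * deriv riemannZeta₁ s := by
    have h : HasDerivAt (fun z => (z - 1)⁻¹ * riemannZeta₁ z)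
       ((-1 / (s-1)^2) * riemannZeta₁ s + (s-1)⁻¹ * deriv riemannZeta₁ s) s := by
      refine HasDerivAt.mul ?_ (differentiable_riemannZeta₁ s).hasDerivAt
      exact ((hasDerivAt_id s).sub_const 1).inv hs1'
    have h2 : riemannZeta =ᶠ[nhds s] (fun z => (z - 1)⁻¹ * riemannZeta₁ z) := by
      filter_upwards [isOpen_ne.mem_nhds hs1] with z hz using riemannZeta_eq_inv_sub_mul hz
    rw [h2.deriv_eq, h.deriv]; field_simp
  rw [e, riemannZeta_eq_inv_sub_mul hs1]; field_simp; ring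

lemma landau_zeta {σ t : ℝ} (h1 : 1 < σ) (h2 : σ ≤ 3/2) :
    -(8 * Real.log (18 * (|t|+3)^2/(σ-1)^2)) ≤ (deriv riemannZeta₁ (σ + t * I) / riemannZeta₁ (σ + t * I)).re ∧
    ∀ β : ℝ, β < σ → σ - 1/2 < β → riemannZeta₁ (β + t * I) = 0 →
      1/(σ-β) - 2 - 8 * Real.log (18 * (|t|+3)^2/(σ-1)^2) ≤
        (deriv riemannZeta₁ (σ + t * I) / riemannZeta₁ (σ + t * I)).re := by
  set s0 : ℂ := σ + t * I with hs0
  have hre : s0.re = σ := by simp [hs0]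
  have him : s0.im = t := by simp [hs0]
  set τ := |t| + 3 with hτ
  have hτ3 : 3 ≤ τ := by have := abs_nonneg t; linarith
  have hσ : 0 < σ - 1 := by linarith
  have hσ2 : 0 < (σ - 1)^2 := by positivity
  have hbig : 1 < 18 * τ^2/(σ-1)^2 := by
    rw [lt_div_iff₀ hσ2]; nlinarith
  have hM := Real.log_pos hbig
  have hexp : Real.exp (Real.log (18 * τ^2/(σ-1)^2)) = 18 * τ^2/(σ-1)^2 := Real.exp_log (by linarith)
  set M := Real.log (18 * τ^2/(σ-1)^2) with hMdef
  have hZ0 : (σ-1)^2/3 ≤ ‖riemannZeta₁ s0‖ := by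
    have := zeta1_lower (s := s0) (by rw [hre]; exact h1) (by rw [hre]; linarith)
    rwa [hre] at this
  have hf : Differentiable ℂ (fun z => riemannZeta₁ (s0 + z)) :=
    differentiable_riemannZeta₁.comp (by fun_prop)
  have L := landau hf (R := 1/2) (M := M) (by norm_num) hM
    (by rw [add_zero]; exact zeta1_ne_zero (by rw [hre]; linarith))
    (by
      intro z hz
      rw [mem_closedBall_zero_iff] at hz
      have r1 := (abs_re_le_norm z).trans hz
      have r2 := (abs_im_le_norm z).trans hz
      rw [abs_le] at r1
      have b := zeta1_bound (s := s0 + z) (by rw [add_re, hre]; linarith) (by rw [add_re, hre]; linarith)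
      refine b.trans ?_
      rw [add_zero, hexp, add_im, him]
      have : |t + z.im| ≤ |t| + 1/2 := (abs_add_le _ _).trans (by linarith)
      have h5 : |t + z.im| + 3 ≤ τ * (7/6) := by rw [hτ]; linarith
      have h6 : (|t + z.im| + 3)^2 ≤ (τ * (7/6))^2 := by gcongr
      have h7 : 18 * τ^2/(σ-1)^2 * ((σ-1)^2/3) ≤ 18 * τ^2/(σ-1)^2 * ‖riemannZeta₁ s0‖ := by gcongr
      have h8 : 18 * τ^2/(σ-1)^2 * ((σ-1)^2/3) = 6 * τ^2 := by field_simp; norm_num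
      nlinarith)
    (by
      intro z hz h0
      by_contra hc
      exact zeta1_ne_zero (s := s0 + z) (by rw [add_re, hre]; linarith) h0)
  have hd : deriv (fun z => riemannZeta₁ (s0 + z)) 0 = deriv riemannZeta₁ s0 := by
    rw [deriv_comp_const_add]; simp
  simp only [hd, add_zero] at L
  constructor
  · have := L.1; linarith
  · intro β hb1 hb2 h0
    have := L.2 (σ - β) (by linarith) (by linarith) (by
      rw [← h0]; congr 1; rw [hs0]; push_cast; ring)
    norm_num at this
    rw [one_div]
    linarith

lemma zero_free_large {β t : ℝ} (ht : 1 ≤ |t|) (h0 : riemannZeta₁ (β + t * I) = 0) :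
    β ≤ 1 - 1 / (28672 * Real.log (|t|+3)) := by
  set τ := |t| + 3 with hτ
  have hτ4 : 4 ≤ τ := by linarith
  have hL1 : 1 ≤ Real.log τ := by
    rw [Real.le_log_iff_exp_le (by linarith)]
    have := Real.exp_one_lt_d9; linarith
  set L := Real.log τ with hL
  set k : ℝ := 4096 * L with hk
  have hk0 : 4096 ≤ k := by linarith
  set σ : ℝ := 1 + 1 / k with hσ
  have hkinv : 1 / k ≤ 1/4096 := by
    apply one_div_le_one_div_of_le <;> linarith
  have hkpos : 0 < 1/k := by positivity
  have hσ1 : 1 < σ := by linarith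
  have hσ2 : σ ≤ 3/2 := by linarith
  have hβ : β < 1 := by
    by_contra hc
    exact zeta1_ne_zero (s := (β + t * I : ℂ)) (by simp; linarith) h0
  have hfin : (28672:ℝ) * L = 7 * k := by rw [hk]; ring
  rw [hfin]
  have hk7 : 1 / (7 * k) = (1/k)/7 := by field_simp
  rw [hk7]
  by_cases hb2 : σ - 1/2 < β
  swap
  · linarith
  have d0 := (landau_zeta (t := 0) hσ1 hσ2).1
  have d1 := (landau_zeta (t := t) hσ1 hσ2).2 β (by linarith) hb2 h0
  have d2 := (landau_zeta (t := 2*t) hσ1 hσ2).1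
  have tfo := three_four_one t hσ1
  rw [logderiv_zeta (by simpa using hσ1), logderiv_zeta (by simpa using hσ1), logderiv_zeta (by simpa using hσ1)] at tfo
  simp only [sub_re] at tfo
  have hσk : σ - 1 = 1 / k := by rw [hσ]; ring
  have p0 : (1 / ((σ:ℂ) - 1)).re = k := by
    rw [← ofReal_one, ← ofReal_sub, hσk]
    rw [← ofReal_div, ofReal_re]; simp
  have pim : ∀ u : ℝ, 1 ≤ |u| → (1 / ((σ:ℂ) + u * I - 1)).re ≤ 1/2 := by
    intro u hu
    have hu2 : 1 ≤ u * u := by nlinarith [abs_mul_abs_self u]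
    rw [one_div, inv_re, normSq_apply]
    have : ((σ:ℂ) + u * I - 1).re = σ - 1 := by simp
    rw [this]
    have : ((σ:ℂ) + u * I - 1).im = u := by simp
    rw [this, div_le_iff₀ (by nlinarith)]
    nlinarith
  have p1 := pim t ht
  have p2 := pim (2*t) (by rw [abs_mul, abs_two]; linarith)
  -- M bounds
  set M := Real.log (72 * τ^2 / (σ-1)^2) with hM
  have hσ0 : 0 < σ - 1 := by linarith
  have mono : ∀ u : ℝ, |u| + 3 ≤ 2 * τ → Real.log (18 * (|u|+3)^2/(σ-1)^2) ≤ M := by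
    intro u hu
    have hu0 := abs_nonneg u
    rw [hM]
    apply Real.log_le_log
    · positivity
    · have : (|u|+3)^2 ≤ (2*τ)^2 := by gcongr
      apply div_le_div_of_nonneg_right _ (by positivity)
      nlinarith
  have m0 := mono 0 (by simp; linarith)
  have m1 := mono t (by linarith)
  have m2 := mono (2*t) (by rw [abs_mul, abs_two]; linarith)
  have hMb : M ≤ 26 * L := by
    have : M = Real.log 72 + 2 * L + 2 * (Real.log 4096 + Real.log L) := by
      rw [hM, hσk, show 72 * τ^2 / (1/k)^2 = 72 * τ^2 * k^2 by field_simp, Real.log_mul (by positivity) (by positivity),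
        Real.log_mul (by positivity) (by positivity), Real.log_pow, Real.log_pow, hk, Real.log_mul (by norm_num) (by positivity)]
      push_cast; ring
    rw [this]
    have l2 := Real.log_two_lt_d9
    have l1 : Real.log 4096 = 12 * Real.log 2 := by
      rw [show (4096:ℝ) = 2^12 by norm_num, Real.log_pow]; norm_num
    have l3 : Real.log 72 ≤ Real.log 128 := Real.log_le_log (by norm_num) (by norm_num)
    have l4 : Real.log 128 = 7 * Real.log 2 := by
      rw [show (128:ℝ) = 2^7 by norm_num, Real.log_pow]; norm_num
    have l5 : Real.log L ≤ L - 1 := Real.log_le_sub_one_of_pos (by linarith)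
    linarith
  have key : 4 / (σ - β) ≤ 3.5 * k := by
    have e : 4 / (σ - β) = 4 * (1 / (σ - β)) := by ring
    rw [e]
    rw [p0] at tfo
    simp only [ofReal_zero, zero_mul, add_zero] at d0
    linarith
  have hsb : 0 < σ - β := by linarith
  rw [div_le_iff₀ hsb] at key
  have : 8/7 * (1/k) ≤ σ - β := by
    have hk' : 0 < k := by linarith
    rw [mul_one_div, div_le_iff₀ hk']; linarith
  linarith

lemma zero_free : ∃ c : ℝ, 0 < c ∧ c ≤ 1/4 ∧ ∀ s : ℂ, 1 - c / Real.log (|s.im|+3) ≤ s.re → riemannZeta₁ s ≠ 0 := by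
  have hK : IsCompact ((Icc (1:ℝ) 1) ×ℂ (Icc (-1:ℝ) 1)) := isCompact_Icc.reProdIm isCompact_Icc
  have hU : IsOpen {s : ℂ | riemannZeta₁ s ≠ 0} :=
    isOpen_ne.preimage differentiable_riemannZeta₁.continuous
  obtain ⟨δ, hδ, hδs⟩ := hK.exists_thickening_subset_open hU (by
    intro s hs
    rw [mem_reProdIm] at hs
    exact zeta1_ne_zero hs.1.1)
  refine ⟨min (1/28673) (δ/2), by positivity, (min_le_left _ _).trans (by norm_num), ?_⟩
  intro s hs h0
  have hL1 : 1 ≤ Real.log (|s.im|+3) := by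
    have := abs_nonneg s.im
    rw [Real.le_log_iff_exp_le (by linarith)]
    have := Real.exp_one_lt_d9; linarith
  by_cases ht : 1 ≤ |s.im|
  · have := zero_free_large (β := s.re) (t := s.im) ht (by rwa [re_add_im])
    have h3 : min (1/28673) (δ/2) / Real.log (|s.im|+3) ≤ (1/28673) / Real.log (|s.im|+3) := by
      gcongr; exact min_le_left _ _
    have h4 : (1/28673) / Real.log (|s.im|+3) < 1 / (28672 * Real.log (|s.im|+3)) := by
      rw [div_div]; apply one_div_lt_one_div_of_lt <;> linarith
    linarith
  · push Not at ht
    have hlt : s.re < 1 := by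
      by_contra hc
      exact zeta1_ne_zero (by linarith) h0
    refine hδs ?_ h0
    rw [mem_thickening_iff]
    refine ⟨1 + s.im * I, ?_, ?_⟩
    · rw [mem_reProdIm]; simp; exact ⟨(abs_lt.mp ht).1.le, (abs_lt.mp ht).2.le⟩
    · have e : s - (1 + s.im * I) = ((s.re - 1 : ℝ) : ℂ) := by
        apply Complex.ext <;> simp
      rw [dist_eq_norm, e, norm_real, Real.norm_eq_abs, abs_of_neg (by linarith)]
      have : min (1/28673) (δ/2) / Real.log (|s.im|+3) ≤ δ/2 :=
        (div_le_self (by positivity) hL1).trans (min_le_right _ _)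
      linarith
end PE


section PF
open Complex Metric Set MeasureTheory Filter

lemma zeta1_strip : ∃ a : ℝ, 0 < a ∧ a ≤ 1/4 ∧ ∃ K : ℝ, 0 < K ∧ ∀ W : ℝ, ∀ s : ℂ, |s.im| + 4 ≤ W →
    1 - a / Real.log W ≤ s.re → s.re ≤ 1 + a / Real.log W →
    riemannZeta₁ s ≠ 0 ∧ ‖(riemannZeta₁ s)⁻¹‖ ≤ K * W ^ (3/4 : ℝ) := by
  obtain ⟨c, hc0, hc4, hc⟩ := zero_free
  refine ⟨c/64, by positivity, by linarith, 36 * (512 / c)^4, by positivity, ?_⟩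
  intro W s hW hs1 hs2
  have habs := abs_nonneg s.im
  have hW4 : 4 ≤ W := by linarith
  have hL1 : 1 ≤ Real.log W := by
    rw [Real.le_log_iff_exp_le (by linarith)]
    have := Real.exp_one_lt_d9; linarith
  set L := Real.log W with hL
  set η := c/64/L with hη
  have hη0 : 0 < η := by positivity
  have hη1 : η ≤ 1/256 := by
    rw [hη]; refine (div_le_self (by positivity) hL1).trans (by linarith)
  have hcL : c / L = 64 * η := by rw [hη]; ring
  set s0 : ℂ := (1 + η : ℝ) + s.im * I with hs0
  have hre : s0.re = 1 + η := by simp [hs0]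
  have him : s0.im = s.im := by simp [hs0]
  have hnz : ∀ z : ℂ, |z.im| + 3 ≤ W → 1 - 64 * η ≤ z.re → riemannZeta₁ z ≠ 0 := by
    intro z hz hz2
    apply hc
    refine le_trans ?_ hz2
    rw [← hcL]
    have hz0 := abs_nonneg z.im
    have : 0 < Real.log (|z.im| + 3) := Real.log_pos (by linarith)
    have h2 : Real.log (|z.im| + 3) ≤ L := Real.log_le_log (by linarith) hz
    have : c / L ≤ c / Real.log (|z.im| + 3) := by gcongr
    linarith
  refine ⟨hnz s (by linarith) (by linarith), ?_⟩
  have hbigpos : 1 < 12 * W^2/η^2 := by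
    rw [lt_div_iff₀ (by positivity)]; nlinarith
  have hM := Real.log_pos hbigpos
  have hexp : Real.exp (Real.log (12 * W^2/η^2)) = 12 * W^2/η^2 := Real.exp_log (by linarith)
  set M := Real.log (12 * W^2/η^2) with hMdef
  have hZ0 : η^2/3 ≤ ‖riemannZeta₁ s0‖ := by
    have := zeta1_lower (s := s0) (by rw [hre]; linarith) (by rw [hre]; linarith)
    rw [hre] at this; simpa using this
  have hsz : ‖s - s0‖ ≤ 2 * η := by
    have e : s - s0 = ((s.re - (1 + η) : ℝ) : ℂ) := by
      apply Complex.ext <;> simp [hs0]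
    rw [e, norm_real, Real.norm_eq_abs, abs_le]; constructor <;> linarith
  have B := bc_lower (F := fun z => riemannZeta₁ (s0 + z)) (R := 65 * η) (M := M) (by positivity) hM
    ((differentiable_riemannZeta₁.comp (by fun_prop)).differentiableOn)
    (by
      intro z hz
      rw [mem_ball_zero_iff] at hz
      have r1 := (abs_re_le_norm z).trans hz.le
      have r2 := (abs_im_le_norm z).trans hz.le
      rw [abs_le] at r1
      apply hnz
      · rw [add_im, him]
        have := abs_add_le s.im z.im
        linarith
      · rw [add_re, hre]; linarith)
    (by
      intro z hz
      rw [mem_ball_zero_iff] at hz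
      have r1 := (abs_re_le_norm z).trans hz.le
      have r2 := (abs_im_le_norm z).trans hz.le
      rw [abs_le] at r1
      have b := zeta1_bound (s := s0 + z) (by rw [add_re, hre]; linarith) (by rw [add_re, hre]; linarith)
      refine b.trans ?_
      rw [add_zero, hexp, add_im, him]
      have := abs_add_le s.im z.im
      have h5 : |s.im + z.im| + 3 ≤ W := by linarith
      have h6 : (|s.im + z.im| + 3)^2 ≤ W^2 := by gcongr
      have h7 : 12 * W^2/η^2 * (η^2/3) ≤ 12 * W^2/η^2 * ‖riemannZeta₁ s0‖ := by gcongr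
      have h8 : 12 * W^2/η^2 * (η^2/3) = 4 * W^2 := by field_simp; norm_num
      nlinarith)
    (s - s0) (by rw [mem_ball_zero_iff]; linarith)
  simp only [add_zero, add_sub_cancel] at B
  have hq : 2 * M * ‖s - s0‖ / (65 * η - ‖s - s0‖) ≤ M / 8 := by
    rw [div_le_iff₀ (by linarith)]
    nlinarith
  have hlow : η^2/3 * Real.exp (-(M/8)) ≤ ‖riemannZeta₁ s‖ := by
    refine le_trans ?_ B
    gcongr
  have hpos : 0 < η^2/3 * Real.exp (-(M/8)) := by positivity
  rw [norm_inv]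
  refine (inv_anti₀ hpos hlow).trans ?_
  have e1 : Real.exp (M/8) = (12 * W^2/η^2) ^ (1/8 : ℝ) := by
    rw [← hexp, ← Real.exp_mul]; congr 1; ring
  have e2 : (12 * W^2/η^2) ^ (1/8 : ℝ) ≤ (12/η^2) * W ^ (1/4:ℝ) := by
    rw [show 12 * W^2/η^2 = (12/η^2) * W^2 by ring, Real.mul_rpow (by positivity) (by positivity)]
    have h1 : 1 ≤ 12/η^2 := by rw [le_div_iff₀ (by positivity)]; nlinarith
    have h2 : (12/η^2) ^ (1/8:ℝ) ≤ 12/η^2 := by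
      calc _ ≤ (12/η^2) ^ (1:ℝ) := Real.rpow_le_rpow_of_exponent_le h1 (by norm_num)
        _ = _ := Real.rpow_one _
    have h3 : (W^2) ^ (1/8:ℝ) = W ^ (1/4:ℝ) := by
      rw [← Real.rpow_natCast, ← Real.rpow_mul (by linarith)]; norm_num
    rw [h3]; gcongr
  have e3 : (η^2/3 * Real.exp (-(M/8)))⁻¹ = 3/η^2 * Real.exp (M/8) := by
    rw [Real.exp_neg]; field_simp
  rw [e3, e1]
  have e4 : 1 / η ≤ (512/c) * W ^ (1/8:ℝ) := by
    have h1 : L ≤ W ^ (1/8:ℝ) / (1/8) := Real.log_le_rpow_div (by linarith) (by norm_num)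
    have : 1 / η = 64 / c * L := by rw [hη]; field_simp
    rw [this]
    calc 64 / c * L ≤ 64 / c * (W ^ (1/8:ℝ) / (1/8)) := by gcongr
      _ = _ := by ring
  calc 3/η^2 * (12 * W^2/η^2) ^ (1/8 : ℝ) ≤ 3/η^2 * ((12/η^2) * W ^ (1/4:ℝ)) := by gcongr
    _ = 36 * (1/η)^4 * W ^ (1/4:ℝ) := by field_simp; norm_num
    _ ≤ 36 * ((512/c) * W ^ (1/8:ℝ))^4 * W ^ (1/4:ℝ) := by gcongr
    _ = 36 * (512 / c)^4 * W ^ (3/4 : ℝ) := by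
      have : (W ^ (1/8:ℝ))^4 = W ^ (1/2:ℝ) := by
        rw [← Real.rpow_natCast, ← Real.rpow_mul (by linarith)]; norm_num
      rw [mul_pow, this, mul_assoc, mul_assoc, mul_assoc, ← Real.rpow_add (by linarith)]
      norm_num
end PF


section PG
open Complex Metric Set MeasureTheory Filter

noncomputable def hat (t : ℝ) : ℂ := ((max 0 (1 - t) : ℝ) : ℂ)

lemma hat_mellin {s : ℂ} (hs : 0 < s.re) : HasMellin hat s (1 / (s * (s+1))) := by
  have h1 := hasMellin_one_Ioc hs
  have h2 := hasMellin_cpow_Ioc 1 (s := s) (by simp; linarith)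
  have h3 := hasMellin_sub h1.1 h2.1
  rw [h1.2, h2.2] at h3
  have hs0 : s ≠ 0 := by rintro rfl; simp at hs
  have hs1 : s + 1 ≠ 0 := by
    intro h; have := congrArg re h; simp at this; linarith
  have e : 1 / s - 1 / (s+1) = 1 / (s * (s+1)) := by field_simp; ring
  rw [e] at h3
  have hcong : EqOn (fun t : ℝ => (t:ℂ)^(s-1) • (indicator (Ioc 0 1) (fun _ => (1:ℂ)) t - indicator (Ioc (0:ℝ) 1) (fun t : ℝ => (t:ℂ) ^ (1:ℂ)) t))
      (fun t : ℝ => (t:ℂ)^(s-1) • hat t) (Ioi 0) := by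
    intro t ht
    simp only [hat]
    congr 1
    by_cases h : t ≤ 1
    · have hm : t ∈ Ioc (0:ℝ) 1 := ⟨ht, h⟩
      rw [indicator_of_mem hm, indicator_of_mem hm, max_eq_right (by linarith)]; simp
    · have hm : t ∉ Ioc (0:ℝ) 1 := fun hm => h hm.2
      rw [indicator_of_notMem hm, indicator_of_notMem hm, max_eq_left (by linarith)]; simp
  refine ⟨?_, ?_⟩
  · exact IntegrableOn.congr_fun h3.1 hcong measurableSet_Ioi
  · rw [← h3.2]
    exact (setIntegral_congr_fun measurableSet_Ioi hcong).symm

lemma den_norm {σ : ℝ} (hσ : 1/2 ≤ σ) (y : ℝ) : (1 + y^2)/4 ≤ ‖((σ:ℂ) + y * I) * (σ + y * I + 1)‖ := by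
  have h1 : (1 + y^2)/4 ≤ ‖(σ:ℂ) + y * I‖ ^ 2 := by
    rw [← normSq_eq_norm_sq, normSq_add_mul_I]; nlinarith [sq_nonneg y]
  have h2 : ‖(σ:ℂ) + y * I‖ ≤ ‖(σ:ℂ) + y * I + 1‖ := by
    have : (σ:ℂ) + y * I + 1 = ((σ + 1 : ℝ) : ℂ) + y * I := by push_cast; ring
    rw [this, norm_add_mul_I, norm_add_mul_I]
    apply Real.sqrt_le_sqrt; nlinarith
  rw [norm_mul]
  nlinarith [norm_nonneg ((σ:ℂ) + y * I)]

lemma den_inv_norm {σ : ℝ} (hσ : 1/2 ≤ σ) (y : ℝ) :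
    ‖1 / (((σ:ℂ) + y * I) * (σ + y * I + 1))‖ ≤ 4 * (1 + y^2)⁻¹ := by
  rw [norm_div, norm_one]
  have h := den_norm hσ y
  have h0 : 0 < (1 + y^2)/4 := by positivity
  refine (one_div_le_one_div_of_le h0 h).trans ?_
  apply le_of_eq; field_simp

lemma den_ne {σ : ℝ} (hσ : 1/2 ≤ σ) (y : ℝ) : ((σ:ℂ) + y * I) * (σ + y * I + 1) ≠ 0 := by
  rw [← norm_pos_iff]
  have := den_norm hσ y
  have h0 : 0 < (1 + y^2)/4 := by positivity
  linarith

lemma den_cont {σ : ℝ} (hσ : 1/2 ≤ σ) :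
    Continuous (fun y : ℝ => 1 / (((σ:ℂ) + y * I) * (σ + y * I + 1))) := by
  refine Continuous.div (by fun_prop) (by fun_prop) (den_ne hσ)

lemma den_integrable {σ : ℝ} (hσ : 1/2 ≤ σ) :
    Integrable (fun y : ℝ => 1 / (((σ:ℂ) + y * I) * (σ + y * I + 1))) :=
  (integrable_inv_one_add_sq.const_mul 4).mono' (den_cont hσ).aestronglyMeasurable
    (Eventually.of_forall (den_inv_norm hσ))

lemma hat_inv {σ : ℝ} (hσ : 1/2 ≤ σ) {u : ℝ} (hu : 0 < u) :
    (1 / (2 * Real.pi)) • ∫ y : ℝ, (u : ℂ) ^ (-(σ + y * I : ℂ)) * (1 / (((σ:ℂ) + y * I) * (σ + y * I + 1)))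
      = hat u := by
  have hmel : ∀ y : ℝ, mellin hat (σ + y * I) = 1 / (((σ:ℂ) + y * I) * (σ + y * I + 1)) := fun y =>
    (hat_mellin (s := σ + y * I) (by simp; linarith)).2
  have := mellinInv_mellin_eq σ hat hu (hat_mellin (by simp; linarith)).1
    (by
      unfold VerticalIntegrable
      simp_rw [hmel]
      exact den_integrable hσ)
    (by unfold hat; fun_prop)
  rw [← this, mellinInv]
  simp_rw [hmel, smul_eq_mul]

noncomputable def Sx (x : ℝ) : ℝ := ∑ n ∈ Finset.Icc 1 ⌊x⌋₊, (ArithmeticFunction.moebius n : ℝ) * (1 - n / x)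

noncomputable def Gx (x : ℝ) (s : ℂ) : ℂ := (x:ℂ) ^ s * (1 / (s * (s+1))) * (riemannZeta s)⁻¹

lemma perron {σ : ℝ} (hσ : 1 < σ) {x : ℝ} (hx : 0 < x) :
    (Sx x : ℂ) = (1 / (2 * Real.pi)) • ∫ y : ℝ, Gx x (σ + y * I) := by
  have hxc : (x:ℂ) ≠ 0 := by exact_mod_cast hx.ne'
  have hσ' : 1/2 ≤ σ := by linarith
  set F : ℕ → ℝ → ℂ := fun n y => LSeries.term (fun n => ((ArithmeticFunction.moebius n : ℤ) : ℂ)) (σ + y * I) n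
    * ((x:ℂ) ^ (σ + y * I : ℂ) * (1 / (((σ:ℂ) + y * I) * (σ + y * I + 1)))) with hF
  have hFcont : ∀ n, Continuous (F n) := by
    intro n
    rcases eq_or_ne n 0 with rfl | hn
    · simp only [hF, LSeries.term_zero, zero_mul]; exact continuous_const
    have hnc : (n:ℂ) ≠ 0 := by exact_mod_cast hn
    simp only [hF, LSeries.term_of_ne_zero hn]
    refine Continuous.mul (Continuous.div (by fun_prop) ?_ ?_) (Continuous.mul ?_ (den_cont hσ'))
    · exact Continuous.const_cpow (by fun_prop) (Or.inl hnc)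
    · intro y; simp [cpow_eq_zero_iff, hnc]
    · exact Continuous.const_cpow (by fun_prop) (Or.inl hxc)
  have hFle : ∀ n y, ‖F n y‖ ≤ (1 / (n:ℝ) ^ σ) * (x ^ σ * (4 * (1 + y^2)⁻¹)) := by
    intro n y
    simp only [hF]
    rw [norm_mul, norm_mul, norm_cpow_eq_rpow_re_of_pos hx, LSeries.norm_term_eq]
    have hre : (σ + y * I : ℂ).re = σ := by simp
    rw [hre]
    gcongr
    · split_ifs with h
      · positivity
      · gcongr
        have := ArithmeticFunction.abs_moebius_le_one (n := n)
        rw [norm_intCast]; exact_mod_cast this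
    · exact den_inv_norm hσ' y
  have hbi : ∀ n : ℕ, Integrable (fun y : ℝ => (1 / (n:ℝ) ^ σ) * (x ^ σ * (4 * (1 + y^2)⁻¹))) := fun n =>
    ((integrable_inv_one_add_sq.const_mul 4).const_mul _).const_mul _
  have hFint : ∀ n, Integrable (F n) := fun n =>
    (hbi n).mono' (hFcont n).aestronglyMeasurable (Eventually.of_forall (hFle n))
  have hs : Summable fun n : ℕ => 1 / (n:ℝ) ^ σ := Real.summable_one_div_nat_rpow.mpr hσ
  have hsum : Summable fun n => ∫ y, ‖F n y‖ := by
    refine Summable.of_nonneg_of_le (fun n => integral_nonneg fun y => norm_nonneg _)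
      (fun n => integral_mono (hFint n).norm (hbi n) (hFle n)) ?_
    simp_rw [integral_const_mul]
    exact hs.mul_right _
  have H := hasSum_integral_of_summable_integral_norm hFint hsum
  have hG : ∀ y : ℝ, ∑' n, F n y = Gx x (σ + y * I) := by
    intro y
    have h1 : 1 < (σ + y * I : ℂ).re := by simpa using hσ
    simp only [hF]
    rw [tsum_mul_right]
    have e := ArithmeticFunction.LSeries_zeta_mul_Lseries_moebius h1
    rw [ArithmeticFunction.LSeries_zeta_eq_riemannZeta h1] at e
    have e2 := eq_inv_of_mul_eq_one_right e
    unfold LSeries at e2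
    rw [e2, Gx]; ring
  simp_rw [hG] at H
  have hI : ∀ n : ℕ, (1 / (2 * Real.pi)) • ∫ y, F n y = (ArithmeticFunction.moebius n : ℂ) * hat (n / x) := by
    intro n
    rcases eq_or_ne n 0 with rfl | hn
    · simp [hF]
    have hn0 : (0:ℝ) < n := by exact_mod_cast Nat.pos_of_ne_zero hn
    rw [← hat_inv hσ' (u := n / x) (by positivity), mul_smul_comm, ← integral_const_mul]
    congr 2
    ext y
    simp only [hF, LSeries.term_of_ne_zero hn]
    have e1 : ((n / x : ℝ) : ℂ) ^ (-(σ + y * I : ℂ)) = (x:ℂ) ^ (σ + y * I : ℂ) / (n:ℂ) ^ (σ + y * I : ℂ) := by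
      rw [div_eq_mul_inv, ofReal_mul, mul_cpow_ofReal_nonneg hn0.le (by positivity), cpow_neg, ofReal_inv, inv_cpow, cpow_neg, inv_inv, ofReal_natCast]
      · field_simp
      · rw [arg_ofReal_of_nonneg hx.le]; exact Real.pi_pos.ne
    rw [e1]; ring
  have H2 := H.const_smul (1 / (2 * Real.pi))
  simp_rw [hI] at H2
  rw [← H2.tsum_eq, tsum_eq_sum (s := Finset.Icc 1 ⌊x⌋₊)]
  · rw [Sx, ofReal_sum]
    refine Finset.sum_congr rfl fun n hn => ?_
    have : (n:ℝ) ≤ x := (Nat.le_floor_iff hx.le).mp (Finset.mem_Icc.mp hn).2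
    rw [hat, max_eq_right]
    · push_cast; rfl
    · rw [sub_nonneg, div_le_one hx]; exact this
  · intro n hn
    rcases eq_or_ne n 0 with rfl | hn0
    · simp
    have : x < n := by
      rw [← Nat.floor_lt hx.le]
      by_contra hc
      exact hn (Finset.mem_Icc.mpr ⟨Nat.pos_of_ne_zero hn0, by omega⟩)
    rw [hat, max_eq_left]
    · simp
    · rw [sub_nonpos, one_le_div hx]; exact this.le
end PG


section PH
open Complex Metric Set MeasureTheory Filter

noncomputable def Hx (x : ℝ) (s : ℂ) : ℂ := (x:ℂ) ^ s * (1 / (s * (s+1))) * ((s - 1) * (riemannZeta₁ s)⁻¹)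

lemma Gx_eq_Hx {x : ℝ} {s : ℂ} (hs : s ≠ 1) : Gx x s = Hx x s := by
  unfold Gx Hx
  rw [riemannZeta_eq_inv_sub_mul hs, mul_inv, inv_inv]

lemma tail_bound {f : ℝ → ℂ} {A T : ℝ} (hT : 0 < T) (hf : Integrable f)
    (hb : ∀ y, ‖f y‖ ≤ A * (1 + y^2)⁻¹) :
    ‖∫ y, f y‖ ≤ ‖∫ y in (-T)..T, f y‖ + 2 * A / T := by
  have hA : 0 ≤ A := by have := (norm_nonneg _).trans (hb 0); simpa using this
  have e1 := intervalIntegral.integral_Iic_add_Ioi (b := T) (f := f) hf.integrableOn hf.integrableOn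
  have e2 := intervalIntegral.integral_Iic_sub_Iic (a := -T) (b := T) (f := f) hf.integrableOn hf.integrableOn
  have hat : Real.arctan T⁻¹ ≤ T⁻¹ := by
    have h0 : 0 ≤ Real.arctan T⁻¹ := Real.arctan_nonneg.mpr (by positivity)
    have := Real.le_tan h0 (Real.arctan_lt_pi_div_two _)
    rwa [Real.tan_arctan] at this
  rw [Real.arctan_inv_of_pos hT] at hat
  have h1 : ‖∫ y in Ioi T, f y‖ ≤ A * T⁻¹ := by
    refine (norm_integral_le_of_norm_le (integrable_inv_one_add_sq.const_mul A).integrableOn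
      (Eventually.of_forall hb)).trans ?_
    rw [integral_const_mul, integral_Ioi_inv_one_add_sq]
    gcongr
  have h2 : ‖∫ y in Iic (-T), f y‖ ≤ A * T⁻¹ := by
    refine (norm_integral_le_of_norm_le (integrable_inv_one_add_sq.const_mul A).integrableOn
      (Eventually.of_forall hb)).trans ?_
    rw [integral_const_mul, integral_Iic_inv_one_add_sq, Real.arctan_neg]
    gcongr; linarith
  have e3 : ∫ y, f y = (∫ y in (-T)..T, f y) + (∫ y in Iic (-T), f y) + ∫ y in Ioi T, f y := by
    rw [← e1, ← e2]; ring
  rw [e3]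
  refine (norm_add_le _ _).trans ?_
  have := norm_add_le (∫ y in (-T)..T, f y) (∫ y in Iic (-T), f y)
  have : 2 * A / T = A * T⁻¹ + A * T⁻¹ := by ring
  linarith

lemma Gx_bound {x σ : ℝ} (hx : 0 < x) (h1 : 1 < σ) (h2 : σ ≤ 2) (y : ℝ) :
    ‖Gx x (σ + y * I)‖ ≤ (x ^ σ * 12 / (σ - 1)) * (1 + y^2)⁻¹ := by
  unfold Gx
  have hre : (σ + y * I : ℂ).re = σ := by simp
  have hz := zeta_inv_bound (s := σ + y * I) (by rw [hre]; exact h1) (by rw [hre]; exact h2)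
  rw [hre] at hz
  rw [norm_mul, norm_mul, norm_cpow_eq_rpow_re_of_pos hx, hre]
  have hd := den_inv_norm (σ := σ) (by linarith) y
  calc _ ≤ x ^ σ * (4 * (1 + y^2)⁻¹) * (3 / (σ - 1)) := by gcongr
    _ = _ := by ring

lemma Gx_int {x σ : ℝ} (hx : 0 < x) (h1 : 1 < σ) (h2 : σ ≤ 2) :
    Integrable (fun y : ℝ => Gx x (σ + y * I)) := by
  refine (integrable_inv_one_add_sq.const_mul _).mono' ?_ (Eventually.of_forall (Gx_bound hx h1 h2))
  refine Continuous.aestronglyMeasurable ?_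
  have hxc : (x:ℂ) ≠ 0 := by exact_mod_cast hx.ne'
  have hne : ∀ y : ℝ, (σ + y * I : ℂ) ≠ 1 := by
    intro y h; have := congrArg re h; simp at this; linarith
  have : (fun y : ℝ => Gx x (σ + y * I)) = fun y : ℝ => Hx x (σ + y * I) := by
    ext y; exact Gx_eq_Hx (hne y)
  rw [this]
  unfold Hx
  refine Continuous.mul (Continuous.mul ?_ (den_cont (by linarith))) (Continuous.mul (by fun_prop) (Continuous.inv₀ ?_ ?_))
  · exact Continuous.const_cpow (by fun_prop) (Or.inl hxc)
  · exact differentiable_riemannZeta₁.continuous.comp (by fun_prop)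
  · intro y; exact zeta1_ne_zero (by simp; linarith)

lemma Hx_bound {x B D : ℝ} {s : ℂ} (hx : 0 < x) (hs : 1/2 ≤ s.re) (hB : ‖(riemannZeta₁ s)⁻¹‖ ≤ B)
    (hD : 0 < D) (hDs : D ≤ ‖s‖) : ‖Hx x s‖ ≤ x ^ s.re * (1 / D) * B := by
  unfold Hx
  have hle : ‖s - 1‖ ≤ ‖s + 1‖ := by
    rw [← sq_le_sq₀ (norm_nonneg _) (norm_nonneg _), ← normSq_eq_norm_sq, ← normSq_eq_norm_sq, normSq_apply, normSq_apply]
    simp; nlinarith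
  have h1 : 0 < ‖s + 1‖ := by
    rw [norm_pos_iff]; intro h; have := congrArg re h; simp at this; linarith
  have h2 : 0 < ‖s‖ := by linarith
  rw [norm_mul, norm_mul, norm_mul, norm_cpow_eq_rpow_re_of_pos hx, norm_div, norm_mul, norm_one]
  have hB0 : 0 ≤ B := (norm_nonneg _).trans hB
  calc x ^ s.re * (1 / (‖s‖ * ‖s + 1‖)) * (‖s - 1‖ * ‖(riemannZeta₁ s)⁻¹‖)
      ≤ x ^ s.re * (1 / (‖s‖ * ‖s + 1‖)) * (‖s + 1‖ * B) := by gcongr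
    _ = x ^ s.re * (1 / ‖s‖) * B := by field_simp
    _ ≤ _ := by gcongr

lemma Hx_diff {x : ℝ} {s : ℂ} (hx : 0 < x) (hs : 1/2 ≤ s.re) (h0 : riemannZeta₁ s ≠ 0) :
    DifferentiableAt ℂ (Hx x) s := by
  unfold Hx
  have hxc : (x:ℂ) ≠ 0 := by exact_mod_cast hx.ne'
  have h1 : s * (s + 1) ≠ 0 := by
    refine mul_ne_zero ?_ ?_ <;> intro h
    · rw [h] at hs; simp at hs; linarith
    · have := congrArg re h; simp at this; linarith
  have hz := differentiable_riemannZeta₁ s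
  refine DifferentiableAt.mul (DifferentiableAt.mul ?_ ?_) (DifferentiableAt.mul (by fun_prop) (hz.inv h0))
  · exact differentiableAt_id.const_cpow (Or.inl hxc)
  · exact DifferentiableAt.div (by fun_prop) (by fun_prop) h1

lemma contour : ∃ a : ℝ, 0 < a ∧ ∃ K : ℝ, 0 < K ∧ ∀ x W : ℝ, 8 ≤ W → 1 ≤ Real.log x → 1 < x →
    1 / Real.log x ≤ a / Real.log W →
    |Sx x| ≤ K * x * (W ^ (-(1/4) : ℝ) + Real.log x / W + W ^ 2 * x ^ (-(a / Real.log W))) := by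
  obtain ⟨a, ha0, ha4, K, hK0, hstrip⟩ := zeta1_strip
  refine ⟨a, ha0, 100 * K + 1000, by positivity, ?_⟩
  intro x W hW hl1 hx1 hlW
  have hx : 0 < x := by linarith
  set l := Real.log x with hl
  have hL1 : 1 ≤ Real.log W := by
    rw [Real.le_log_iff_exp_le (by linarith)]
    have := Real.exp_one_lt_d9; linarith
  set q := a / Real.log W with hq
  have hq0 : 0 < q := by positivity
  have hq4 : q ≤ 1/4 := (div_le_self ha0.le hL1).trans ha4
  set σ1 := 1 + 1 / l with hσ1
  set σ0 := 1 - q with hσ0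
  set T := W - 4 with hT
  have hl0 : 0 < 1 / l := by positivity
  have hxσ : x ^ σ1 = Real.exp 1 * x := by
    rw [hσ1, Real.rpow_add hx, Real.rpow_one, Real.rpow_def_of_pos hx, ← hl, mul_one_div, div_self (by linarith), mul_comm]
  have he : Real.exp 1 ≤ 3 := by have := Real.exp_one_lt_d9; linarith
  have hxσ3 : x ^ σ1 ≤ 3 * x := by rw [hxσ]; gcongr
  have hP := perron (σ := σ1) (by linarith) hx
  have hnorm : |Sx x| ≤ ‖∫ y : ℝ, Gx x (σ1 + y * I)‖ := by
    have h1 : |Sx x| = ‖(Sx x : ℂ)‖ := by rw [norm_real, Real.norm_eq_abs]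
    rw [h1, hP, norm_smul]
    have : ‖1 / (2 * Real.pi)‖ ≤ 1 := by
      rw [Real.norm_of_nonneg (by positivity), div_le_one (by positivity)]
      have := Real.pi_gt_three; linarith
    exact mul_le_of_le_one_left (norm_nonneg _) this
  have htail := tail_bound (T := T) (by linarith) (Gx_int hx (σ := σ1) (by linarith) (by linarith))
    (Gx_bound hx (by linarith) (by linarith))
  have hGH : ∫ y in (-T)..T, Gx x (σ1 + y * I) = ∫ y in (-T)..T, Hx x (σ1 + y * I) := by
    congr 1; ext y
    apply Gx_eq_Hx
    intro h; have := congrArg re h; simp at this; linarith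
  rw [hGH] at htail
  set B := K * W ^ (3/4:ℝ) with hB
  have hst : ∀ s : ℂ, |s.im| ≤ T → σ0 ≤ s.re → s.re ≤ σ1 →
      riemannZeta₁ s ≠ 0 ∧ ‖(riemannZeta₁ s)⁻¹‖ ≤ B := by
    intro s h1 h2 h3
    exact hstrip W s (by linarith) h2 (by linarith)
  have hrect := integral_boundary_rect_eq_zero_of_differentiableOn (Hx x) (σ0 + (-T : ℝ) * I) (σ1 + T * I) (by
    intro s hs
    rw [mem_reProdIm] at hs
    simp only [add_re, ofReal_re, mul_re, I_re, mul_zero, ofReal_im, I_im, mul_one, sub_self, add_zero,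
      add_im, mul_im, zero_add] at hs
    rw [uIcc_of_le (by linarith), uIcc_of_le (by linarith)] at hs
    refine (Hx_diff hx (by linarith [hs.1.1]) (hst s ?_ hs.1.1 hs.1.2).1).differentiableWithinAt
    rw [abs_le]; exact hs.2)
  simp only [add_re, ofReal_re, mul_re, I_re, mul_zero, ofReal_im, I_im, mul_one, sub_self, add_zero,
      add_im, mul_im, zero_add, smul_eq_mul] at hrect
  have hB0 : 0 ≤ B := by positivity
  have hT0 : 0 < T := by linarith
  -- horizontal
  have hhor : ∀ v : ℝ, |v| = T → ‖∫ u : ℝ in σ0..σ1, Hx x (u + v * I)‖ ≤ 3 * x * (1 / T) * B * 2 := by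
    intro v hv
    refine (intervalIntegral.norm_integral_le_of_norm_le_const (C := 3 * x * (1 / T) * B) ?_).trans ?_
    · intro u hu
      rw [uIoc_of_le (by linarith)] at hu
      have hre : (u + v * I : ℂ).re = u := by simp
      have him : (u + v * I : ℂ).im = v := by simp
      have := Hx_bound (x := x) (s := u + v * I) (B := B) (D := T) hx (by rw [hre]; linarith [hu.1])
        (hst _ (by rw [him, hv]) (by rw [hre]; exact hu.1.le) (by rw [hre]; exact hu.2)).2 hT0
        (by have := abs_im_le_norm (u + v * I : ℂ); rw [him, hv] at this; exact this)
      refine this.trans ?_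
      rw [hre]
      have hxu : x ^ u ≤ 3 * x := (Real.rpow_le_rpow_of_exponent_le hx1.le hu.2).trans hxσ3
      gcongr
    · have : |σ1 - σ0| ≤ 2 := by rw [abs_le]; constructor <;> linarith
      gcongr
  have hleft : ‖∫ y : ℝ in (-T)..T, Hx x (σ0 + y * I)‖ ≤ x ^ σ0 * 2 * B * (2 * T) := by
    refine (intervalIntegral.norm_integral_le_of_norm_le_const (C := x ^ σ0 * 2 * B) ?_).trans ?_
    · intro y hy
      rw [uIoc_of_le (by linarith)] at hy
      have hre : (σ0 + y * I : ℂ).re = σ0 := by simp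
      have him : (σ0 + y * I : ℂ).im = y := by simp
      have := Hx_bound (x := x) (s := σ0 + y * I) (B := B) (D := 1/2) hx (by rw [hre]; linarith)
        (hst _ (by rw [him, abs_le]; exact ⟨hy.1.le, hy.2⟩) (by rw [hre]) (by rw [hre]; linarith)).2 (by norm_num)
        (by have := re_le_norm (σ0 + y * I : ℂ); rw [hre] at this; linarith)
      rw [hre] at this
      norm_num at this
      exact this
    · have : |T - -T| = 2 * T := by rw [abs_of_nonneg] <;> linarith
      rw [this]
  have hmid : ‖∫ y : ℝ in (-T)..T, Hx x (σ1 + y * I)‖ ≤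
      2 * (3 * x * (1 / T) * B * 2) + x ^ σ0 * 2 * B * (2 * T) := by
    have h1 := hhor (-T) (by rw [abs_neg, abs_of_pos hT0])
    have h2 := hhor T (abs_of_pos hT0)
    have e : I * (∫ y : ℝ in (-T)..T, Hx x (σ1 + y * I)) = I * (∫ y : ℝ in (-T)..T, Hx x (σ0 + y * I))
        + (∫ u : ℝ in σ0..σ1, Hx x (u + T * I)) - (∫ u : ℝ in σ0..σ1, Hx x (u + (-T:ℝ) * I)) := by
      linear_combination hrect
    have e2 : ‖∫ y : ℝ in (-T)..T, Hx x (σ1 + y * I)‖ = ‖I * (∫ y : ℝ in (-T)..T, Hx x (σ1 + y * I))‖ := by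
      rw [norm_mul, norm_I, one_mul]
    rw [e2, e]
    refine (norm_sub_le _ _).trans ?_
    have h3 := norm_add_le (I * (∫ y : ℝ in (-T)..T, Hx x (σ0 + y * I))) (∫ u : ℝ in σ0..σ1, Hx x (u + T * I))
    rw [norm_mul, norm_I, one_mul] at h3
    linarith
  have hTW : 1 / T ≤ 2 / W := by rw [div_le_div_iff₀ hT0 (by linarith)]; linarith
  have hTW2 : T ≤ W := by linarith
  have hW0 : 0 < W := by linarith
  have hσl : σ1 - 1 = 1 / l := by rw [hσ1]; ring
  have t1 : 2 * (x ^ σ1 * 12 / (σ1 - 1)) / T ≤ 144 * x * (l / W) := by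
    rw [hσl]
    calc 2 * (x ^ σ1 * 12 / (1 / l)) / T = 24 * l * x ^ σ1 * (1 / T) := by field_simp; ring
      _ ≤ 24 * l * (3 * x) * (2 / W) := by gcongr
      _ = _ := by ring
  have t2 : 2 * (3 * x * (1 / T) * B * 2) ≤ 24 * K * x * W ^ (-(1/4):ℝ) := by
    have hWe : W ^ (-(1/4):ℝ) = W ^ (3/4:ℝ) / W := by
      rw [show (-(1/4):ℝ) = 3/4 - 1 by norm_num, Real.rpow_sub hW0, Real.rpow_one]
    calc 2 * (3 * x * (1 / T) * B * 2) ≤ 2 * (3 * x * (2 / W) * B * 2) := by gcongr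
      _ = _ := by rw [hB, hWe]; ring
  have t3 : x ^ σ0 * 2 * B * (2 * T) ≤ 4 * K * x * (W^2 * x ^ (-q)) := by
    have e : x ^ σ0 = x * x ^ (-q) := by
      rw [hσ0, sub_eq_add_neg, Real.rpow_add hx, Real.rpow_one]
    have h34 : W ^ (3/4:ℝ) ≤ W := by
      calc _ ≤ W ^ (1:ℝ) := Real.rpow_le_rpow_of_exponent_le (by linarith) (by norm_num)
        _ = W := Real.rpow_one W
    rw [e, hB]
    calc x * x ^ (-q) * 2 * (K * W ^ (3/4:ℝ)) * (2 * T) ≤ x * x ^ (-q) * 2 * (K * W) * (2 * W) := by gcongr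
      _ = _ := by ring
  have p1 : 0 ≤ x * W ^ (-(1/4):ℝ) := by positivity
  have p2 : 0 ≤ x * (l / W) := by positivity
  have p3 : 0 ≤ x * (W^2 * x ^ (-q)) := by positivity
  have : |Sx x| ≤ 144 * (x * (l / W)) + 24 * (K * (x * W ^ (-(1/4):ℝ))) + 4 * (K * (x * (W^2 * x ^ (-q)))) := by linarith
  refine this.trans ?_
  have q1 := mul_nonneg hK0.le p1
  have q2 := mul_nonneg hK0.le p2
  have q3 := mul_nonneg hK0.le p3
  have expand : (100 * K + 1000) * x * (W ^ (-(1/4):ℝ) + l / W + W^2 * x ^ (-q)) =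
    100 * (K * (x * W ^ (-(1/4):ℝ))) + 100 * (K * (x * (l / W))) + 100 * (K * (x * (W^2 * x ^ (-q))))
    + 1000 * (x * W ^ (-(1/4):ℝ)) + 1000 * (x * (l / W)) + 1000 * (x * (W^2 * x ^ (-q))) := by ring
  rw [expand]; linarith
end PH


section PI
open Set Filter

lemma abs_mu_le (n : ℕ) : |(ArithmeticFunction.moebius n : ℝ)| ≤ 1 := by
  have := ArithmeticFunction.abs_moebius_le_one (n := n)
  exact_mod_cast this

lemma Sx_triv {x : ℝ} (hx : 1 ≤ x) : |Sx x| ≤ x := by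
  unfold Sx
  refine (Finset.abs_sum_le_sum_abs _ _).trans ?_
  have : ∀ n ∈ Finset.Icc 1 ⌊x⌋₊, |(ArithmeticFunction.moebius n : ℝ) * (1 - n / x)| ≤ 1 := by
    intro n hn
    have hnx : (n:ℝ) ≤ x := (Nat.le_floor_iff (by linarith)).mp (Finset.mem_Icc.mp hn).2
    rw [abs_mul]
    have h2 : |1 - n / x| ≤ 1 := by
      have : n / x ≤ 1 := by rw [div_le_one (by linarith)]; exact hnx
      have : 0 ≤ n / x := by positivity
      rw [abs_le]; constructor <;> linarith
    exact mul_le_one₀ (abs_mu_le n) (abs_nonneg _) h2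
  refine (Finset.sum_le_card_nsmul _ _ _ this).trans ?_
  simp
  exact Nat.floor_le (by linarith)

lemma Sx_bound : ∃ c : ℝ, 0 < c ∧ ∃ C : ℝ, 0 < C ∧ ∀ x : ℝ, 1 ≤ x →
    |Sx x| ≤ C * x * Real.exp (-c * Real.sqrt (Real.log x)) := by
  obtain ⟨a, ha, K, hK, hcon⟩ := contour
  set κ := Real.sqrt a / 2 with hκ
  have hκ0 : 0 < κ := by positivity
  have hκa : a = 4 * κ^2 := by rw [hκ, div_pow, Real.sq_sqrt ha.le]; ring
  set X0 := 1 + 3 / κ with hX0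
  have hX00 : 0 < X0 := by positivity
  refine ⟨κ/4, by positivity, K * (2 + (8/(3*κ))^2) + Real.exp (κ/4 * X0), by positivity, ?_⟩
  intro x hx
  set r := Real.sqrt (Real.log x) with hr
  have hl0 : 0 ≤ Real.log x := Real.log_nonneg hx
  have hr0 : 0 ≤ r := Real.sqrt_nonneg _
  have hrl : Real.log x = r^2 := (Real.sq_sqrt hl0).symm
  set E := Real.exp (-(κ/4) * r) with hE
  have hE0 : 0 < E := Real.exp_pos _
  have hx0 : 0 < x := by linarith
  by_cases hbig : X0 ≤ r
  · have hr1 : 1 ≤ r := by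
      have : 0 < 3/κ := by positivity
      linarith
    have hκr : 3 ≤ κ * r := by
      have : 3/κ ≤ r := by linarith
      rwa [div_le_iff₀ hκ0, mul_comm] at this
    have hx1 : 1 < x := by
      by_contra hc
      have : x = 1 := by linarith
      rw [this, Real.log_one] at hrl
      nlinarith
    have hW8 : 8 ≤ Real.exp (κ * r) := by
      have h1 : Real.log 8 ≤ κ * r := by
        have : Real.log 8 = 3 * Real.log 2 := by
          rw [show (8:ℝ) = 2^3 by norm_num, Real.log_pow]; norm_num
        have := Real.log_two_lt_d9
        linarith
      calc (8:ℝ) = Real.exp (Real.log 8) := (Real.exp_log (by norm_num)).symm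
        _ ≤ _ := Real.exp_le_exp.mpr h1
    have h := hcon x (Real.exp (κ * r)) hW8 (by rw [hrl]; nlinarith) hx1 (by
      rw [Real.log_exp, hrl, hκa, div_le_div_iff₀ (by positivity) (by positivity)]
      have : 1 * (κ * r) ≤ (4 * (κ * r)) * (κ * r) := by nlinarith
      nlinarith)
    have e1 : Real.exp (κ * r) ^ (-(1/4) : ℝ) = E := by
      rw [← Real.exp_mul, hE]; congr 1; ring
    have e2 : Real.log x / Real.exp (κ * r) ≤ (8/(3*κ))^2 * E := by
      rw [hrl, div_le_iff₀ (Real.exp_pos _), hE, mul_assoc, ← Real.exp_add]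
      have h1 : 3*κ/8 * r ≤ Real.exp (3*κ/8 * r) := by
        have := Real.add_one_le_exp (3*κ/8 * r); linarith
      have h2 : -(κ/4) * r + κ * r = 3*κ/8 * r + 3*κ/8 * r := by ring
      rw [h2, Real.exp_add]
      calc r^2 = (8/(3*κ))^2 * ((3*κ/8 * r) * (3*κ/8 * r)) := by field_simp
        _ ≤ _ := by gcongr
    have e3 : Real.exp (κ * r) ^ 2 * x ^ (-(a / Real.log (Real.exp (κ * r)))) ≤ E := by
      rw [Real.log_exp, Real.rpow_def_of_pos hx0, hrl, ← Real.exp_nat_mul, ← Real.exp_add, hE, Real.exp_le_exp]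
      have : r^2 * -(a / (κ * r)) = -4 * κ * r := by rw [hκa]; field_simp
      rw [this]; push_cast; nlinarith
    rw [e1] at h
    refine h.trans ?_
    calc K * x * (E + Real.log x / Real.exp (κ * r) + Real.exp (κ * r) ^ 2 * x ^ (-(a / Real.log (Real.exp (κ * r)))))
        ≤ K * x * (E + (8/(3*κ))^2 * E + E) := by gcongr
      _ = K * (2 + (8/(3*κ))^2) * x * E := by ring
      _ ≤ _ := by
        gcongr
        have := Real.exp_pos (κ/4 * X0); linarith
  · push Not at hbig
    refine (Sx_triv hx).trans ?_
    have h1 : 1 ≤ Real.exp (κ/4 * X0) * E := by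
      rw [hE, ← Real.exp_add]
      apply Real.one_le_exp
      nlinarith
    have h2 : 0 ≤ K * (2 + (8/(3*κ))^2) * x * E := by positivity
    nlinarith

noncomputable def Mx (x : ℝ) : ℝ := ∑ n ∈ Finset.Icc 1 ⌊x⌋₊, (ArithmeticFunction.moebius n : ℝ)

lemma Mx_diff {x h : ℝ} (hx : 1 ≤ x) (hh : 0 < h) :
    h * |Mx x| ≤ |(x+h) * Sx (x+h)| + |x * Sx x| + h * (h + 1) := by
  have hA : ∀ z : ℝ, 0 < z → z * Sx z = ∑ n ∈ Finset.Icc 1 ⌊z⌋₊, (ArithmeticFunction.moebius n : ℝ) * (z - n) := by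
    intro z hz
    unfold Sx
    rw [Finset.mul_sum]
    refine Finset.sum_congr rfl fun n _ => ?_
    field_simp
  rw [hA x (by linarith), hA (x+h) (by linarith)]
  have hfl : ⌊x⌋₊ ≤ ⌊x+h⌋₊ := Nat.floor_le_floor (by linarith)
  have hsplit : ∑ n ∈ Finset.Icc 1 ⌊x+h⌋₊, (ArithmeticFunction.moebius n : ℝ) * (x + h - n)
      = ∑ n ∈ Finset.Icc 1 ⌊x⌋₊, (ArithmeticFunction.moebius n : ℝ) * (x + h - n)
       + ∑ n ∈ Finset.Ioc ⌊x⌋₊ ⌊x+h⌋₊, (ArithmeticFunction.moebius n : ℝ) * (x + h - n) := by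
    rw [← Finset.sum_union]
    · congr 1
      ext n; simp only [Finset.mem_Icc, Finset.mem_union, Finset.mem_Ioc]; omega
    · rw [Finset.disjoint_left]; intro n; simp only [Finset.mem_Icc, Finset.mem_Ioc]; omega
  have hrem : |∑ n ∈ Finset.Ioc ⌊x⌋₊ ⌊x+h⌋₊, (ArithmeticFunction.moebius n : ℝ) * (x + h - n)| ≤ h * (h+1) := by
    refine (Finset.abs_sum_le_sum_abs _ _).trans ?_
    have : ∀ n ∈ Finset.Ioc ⌊x⌋₊ ⌊x+h⌋₊, |(ArithmeticFunction.moebius n : ℝ) * (x + h - n)| ≤ h := by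
      intro n hn
      rw [Finset.mem_Ioc] at hn
      have h1 : (n:ℝ) ≤ x + h := (Nat.le_floor_iff (by linarith)).mp hn.2
      have h2 : x < n := (Nat.floor_lt (by linarith)).mp hn.1
      rw [abs_mul, abs_of_nonneg (by linarith : 0 ≤ x + h - n)]
      have := abs_mu_le n
      nlinarith [abs_nonneg (ArithmeticFunction.moebius n : ℝ)]
    refine (Finset.sum_le_card_nsmul _ _ _ this).trans ?_
    rw [Nat.card_Ioc, nsmul_eq_mul, Nat.cast_sub hfl, mul_comm]
    have h1 : (⌊x+h⌋₊ : ℝ) ≤ x + h := Nat.floor_le (by linarith)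
    have h2 : x < ⌊x⌋₊ + 1 := Nat.lt_floor_add_one x
    gcongr; linarith
  have hM : h * Mx x = ∑ n ∈ Finset.Icc 1 ⌊x+h⌋₊, (ArithmeticFunction.moebius n : ℝ) * (x + h - n)
      - ∑ n ∈ Finset.Icc 1 ⌊x⌋₊, (ArithmeticFunction.moebius n : ℝ) * (x - n)
      - ∑ n ∈ Finset.Ioc ⌊x⌋₊ ⌊x+h⌋₊, (ArithmeticFunction.moebius n : ℝ) * (x + h - n) := by
    rw [hsplit, Mx, Finset.mul_sum, add_sub_right_comm, add_sub_cancel_right, ← Finset.sum_sub_distrib]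
    refine Finset.sum_congr rfl fun n _ => ?_
    ring
  have : h * |Mx x| = |h * Mx x| := by rw [abs_mul, abs_of_pos hh]
  rw [this, hM]
  refine (abs_sub _ _).trans ?_
  have := abs_sub (∑ n ∈ Finset.Icc 1 ⌊x+h⌋₊, (ArithmeticFunction.moebius n : ℝ) * (x + h - n)) (∑ n ∈ Finset.Icc 1 ⌊x⌋₊, (ArithmeticFunction.moebius n : ℝ) * (x - n))
  linarith

lemma Mx_bound : ∃ c : ℝ, 0 < c ∧ ∃ C : ℝ, 0 < C ∧ ∀ x : ℝ, 1 ≤ x →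
    |Mx x| ≤ C * x * Real.exp (-c * Real.sqrt (Real.log x)) := by
  obtain ⟨c, hc, C, hC, hS⟩ := Sx_bound
  refine ⟨c/2, by positivity, 5 * C + 1 + Real.exp (c^2/16), by positivity, ?_⟩
  intro x hx
  have hx0 : 0 < x := by linarith
  set r := Real.sqrt (Real.log x) with hr
  have hl0 : 0 ≤ Real.log x := Real.log_nonneg hx
  have hr0 : 0 ≤ r := Real.sqrt_nonneg _
  have hrl : Real.log x = r^2 := (Real.sq_sqrt hl0).symm
  set E := Real.exp (-(c/2) * r) with hE
  have hE0 : 0 < E := Real.exp_pos _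
  have hE1 : E ≤ 1 := by rw [hE, Real.exp_le_one_iff]; nlinarith
  have hEE : Real.exp (-c * r) = E * E := by rw [hE, ← Real.exp_add]; congr 1; ring
  set h := x * E with hh
  have hh0 : 0 < h := by positivity
  have hhx : h ≤ x := by rw [hh]; exact mul_le_of_le_one_right hx0.le hE1
  have hd := Mx_diff hx hh0
  have b1 := hS x hx
  have b2 := hS (x+h) (by linarith)
  rw [hEE] at b1
  have hmono : Real.exp (-c * Real.sqrt (Real.log (x+h))) ≤ E * E := by
    rw [← hEE, Real.exp_le_exp]
    have : r ≤ Real.sqrt (Real.log (x+h)) :=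
      Real.sqrt_le_sqrt (Real.log_le_log hx0 (by linarith))
    nlinarith
  have c1 : |x * Sx x| ≤ C * x^2 * (E * E) := by
    rw [abs_mul, abs_of_pos hx0]
    calc x * |Sx x| ≤ x * (C * x * (E * E)) := by gcongr
      _ = _ := by ring
  have c2 : |(x+h) * Sx (x+h)| ≤ 4 * C * x^2 * (E * E) := by
    rw [abs_mul, abs_of_pos (by linarith)]
    calc (x+h) * |Sx (x+h)| ≤ (2*x) * (C * (2*x) * (E * E)) := by
          gcongr
          · linarith
          · refine b2.trans ?_
            gcongr
            linarith
      _ = _ := by ring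
  have key : |Mx x| ≤ 5 * C * x * E + h + 1 := by
    have : h * |Mx x| ≤ h * (5 * C * x * E + h + 1) := by
      refine hd.trans ?_
      have : h * (5 * C * x * E + h + 1) = 5 * C * x^2 * (E*E) + h * (h+1) := by rw [hh]; ring
      rw [this]; linarith
    exact le_of_mul_le_mul_left this hh0
  have one : 1 ≤ Real.exp (c^2/16) * (x * E) := by
    have : x = Real.exp (r^2) := by rw [← hrl, Real.exp_log hx0]
    rw [this, hE, ← Real.exp_add, ← Real.exp_add]
    apply Real.one_le_exp
    nlinarith [sq_nonneg (r - c/4)]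
  calc |Mx x| ≤ 5 * C * x * E + h + 1 := key
    _ ≤ 5 * C * x * E + x * E + Real.exp (c^2/16) * (x * E) := by linarith
    _ = _ := by ring
end PI


section PJ
open Set Filter

noncomputable def Mp (p : ℕ) (x : ℝ) : ℝ :=
  ∑ n ∈ (Finset.Icc 1 ⌊x⌋₊).filter (fun n => ¬ p ∣ n), (ArithmeticFunction.moebius n : ℝ)

lemma mu_mul_prime {p : ℕ} (hp : p.Prime) (m : ℕ) :
    (ArithmeticFunction.moebius (p * m) : ℝ) = if ¬ p ∣ m then -(ArithmeticFunction.moebius m : ℝ) else 0 := by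
  by_cases h : ¬ p ∣ m
  · rw [if_pos h]
    have hc : Nat.Coprime p m := (Nat.Prime.coprime_iff_not_dvd hp).mpr h
    rw [ArithmeticFunction.isMultiplicative_moebius.map_mul_of_coprime hc, ArithmeticFunction.moebius_apply_prime hp]
    push_cast; ring
  · rw [if_neg h]
    push Not at h
    obtain ⟨k, rfl⟩ := h
    rw [ArithmeticFunction.moebius_eq_zero_of_not_squarefree]
    · simp
    · intro hs
      have h1 := hs p ⟨k, by ring⟩
      exact hp.one_lt.ne' (Nat.isUnit_iff.mp h1)

lemma Mp_rec {p : ℕ} (hp : p.Prime) (x : ℝ) : Mp p x = Mx x + Mp p (x / p) := by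
  have h1 : Mx x = ∑ n ∈ (Finset.Icc 1 ⌊x⌋₊).filter (fun n => p ∣ n), (ArithmeticFunction.moebius n : ℝ) + Mp p x := by
    unfold Mx Mp
    rw [Finset.sum_filter_add_sum_filter_not]
  have hset : (Finset.Icc 1 ⌊x⌋₊).filter (fun n => p ∣ n) = (Finset.Icc 1 (⌊x⌋₊ / p)).image (fun m => p * m) := by
    ext n
    simp only [Finset.mem_filter, Finset.mem_Icc, Finset.mem_image]
    constructor
    · rintro ⟨⟨ha, hb⟩, k, rfl⟩
      refine ⟨k, ⟨Nat.pos_of_ne_zero (by rintro rfl; simp at ha), ?_⟩, rfl⟩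
      rw [Nat.le_div_iff_mul_le hp.pos, mul_comm]; exact hb
    · rintro ⟨k, ⟨ha, hb⟩, rfl⟩
      rw [Nat.le_div_iff_mul_le hp.pos, mul_comm] at hb
      exact ⟨⟨Nat.mul_pos hp.pos ha, hb⟩, dvd_mul_right _ _⟩
  have h2 : ∑ n ∈ (Finset.Icc 1 ⌊x⌋₊).filter (fun n => p ∣ n), (ArithmeticFunction.moebius n : ℝ) = - Mp p (x / p) := by
    rw [hset, Finset.sum_image (by intro a _ b _ h; exact Nat.eq_of_mul_eq_mul_left hp.pos h)]
    simp_rw [mu_mul_prime hp]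
    rw [← Finset.sum_filter, Finset.sum_neg_distrib, Mp, Nat.floor_div_natCast]
  linarith

lemma Mp_bound {c C : ℝ} (hc : 0 < c) (hc2 : c ≤ 1/2) (hC : 0 < C)
    (hM : ∀ x : ℝ, 1 ≤ x → |Mx x| ≤ C * x * Real.exp (-c * Real.sqrt (Real.log x)))
    {p : ℕ} (hp : p.Prime) : ∀ N : ℕ, ∀ x : ℝ, 1 ≤ x → x < 2 ^ N →
    |Mp p x| ≤ 5 * C * x * Real.exp (-c * Real.sqrt (Real.log x)) := by
  intro N
  induction N with
  | zero => intro x h1 h2; simp at h2; linarith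
  | succ N ih =>
    intro x h1 h2
    have hx0 : 0 < x := by linarith
    have hp2 : (2:ℝ) ≤ p := by exact_mod_cast hp.two_le
    have hp0 : (0:ℝ) < p := by linarith
    rw [Mp_rec hp]
    have hMx := hM x h1
    set E := Real.exp (-c * Real.sqrt (Real.log x)) with hE
    have hE0 : 0 < E := Real.exp_pos _
    have hrest : |Mp p (x / p)| ≤ 4 * C * x * E := by
      by_cases hlt : x / p < 1
      · have : Mp p (x / p) = 0 := by
          unfold Mp; rw [Nat.floor_eq_zero.mpr hlt]; simp
        rw [this, abs_zero]; positivity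
      · push Not at hlt
        have hih := ih (x / p) hlt (by
          rw [div_lt_iff₀ hp0]
          rw [pow_succ] at h2
          have : (0:ℝ) < 2^N := by positivity
          nlinarith)
        refine hih.trans ?_
        set u := Real.log p with hu
        have hu0 : 0.6931471803 ≤ u := Real.log_two_gt_d9.le.trans (Real.log_le_log (by norm_num) hp2)
        have hlog : Real.log (x / p) = Real.log x - u := Real.log_div hx0.ne' hp0.ne'
        have hlog0 : 0 ≤ Real.log (x / p) := Real.log_nonneg hlt
        have hsq : Real.sqrt (Real.log x) ≤ Real.sqrt (Real.log (x/p)) + Real.sqrt u := by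
          rw [Real.sqrt_le_left (by positivity)]
          have a1 := Real.sq_sqrt hlog0
          have a2 := Real.sq_sqrt (by linarith : 0 ≤ u)
          have a3 := Real.sqrt_nonneg (Real.log (x/p))
          have a4 := Real.sqrt_nonneg u
          nlinarith
        have hsu : Real.sqrt u ≤ (1 + u)/2 := by
          have a2 := Real.sq_sqrt (by linarith : 0 ≤ u)
          nlinarith [sq_nonneg (Real.sqrt u - 1)]
        have hpe : (p:ℝ) = Real.exp u := (Real.exp_log hp0).symm
        have h08 : Real.exp (-(1/4)) ≤ 4/5 := by
          rw [Real.exp_neg, inv_le_comm₀ (Real.exp_pos _) (by norm_num)]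
          have := Real.add_one_le_exp (1/4 : ℝ)
          linarith
        have hmain : Real.exp (-c * Real.sqrt (Real.log (x/p))) / p ≤ 4/5 * E := by
          calc Real.exp (-c * Real.sqrt (Real.log (x/p))) / p
              = Real.exp (-c * Real.sqrt (Real.log (x/p)) - u) := by rw [Real.exp_sub, ← hpe]
            _ ≤ Real.exp (-(1/4) + -c * Real.sqrt (Real.log x)) := by
              rw [Real.exp_le_exp]
              have s0 := Real.sqrt_nonneg u
              have h5 : c * Real.sqrt (Real.log x) ≤ c * (Real.sqrt (Real.log (x/p)) + Real.sqrt u) := by gcongr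
              have h6 : c * Real.sqrt u ≤ 1/2 * ((1+u)/2) := by
                apply mul_le_mul hc2 hsu s0 (by norm_num)
              linarith
            _ = Real.exp (-(1/4)) * E := by rw [Real.exp_add]
            _ ≤ _ := by gcongr
        calc 5 * C * (x / p) * Real.exp (-c * Real.sqrt (Real.log (x/p)))
            = 5 * C * x * (Real.exp (-c * Real.sqrt (Real.log (x/p))) / p) := by ring
          _ ≤ 5 * C * x * (4/5 * E) := by gcongr
          _ = _ := by ring
    have := abs_add_le (Mx x) (Mp p (x / p))
    linarith
end PJ

open Finset ArithmeticFunction Real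

/-- There are positive constants `c`, `C` such that for every prime `p` and every `x ≥ 2`,
`|Σ_{n ≤ x, p ∤ n} μ(n)| ≤ C x exp(−c √(log x))`. -/
theorem moebius_sum_coprime_bound :
    ∃ c > (0 : ℝ), ∃ C > (0 : ℝ), ∀ p : ℕ, p.Prime → ∀ x : ℝ, 2 ≤ x →
      |∑ n ∈ (Finset.Icc 1 ⌊x⌋₊).filter (fun n => ¬ p ∣ n), (moebius n : ℝ)|
        ≤ C * x * Real.exp (-c * Real.sqrt (Real.log x)) := by
  obtain ⟨c, hc, C, hC, hM⟩ := Mx_bound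
  refine ⟨min c (1/2), by positivity, 5 * C, by positivity, ?_⟩
  intro p hp x hx
  obtain ⟨N, hN⟩ := pow_unbounded_of_one_lt x (one_lt_two : (1:ℝ) < 2)
  refine Mp_bound (by positivity) (min_le_right _ _) hC ?_ hp N x (by linarith) hN
  intro y hy
  refine (hM y hy).trans ?_
  have h1 := min_le_left c (1/2)
  have h2 := Real.sqrt_nonneg (Real.log y)
  gcongr
end

section
/- There exists a constant C > 0 such that for all real x ≥ 2, |Σ_{n ≤ x} μ(n) ω(n)| ≤ C · x / log x, where the sum runs over positive integers n ≤ x. -/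
namespace MO
open Complex Filter Topology

lemma term_bound (n : ℕ) (hn : 1 ≤ n) (s : ℂ) (hs : 0 < s.re) :
    ‖(s - 1) * ((n : ℂ) + 1) ^ (-s) + ((n : ℂ) + 1) ^ (1 - s) - (n : ℂ) ^ (1 - s)‖
      ≤ ‖s - 1‖ * ‖s‖ * (n : ℝ) ^ (-s.re - 1) := by
  have hn0 : (0 : ℝ) < n := by exact_mod_cast hn
  have key : ∀ u ∈ Set.Icc (n : ℝ) (n + 1),
      ‖((n : ℂ) + 1) ^ (-s) - (u : ℂ) ^ (-s)‖ ≤ ‖s‖ * (n : ℝ) ^ (-s.re - 1) := by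
    intro u hu
    have hu0 : 0 < u := lt_of_lt_of_le hn0 hu.1
    have hd : ∀ v ∈ Set.Icc u ((n : ℝ) + 1),
        HasDerivWithinAt (fun v : ℝ => (v : ℂ) ^ (-s)) (-s * (v : ℂ) ^ (-s - 1))
          (Set.Icc u ((n : ℝ) + 1)) v := by
      intro v hv
      have hv0 : 0 < v := lt_of_lt_of_le hu0 hv.1
      exact ((hasDerivAt_id (v : ℂ)).cpow_const (c := -s)
        (Or.inl (by simpa using hv0))).comp_ofReal.hasDerivWithinAt.congr_deriv (by simp)
    have hb : ∀ v ∈ Set.Ico u ((n : ℝ) + 1), ‖-s * (v : ℂ) ^ (-s - 1)‖ ≤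
        ‖s‖ * (n : ℝ) ^ (-s.re - 1) := by
      intro v hv
      have hv0 : 0 < v := lt_of_lt_of_le hu0 hv.1
      rw [norm_mul, norm_neg, norm_cpow_eq_rpow_re_of_pos hv0]
      simp only [sub_re, neg_re, one_re]
      gcongr ‖s‖ * ?_
      exact Real.rpow_le_rpow_of_nonpos hn0 (hu.1.trans hv.1) (by linarith)
    have := norm_image_sub_le_of_norm_deriv_le_segment' hd hb ((n : ℝ) + 1) ⟨hu.2, le_rfl⟩
    push_cast at this
    refine this.trans ?_
    have h1 : (n : ℝ) + 1 - u ≤ 1 := by linarith [hu.1]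
    have h2 : 0 ≤ ‖s‖ * (n : ℝ) ^ (-s.re - 1) := by positivity
    nlinarith
  have hd : ∀ v ∈ Set.Icc (n : ℝ) ((n : ℝ) + 1),
      HasDerivWithinAt (fun v : ℝ => (s - 1) * ((n : ℂ) + 1) ^ (-s) * (v : ℂ) + (v : ℂ) ^ (1 - s))
        ((s - 1) * (((n : ℂ) + 1) ^ (-s) - (v : ℂ) ^ (-s)))
        (Set.Icc (n : ℝ) ((n : ℝ) + 1)) v := by
    intro v hv
    have hv0 : 0 < v := lt_of_lt_of_le hn0 hv.1
    have h1 := ((hasDerivAt_id (v : ℂ)).cpow_const (c := 1 - s)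
        (Or.inl (by simpa using hv0)))
    have h2 := (hasDerivAt_id (v : ℂ)).const_mul ((s - 1) * ((n : ℂ) + 1) ^ (-s))
    refine (h2.add h1).comp_ofReal.hasDerivWithinAt.congr_deriv ?_
    simp
    ring_nf
  have hb : ∀ v ∈ Set.Ico (n : ℝ) ((n : ℝ) + 1),
      ‖(s - 1) * (((n : ℂ) + 1) ^ (-s) - (v : ℂ) ^ (-s))‖ ≤
        ‖s - 1‖ * (‖s‖ * (n : ℝ) ^ (-s.re - 1)) := by
    intro v hv
    rw [norm_mul]
    gcongr
    exact key v ⟨hv.1, hv.2.le⟩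
  have := norm_image_sub_le_of_norm_deriv_le_segment' hd hb ((n : ℝ) + 1) ⟨by linarith, le_rfl⟩
  simp only [add_sub_cancel_left, mul_one] at this
  rw [mul_assoc]
  refine le_trans (le_of_eq ?_) this
  congr 1
  push_cast
  ring

/-- the tail terms -/
noncomputable def U (n : ℕ) (s : ℂ) : ℂ :=
  (s - 1) * ((n : ℂ) + 1) ^ (-s) + ((n : ℂ) + 1) ^ (1 - s) - (n : ℂ) ^ (1 - s)

lemma summable_shift (N : ℕ) (c : ℝ) (hc : 0 < c) :
    Summable (fun k : ℕ => ((k + N : ℕ) : ℝ) ^ (-c - 1)) := by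
  rw [summable_nat_add_iff (f := fun k : ℕ => (k : ℝ) ^ (-c - 1))]
  exact Real.summable_nat_rpow.2 (by linarith)

lemma zeta1_eq_of_one_lt (N : ℕ) (hN : 1 ≤ N) (s : ℂ) (hs : 1 < s.re) :
    riemannZeta₁ s = (s - 1) * (∑ k ∈ Finset.range N, ((k : ℂ) + 1) ^ (-s)) + (N : ℂ) ^ (1 - s)
      + ∑' k : ℕ, U (k + N) s := by
  have hs1 : s ≠ 1 := by rintro rfl; simp at hs
  have hz : riemannZeta₁ s = (s - 1) * riemannZeta s := by
    rw [riemannZeta_eq_inv_sub_mul hs1, ← mul_assoc, mul_inv_cancel₀ (sub_ne_zero.2 hs1), one_mul]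
  have hsum : Summable (fun k : ℕ => ((k : ℂ) + 1) ^ (-s)) := by
    have := (summable_nat_add_iff 1).2 (Complex.summable_one_div_nat_cpow.2 hs)
    refine this.congr fun k => ?_
    rw [cpow_neg, one_div]; push_cast; rfl
  have hzs : riemannZeta s = ∑' k : ℕ, ((k : ℂ) + 1) ^ (-s) := by
    rw [zeta_eq_tsum_one_div_nat_add_one_cpow hs]
    congr 1; ext k; rw [cpow_neg, one_div]
  have htail : HasSum (fun k : ℕ => (((k + N : ℕ) : ℂ) + 1) ^ (-s))
      (riemannZeta s - ∑ k ∈ Finset.range N, ((k : ℂ) + 1) ^ (-s)) := by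
    rw [hzs]
    exact (hasSum_nat_add_iff' (f := fun k : ℕ => ((k : ℂ) + 1) ^ (-s)) N).2 hsum.hasSum
  have hSU : Summable (fun k : ℕ => U (k + N) s) := by
    refine Summable.of_norm_bounded (g := fun k : ℕ => ‖s - 1‖ * ‖s‖ * ((k + N : ℕ) : ℝ) ^ (-s.re - 1))
      ((summable_shift N s.re (by linarith)).mul_left _) fun k => ?_
    exact term_bound (k + N) (by omega) s (by linarith)
  have hV : Summable (fun k : ℕ => (((k + N : ℕ) : ℂ) + 1) ^ (1 - s) - ((k + N : ℕ) : ℂ) ^ (1 - s)) := by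
    refine (hSU.sub (htail.summable.mul_left (s - 1))).congr fun k => ?_
    simp only [U]; ring
  have hVs : HasSum (fun k : ℕ => (((k + N : ℕ) : ℂ) + 1) ^ (1 - s) - ((k + N : ℕ) : ℂ) ^ (1 - s))
      (- (N : ℂ) ^ (1 - s)) := by
    rw [hV.hasSum_iff_tendsto_nat]
    have : ∀ n : ℕ, ∑ k ∈ Finset.range n, ((((k + N : ℕ) : ℂ) + 1) ^ (1 - s) - ((k + N : ℕ) : ℂ) ^ (1 - s))
        = ((n + N : ℕ) : ℂ) ^ (1 - s) - (N : ℂ) ^ (1 - s) := by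
      intro n
      have := Finset.sum_range_sub (fun k : ℕ => ((k + N : ℕ) : ℂ) ^ (1 - s)) n
      simp only [zero_add] at this
      rw [← this]
      refine Finset.sum_congr rfl fun k _ => ?_
      push_cast; ring_nf
    simp_rw [this]
    rw [← zero_sub]
    refine Tendsto.sub_const ?_ _
    rw [tendsto_zero_iff_norm_tendsto_zero]
    have h1 : Tendsto (fun n : ℕ => ((n + N : ℕ) : ℝ) ^ (-(s.re - 1))) atTop (𝓝 0) := by
      refine (tendsto_rpow_neg_atTop (by linarith)).comp ?_
      exact tendsto_natCast_atTop_atTop.comp (tendsto_add_atTop_nat N)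
    refine h1.congr fun n => ?_
    rw [Complex.norm_natCast_cpow_of_pos (by omega)]
    simp
  have htot := (htail.mul_left (s - 1)).add hVs
  have : ∑' k : ℕ, U (k + N) s = _ := (htot.congr_fun (fun k => by simp only [U]; ring)).tsum_eq
  rw [this, hz]; ring

lemma zeta1_eq (N : ℕ) (hN : 1 ≤ N) (s : ℂ) (hs : 1 / 4 < s.re) :
    riemannZeta₁ s = (s - 1) * (∑ k ∈ Finset.range N, ((k : ℂ) + 1) ^ (-s)) + (N : ℂ) ^ (1 - s)
      + ∑' k : ℕ, U (k + N) s := by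
  set V : Set ℂ := {z | 1 / 4 < z.re} ∩ Metric.ball 0 (‖s‖ + 3) with hVdef
  have hVo : IsOpen V := (isOpen_lt continuous_const continuous_re).inter Metric.isOpen_ball
  have hVc : Convex ℝ V := (convex_halfSpace_re_gt _).inter (convex_ball _ _)
  have hdU : DifferentiableOn ℂ (fun z => ∑' k : ℕ, U (k + N) z) V := by
    refine differentiableOn_tsum_of_summable_norm
      (u := fun k : ℕ => (‖s‖ + 4) * (‖s‖ + 3) * ((k + N : ℕ) : ℝ) ^ (-(1/4 : ℝ) - 1))
      ((summable_shift N (1/4) (by norm_num)).mul_left _) ?_ hVo ?_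
    · intro k
      have hne : ((k + N : ℕ) : ℂ) ≠ 0 := by exact_mod_cast (by omega : k + N ≠ 0)
      have hne' : ((k + N : ℕ) : ℂ) + 1 ≠ 0 := by exact_mod_cast (by omega : k + N + 1 ≠ 0)
      have : Differentiable ℂ (U (k + N)) := by
        unfold U
        intro z
        refine DifferentiableAt.sub (DifferentiableAt.add (DifferentiableAt.mul (by fun_prop) ?_) ?_) ?_
        · exact (differentiableAt_id.neg).const_cpow (Or.inl hne')
        · exact (differentiableAt_id.const_sub 1).const_cpow (Or.inl hne')
        · exact (differentiableAt_id.const_sub 1).const_cpow (Or.inl hne)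
      exact this.differentiableOn
    · intro k z hz
      have h1 : (1 : ℝ) / 4 < z.re := hz.1
      have h2 : ‖z‖ < ‖s‖ + 3 := by simpa using hz.2
      refine (term_bound (k + N) (by omega) z (by linarith)).trans ?_
      have h3 : ‖z - 1‖ ≤ ‖s‖ + 4 := by
        refine (norm_sub_le _ _).trans ?_
        simp; linarith
      have h4 : ((k + N : ℕ) : ℝ) ^ (-z.re - 1) ≤ ((k + N : ℕ) : ℝ) ^ (-(1/4 : ℝ) - 1) := by
        apply Real.rpow_le_rpow_of_exponent_le
        · exact_mod_cast (by omega : 1 ≤ k + N)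
        · linarith
      gcongr
  have hN0 : (N : ℂ) ≠ 0 := by exact_mod_cast (by omega : N ≠ 0)
  have hdR : DifferentiableOn ℂ (fun z => (z - 1) * (∑ k ∈ Finset.range N, ((k : ℂ) + 1) ^ (-z)) + (N : ℂ) ^ (1 - z)
      + ∑' k : ℕ, U (k + N) z) V := by
    refine DifferentiableOn.add (Differentiable.differentiableOn ?_) hdU
    intro z
    refine DifferentiableAt.add (DifferentiableAt.mul (by fun_prop) ?_) ?_
    · refine DifferentiableAt.fun_sum fun k _ => ?_
      exact (differentiableAt_id.neg).const_cpow (Or.inl (by exact_mod_cast (by omega : k + 1 ≠ 0)))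
    · exact (differentiableAt_id.const_sub 1).const_cpow (Or.inl hN0)
  have hA := hdR.analyticOnNhd hVo
  have hB := (differentiable_riemannZeta₁.differentiableOn (s := V)).analyticOnNhd hVo
  have h2 : (2 : ℂ) ∈ V := by
    refine ⟨by norm_num, ?_⟩
    simp; linarith [norm_nonneg s]
  have heq := hB.eqOn_of_preconnected_of_eventuallyEq hA hVc.isPreconnected h2 (by
    have : ∀ᶠ z : ℂ in 𝓝 2, 1 < z.re :=
      (isOpen_lt continuous_const continuous_re).mem_nhds (by simp)
    filter_upwards [this] with z hz
    exact zeta1_eq_of_one_lt N hN z hz)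
  exact heq ⟨hs, by simp⟩
end MO

namespace MO
open Complex Filter Topology

lemma sum_le (N : ℕ) :
    ∑ k ∈ Finset.range N, ((k : ℝ) + 1) ^ ((1 / 50 : ℝ) - 1) ≤ 50 * (N : ℝ) ^ (1 / 50 : ℝ) := by
  induction N with
  | zero => simp
  | succ n ih =>
    rw [Finset.sum_range_succ]
    have hp : (0 : ℝ) < (n : ℝ) + 1 := by positivity
    have h := rpow_one_add_le_one_add_mul_self (s := -(1 / ((n : ℝ) + 1))) (p := 1 / 50)
      (by rw [neg_le_neg_iff, div_le_one hp]; linarith [(Nat.cast_nonneg n : (0:ℝ) ≤ n)])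
      (by norm_num) (by norm_num)
    have e1 : 1 + -(1 / ((n : ℝ) + 1)) = n / ((n : ℝ) + 1) := by field_simp; ring
    rw [e1, Real.div_rpow (by positivity) hp.le, div_le_iff₀ (by positivity)] at h
    rw [Real.rpow_sub hp, Real.rpow_one]
    push_cast
    have : ((n : ℝ) + 1) ^ (1 / 50 : ℝ) / ((n : ℝ) + 1) = 50 * ((1/50) * (1 / ((n : ℝ) + 1)) * ((n : ℝ) + 1) ^ (1 / 50 : ℝ)) := by
      field_simp
    rw [this]
    nlinarith

lemma tail_term (n : ℕ) (hn : 1 ≤ n) :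
    (n : ℝ) ^ (-(49 / 50 : ℝ) - 1) ≤
      8 * ((n : ℝ) ^ (-(49 / 50 : ℝ)) - ((n : ℝ) + 1) ^ (-(49 / 50 : ℝ))) := by
  have hn0 : (1 : ℝ) ≤ n := by exact_mod_cast hn
  have hp : (0 : ℝ) < (n : ℝ) := by linarith
  have h := rpow_one_add_le_one_add_mul_self (s := -(1 / ((n : ℝ) + 1))) (p := 49 / 50)
      (by rw [neg_le_neg_iff, div_le_one (by linarith)]; linarith)
      (by norm_num) (by norm_num)
  have e1 : 1 + -(1 / ((n : ℝ) + 1)) = n / ((n : ℝ) + 1) := by field_simp; ring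
  rw [e1, Real.div_rpow (by positivity) (by positivity)] at h
  rw [Real.rpow_sub hp, Real.rpow_one, Real.rpow_neg hp.le, Real.rpow_neg (by positivity)]
  set A := (n : ℝ) ^ (49 / 50 : ℝ) with hA
  set B := ((n : ℝ) + 1) ^ (49 / 50 : ℝ) with hB
  have hA0 : 0 < A := by positivity
  have hB0 : 0 < B := by positivity
  have h3 : B⁻¹ ≤ A⁻¹ * (1 + 49 / 50 * -(1 / ((n : ℝ) + 1))) := by
    have : B⁻¹ = A⁻¹ * (A / B) := by field_simp
    rw [this]
    gcongr
  have h4 : 1 / (n : ℝ) ≤ 8 * (49 / 50 * (1 / ((n : ℝ) + 1))) := by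
    rw [div_le_iff₀ hp]
    have : 8 * (49 / 50 * (1 / ((n : ℝ) + 1))) * n = (392 / 50 * n) / (n + 1) := by field_simp; ring
    rw [this, le_div_iff₀ (by linarith)]
    linarith
  have h5 : A⁻¹ / n = A⁻¹ * (1 / n) := by ring
  rw [h5]
  have h6 : A⁻¹ * (1 / n) ≤ A⁻¹ * (8 * (49 / 50 * (1 / ((n : ℝ) + 1)))) := by gcongr
  nlinarith

lemma tail_sum (N : ℕ) (hN : 1 ≤ N) :
    ∑' k : ℕ, ((k + N : ℕ) : ℝ) ^ (-(49 / 50 : ℝ) - 1) ≤ 8 * (N : ℝ) ^ (-(49 / 50 : ℝ)) := by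
  refine Real.tsum_le_of_sum_range_le (fun k => by positivity) fun n => ?_
  have h1 : ∀ n : ℕ, ∑ k ∈ Finset.range n, ((k + N : ℕ) : ℝ) ^ (-(49 / 50 : ℝ) - 1) ≤
      8 * ((N : ℝ) ^ (-(49 / 50 : ℝ)) - ((n + N : ℕ) : ℝ) ^ (-(49 / 50 : ℝ))) := by
    intro n
    induction n with
    | zero => simp
    | succ n ih =>
      rw [Finset.sum_range_succ]
      have := tail_term (n + N) (by omega)
      have e : (((n + N : ℕ) : ℝ) + 1) = ((n + 1 + N : ℕ) : ℝ) := by push_cast; ring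
      rw [e] at this
      linarith
  refine (h1 n).trans ?_
  have : 0 ≤ ((n + N : ℕ) : ℝ) ^ (-(49 / 50 : ℝ)) := by positivity
  linarith

lemma zeta_bound : ∃ C : ℝ, 1 ≤ C ∧ ∀ s : ℂ, 49 / 50 ≤ s.re → s.re ≤ 3 → 1 ≤ |s.im| →
    ‖riemannZeta s‖ ≤ C * |s.im| ^ (1 / 50 : ℝ) := by
  refine ⟨50 + 1 + 64, by norm_num, fun s hs hs3 ht => ?_⟩
  have hs1 : s ≠ 1 := by rintro rfl; simp at ht; linarith
  set t := |s.im| with htdef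
  set N := ⌊t⌋₊ with hNdef
  have hN : 1 ≤ N := Nat.le_floor (by simpa using ht)
  have hN0 : (1 : ℝ) ≤ N := by exact_mod_cast hN
  have hNt : (N : ℝ) ≤ t := Nat.floor_le (by linarith)
  have htN : t < N + 1 := Nat.lt_floor_add_one t
  have hsn : 0 < ‖s - 1‖ := norm_pos_iff.2 (sub_ne_zero.2 hs1)
  have hsn1 : 1 ≤ ‖s - 1‖ := by
    refine ht.trans ?_
    have := abs_im_le_norm (s - 1)
    simpa using this
  have hsn2 : ‖s‖ ≤ 4 * t := by
    refine (norm_le_abs_re_add_abs_im s).trans ?_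
    rw [abs_of_nonneg (by linarith : 0 ≤ s.re)]
    linarith
  have hpow : (N : ℝ) ^ (1 / 50 : ℝ) ≤ t ^ (1 / 50 : ℝ) :=
    Real.rpow_le_rpow (by linarith) hNt (by norm_num)
  have h1 : ‖∑ k ∈ Finset.range N, ((k : ℂ) + 1) ^ (-s)‖ ≤ 50 * t ^ (1 / 50 : ℝ) := by
    refine (norm_sum_le _ _).trans ?_
    refine le_trans (Finset.sum_le_sum (g := fun k : ℕ => ((k : ℝ) + 1) ^ ((1 / 50 : ℝ) - 1)) ?_) ((sum_le N).trans (by gcongr))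
    intro k _
    have : ((k : ℂ) + 1) = (((k : ℝ) + 1 : ℝ) : ℂ) := by push_cast; rfl
    rw [this, norm_cpow_eq_rpow_re_of_pos (by positivity)]
    apply Real.rpow_le_rpow_of_exponent_le
    · linarith [(Nat.cast_nonneg k : (0:ℝ) ≤ k)]
    · simp; linarith
  have h2 : ‖(N : ℂ) ^ (1 - s)‖ ≤ t ^ (1 / 50 : ℝ) := by
    rw [norm_natCast_cpow_of_pos (by omega)]
    refine le_trans (Real.rpow_le_rpow_of_exponent_le hN0 ?_) hpow
    simp; linarith
  have h3 : ‖∑' k : ℕ, U (k + N) s‖ ≤ ‖s - 1‖ * (64 * t ^ (1 / 50 : ℝ)) := by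
    have hsm := (summable_shift N (49 / 50) (by norm_num)).mul_left (‖s - 1‖ * ‖s‖)
    refine (tsum_of_norm_bounded hsm.hasSum (f := fun k : ℕ => U (k + N) s) fun k => ?_).trans ?_
    · refine (term_bound (k + N) (by omega) s (by linarith)).trans ?_
      gcongr
      exact_mod_cast (by omega : 1 ≤ k + N)
    · rw [tsum_mul_left, mul_assoc]
      refine mul_le_mul_of_nonneg_left ?_ (norm_nonneg _)
      have e : (N : ℝ) ^ (-(49 / 50 : ℝ)) = (N : ℝ) ^ (1 / 50 : ℝ) / N := by
        rw [show -(49 / 50 : ℝ) = 1 / 50 - 1 by norm_num, Real.rpow_sub (by linarith), Real.rpow_one]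
      calc ‖s‖ * ∑' k : ℕ, ((k + N : ℕ) : ℝ) ^ (-(49 / 50 : ℝ) - 1)
          ≤ (4 * t) * (8 * (N : ℝ) ^ (-(49 / 50 : ℝ))) := by
            gcongr
            exact tail_sum N hN
        _ = 32 * (t / N) * (N : ℝ) ^ (1 / 50 : ℝ) := by rw [e]; ring
        _ ≤ 32 * 2 * t ^ (1 / 50 : ℝ) := by
            gcongr
            rw [div_le_iff₀ (by linarith)]; linarith
        _ = _ := by ring
  have hz := zeta1_eq N hN s (by linarith)
  have hz' : ‖riemannZeta₁ s‖ ≤ ‖s - 1‖ * ((50 + 1 + 64) * t ^ (1 / 50 : ℝ)) := by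
    rw [hz]
    refine (norm_add₃_le).trans ?_
    rw [norm_mul]
    have hh : t ^ (1 / 50 : ℝ) ≤ ‖s - 1‖ * t ^ (1 / 50 : ℝ) :=
      le_mul_of_one_le_left (by positivity) hsn1
    have : ‖s - 1‖ * ‖∑ k ∈ Finset.range N, ((k : ℂ) + 1) ^ (-s)‖ ≤ ‖s - 1‖ * (50 * t ^ (1 / 50 : ℝ)) := by
      gcongr
    nlinarith
  rw [riemannZeta_eq_inv_sub_mul hs1, norm_mul, norm_inv, inv_mul_le_iff₀ hsn]
  exact hz'

lemma deriv_zeta_bound : ∃ C : ℝ, 1 ≤ C ∧ ∀ s : ℂ, 99 / 100 ≤ s.re → s.re ≤ 2 → 2 ≤ |s.im| →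
    ‖deriv riemannZeta s‖ ≤ C * |s.im| ^ (1 / 50 : ℝ) := by
  obtain ⟨C, hC, h⟩ := zeta_bound
  refine ⟨C * 200, by linarith, fun s hs hs2 ht => ?_⟩
  have key : ∀ z ∈ Metric.closedBall s (1 / 100), |z.re - s.re| ≤ 1 / 100 ∧ |z.im - s.im| ≤ 1 / 100 := by
    intro z hz
    rw [Metric.mem_closedBall, dist_eq_norm] at hz
    have a1 := abs_re_le_norm (z - s)
    have a2 := abs_im_le_norm (z - s)
    simp at a1 a2
    constructor <;> linarith
  have im_lo : ∀ z ∈ Metric.closedBall s (1 / 100), 1 ≤ |z.im| ∧ |z.im| ≤ 2 * |s.im| := by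
    intro z hz
    have := (key z hz).2
    have h1 := abs_sub_abs_le_abs_sub s.im z.im
    have h2 := abs_sub_abs_le_abs_sub z.im s.im
    rw [abs_sub_comm] at h1
    constructor <;> linarith
  have := norm_deriv_le_of_forall_mem_sphere_norm_le (f := riemannZeta) (c := s) (R := 1 / 100)
    (C := C * (2 * |s.im| ^ (1 / 50 : ℝ))) (by norm_num) ?_ ?_
  · refine this.trans (le_of_eq (by ring))
  · apply DifferentiableOn.diffContOnCl
    rw [closure_ball _ (by norm_num)]
    intro z hz
    refine (differentiableAt_riemannZeta ?_).differentiableWithinAt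
    rintro rfl
    have := (im_lo _ hz).1
    simp at this; linarith
  · intro z hz
    have hz' := Metric.sphere_subset_closedBall hz
    have b := abs_le.1 (key z hz').1
    refine (h z (by linarith) (by linarith) (im_lo z hz').1).trans ?_
    gcongr
    calc |z.im| ^ (1 / 50 : ℝ) ≤ (2 * |s.im|) ^ (1 / 50 : ℝ) := by
          gcongr
          exact (im_lo z hz').2
      _ = 2 ^ (1 / 50 : ℝ) * |s.im| ^ (1 / 50 : ℝ) := Real.mul_rpow (by norm_num) (by positivity)
      _ ≤ 2 ^ (1 : ℝ) * |s.im| ^ (1 / 50 : ℝ) := by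
          gcongr <;> norm_num
      _ = _ := by norm_num

lemma three_four_one (x : ℝ) (hx : 0 < x) (y : ℝ) :
    1 ≤ ‖riemannZeta (1 + x)‖ ^ 3 * ‖riemannZeta (1 + x + I * y)‖ ^ 4 *
      ‖riemannZeta (1 + x + 2 * I * y)‖ := by
  have := DirichletCharacter.norm_LFunction_product_ge_one (1 : DirichletCharacter ℂ 1) hx y
  rw [DirichletCharacter.LFunctionTrivChar] at this
  simpa [DirichletCharacter.LFunction_modOne_eq] using this

lemma zeta_real_bound : ∃ C : ℝ, 1 ≤ C ∧ ∀ x : ℝ, 0 < x → x ≤ 1 → ‖riemannZeta (1 + x)‖ ≤ C / x := by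
  obtain ⟨C, hC⟩ := (isCompact_closedBall (1 : ℂ) 1).exists_bound_of_continuousOn
    (differentiable_riemannZeta₁.continuous.continuousOn)
  refine ⟨max 1 C, le_max_left _ _, fun x hx hx1 => ?_⟩
  have hne : (1 + (x : ℂ)) ≠ 1 := by simp [hx.ne']
  rw [riemannZeta_eq_inv_sub_mul hne]
  have := hC (1 + (x : ℂ)) (by simp [abs_of_pos hx, hx1])
  rw [norm_mul, norm_inv]
  simp only [add_sub_cancel_left, norm_real, Real.norm_eq_abs, abs_of_pos hx]
  rw [inv_mul_eq_div]
  gcongr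
  exact this.trans (le_max_right _ _)
end MO

namespace MO
open Complex Filter Topology

lemma zeta_pow4_lower : ∃ d : ℝ, 0 < d ∧ ∀ (x y : ℝ), 0 < x → x ≤ 1 → 1 ≤ |y| →
    d ^ 4 * x ^ 3 ≤ ‖riemannZeta (1 + x + I * y)‖ ^ 4 * |y| ^ (1 / 50 : ℝ) := by
  obtain ⟨C, hC, h⟩ := zeta_bound
  obtain ⟨B, hB, hb⟩ := zeta_real_bound
  refine ⟨(1 / (2 * C * B ^ 3)) ^ (1 / 4 : ℝ), by positivity, fun x y hx hx1 hy => ?_⟩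
  rw [← Real.rpow_natCast, ← Real.rpow_mul (by positivity)]
  norm_num only [Real.rpow_one]
  have h3 := three_four_one x hx y
  have h1 := hb x hx hx1
  have h2 := h (1 + x + 2 * I * y) (by simp; linarith) (by simp; linarith) (by
    simp [abs_mul]; linarith)
  have e : |(1 + x + 2 * I * y : ℂ).im| = 2 * |y| := by simp [abs_mul]
  rw [e] at h2
  have h4 : ‖riemannZeta (1 + x + 2 * I * y)‖ ≤ C * (2 * |y| ^ (1 / 50 : ℝ)) := by
    refine h2.trans ?_
    gcongr
    rw [Real.mul_rpow (by norm_num) (by positivity)]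
    gcongr
    calc (2 : ℝ) ^ (1 / 50 : ℝ) ≤ 2 ^ (1 : ℝ) := by gcongr <;> norm_num
      _ = 2 := by norm_num
  set Z := ‖riemannZeta (1 + x + I * y)‖ ^ 4 with hZ
  have hZ0 : 0 ≤ Z := by positivity
  have h5 : 1 ≤ (B / x) ^ 3 * Z * (C * (2 * |y| ^ (1 / 50 : ℝ))) := by
    refine h3.trans ?_
    gcongr
  have h6 : (B / x) ^ 3 * Z * (C * (2 * |y| ^ (1 / 50 : ℝ))) =
    (Z * |y| ^ (1 / 50 : ℝ)) * (2 * C * B ^ 3) / x ^ 3 := by field_simp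
  rw [h6, le_div_iff₀ (by positivity)] at h5
  rw [one_div, inv_mul_le_iff₀ (by positivity)]
  linarith

lemma zeta_lower : ∃ c1 c2 : ℝ, 0 < c1 ∧ c1 ≤ 1 / 100 ∧ 0 < c2 ∧ ∀ s : ℂ, 2 ≤ |s.im| →
    1 - c1 / (|s.im| ^ (1 / 50 : ℝ)) ^ 5 ≤ s.re → s.re ≤ 3 / 2 →
    c2 / (|s.im| ^ (1 / 50 : ℝ)) ^ 4 ≤ ‖riemannZeta s‖ := by
  obtain ⟨d, hd, hlow⟩ := zeta_pow4_lower
  obtain ⟨C, hC, hder⟩ := deriv_zeta_bound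
  set e : ℝ := min (d / (4 * C)) (1 / 4) with he
  have he0 : 0 < e := lt_min (by positivity) (by norm_num)
  have he1 : e ≤ 1 / 4 := min_le_right _ _
  have he2 : e * (4 * C) ≤ d := by
    rw [← le_div_iff₀ (by positivity)]; exact min_le_left _ _
  have he4 : e ^ 4 ≤ 1 / 100 := by
    calc e ^ 4 ≤ (1 / 4) ^ 4 := by gcongr
      _ ≤ _ := by norm_num
  refine ⟨e ^ 4, d * e ^ 3 / 2, by positivity, he4, by positivity, fun s ht hs hs2 => ?_⟩
  set τ := |s.im| ^ (1 / 50 : ℝ) with hτ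
  have hτ1 : 1 ≤ τ := Real.one_le_rpow (by linarith) (by norm_num)
  have hτ0 : 0 < τ := by linarith
  set η := e ^ 4 / τ ^ 5 with hη
  have hη0 : 0 < η := by positivity
  have hη1 : η ≤ 1 / 100 := by
    refine le_trans (div_le_self (by positivity) (one_le_pow₀ hτ1)) he4
  set σ' := max s.re (1 + η) with hσ'
  have hσ1 : 1 + η ≤ σ' := le_max_right _ _
  have hσ2 : σ' ≤ 3 / 2 := max_le hs2 (by linarith)
  have hσ3 : s.re ≤ σ' := le_max_left _ _
  have hσ4 : σ' - s.re ≤ 2 * η := by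
    rw [sub_le_iff_le_add]
    exact max_le (by linarith) (by linarith)
  set s' : ℂ := 1 + ((σ' - 1 : ℝ) : ℂ) + I * (s.im : ℂ) with hs'
  have hs're : s'.re = σ' := by simp [hs']
  have hs'im : s'.im = s.im := by simp [hs']
  have hl := hlow (σ' - 1) s.im (by linarith) (by linarith) (by linarith)
  have hZ : d * e ^ 3 / τ ^ 4 ≤ ‖riemannZeta s'‖ := by
    rw [← pow_le_pow_iff_left₀ (by positivity) (by positivity) (n := 4) (by norm_num)]
    have h1 : d ^ 4 * η ^ 3 ≤ ‖riemannZeta s'‖ ^ 4 * τ := by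
      refine le_trans ?_ hl
      gcongr
      linarith
    have h2 : (d * e ^ 3 / τ ^ 4) ^ 4 = d ^ 4 * η ^ 3 / τ := by
      rw [hη]; field_simp
    rw [h2, div_le_iff₀ hτ0]
    exact h1
  have hdiff : ‖riemannZeta s' - riemannZeta s‖ ≤ (C * τ) * (2 * η) := by
    have hconv : Convex ℝ ({z : ℂ | z.im = s.im} ∩ {z : ℂ | 99 / 100 ≤ z.re} ∩ {z : ℂ | z.re ≤ 2}) := by
      refine (Convex.inter ?_ (convex_halfSpace_re_ge _)).inter (convex_halfSpace_re_le _)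
      exact convex_hyperplane imLm.isLinear _
    have := hconv.norm_image_sub_le_of_norm_deriv_le (f := riemannZeta) (C := C * τ) (x := s) (y := s')
      (fun z hz => ?_) (fun z hz => ?_) ?_ ?_
    · refine this.trans ?_
      gcongr
      have : s' - s = ((σ' - s.re : ℝ) : ℂ) := by
        apply Complex.ext <;> simp [hs're, hs'im]
      rw [this, norm_real, Real.norm_eq_abs, abs_of_nonneg (by linarith)]
      exact hσ4
    · apply differentiableAt_riemannZeta
      rintro rfl
      have := hz.1.1
      simp at this
      rw [← this] at ht; norm_num at ht
    · have him : z.im = s.im := hz.1.1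
      have := hder z hz.1.2 hz.2 (by rw [him]; exact ht)
      rwa [him] at this
    · refine ⟨⟨rfl, ?_⟩, ?_⟩
      · show 99 / 100 ≤ s.re
        linarith
      · show s.re ≤ 2
        linarith
    · refine ⟨⟨hs'im, ?_⟩, ?_⟩
      · show 99 / 100 ≤ s'.re
        linarith
      · show s'.re ≤ 2
        linarith
  have h7 : (C * τ) * (2 * η) ≤ d * e ^ 3 / τ ^ 4 / 2 := by
    have : (C * τ) * (2 * η) = (e * (4 * C)) * e ^ 3 / τ ^ 4 / 2 := by
      rw [hη]; field_simp; ring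
    rw [this]
    gcongr
  have h8 := norm_sub_norm_le (riemannZeta s') (riemannZeta s)
  have h9 : d * e ^ 3 / 2 / τ ^ 4 = d * e ^ 3 / τ ^ 4 - d * e ^ 3 / τ ^ 4 / 2 := by ring
  rw [h9]
  linarith

lemma inv_zeta_iter_large : ∃ C : ℝ, 0 < C ∧ ∀ s : ℂ, 3 ≤ |s.im| → 1 < s.re → s.re ≤ 5 / 4 →
    ‖iteratedDeriv 4 (fun z => (riemannZeta z)⁻¹) s‖ ≤ C * |s.im| ^ (1 / 2 : ℝ) := by
  obtain ⟨c1, c2, hc1, hc1', hc2, hlow⟩ := zeta_lower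
  refine ⟨24 * (2 / c2) * (4 / c1) ^ 4, by positivity, fun s ht hs hs2 => ?_⟩
  set τ := |s.im| ^ (1 / 50 : ℝ) with hτ
  have hτ1 : 1 ≤ τ := Real.one_le_rpow (by linarith) (by norm_num)
  have hτ0 : 0 < τ := by linarith
  set r := c1 / (4 * τ ^ 5) with hr
  have hr0 : 0 < r := by positivity
  have hr1 : r ≤ 1 / 100 := by
    refine le_trans (div_le_self (by positivity) ?_) hc1'
    have := one_le_pow₀ hτ1 (n := 5)
    linarith
  have key : ∀ z ∈ Metric.closedBall s r, |z.re - s.re| ≤ r ∧ |z.im - s.im| ≤ r := by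
    intro z hz
    rw [Metric.mem_closedBall, dist_eq_norm] at hz
    have a1 := abs_re_le_norm (z - s)
    have a2 := abs_im_le_norm (z - s)
    simp at a1 a2
    constructor <;> linarith
  have im_lo : ∀ z ∈ Metric.closedBall s r, 2 ≤ |z.im| ∧ |z.im| ≤ 2 * |s.im| := by
    intro z hz
    have := (key z hz).2
    have h1 := abs_sub_abs_le_abs_sub s.im z.im
    have h2 := abs_sub_abs_le_abs_sub z.im s.im
    rw [abs_sub_comm] at h1
    constructor <;> linarith
  have hpw : ∀ z ∈ Metric.closedBall s r, ∀ n : ℕ, n ≤ 50 → (|z.im| ^ (1 / 50 : ℝ)) ^ n ≤ 2 * τ ^ n := by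
    intro z hz n hn
    have hn' : (n : ℝ) ≤ 50 := by exact_mod_cast hn
    have a : |z.im| ^ (1 / 50 : ℝ) ≤ (2 * |s.im|) ^ (1 / 50 : ℝ) := by
      gcongr
      exact (im_lo z hz).2
    rw [Real.mul_rpow (by norm_num) (by positivity)] at a
    calc (|z.im| ^ (1 / 50 : ℝ)) ^ n ≤ (2 ^ (1 / 50 : ℝ) * τ) ^ n := by gcongr
      _ = (2 ^ (1 / 50 : ℝ)) ^ n * τ ^ n := by rw [mul_pow]
      _ ≤ 2 * τ ^ n := by
        gcongr
        rw [← Real.rpow_natCast, ← Real.rpow_mul (by norm_num)]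
        calc (2 : ℝ) ^ (1 / 50 * (n : ℝ)) ≤ 2 ^ (1 : ℝ) := by
              gcongr
              · norm_num
              · linarith
          _ = 2 := by norm_num
  have hz_low : ∀ z ∈ Metric.closedBall s r, c2 / (|z.im| ^ (1 / 50 : ℝ)) ^ 4 ≤ ‖riemannZeta z‖ := by
    intro z hz
    have hz0 : 0 < |z.im| := by linarith [(im_lo z hz).1]
    have k := abs_le.1 (key z hz).1
    refine hlow z (im_lo z hz).1 ?_ (by linarith)
    have : r ≤ c1 / (|z.im| ^ (1 / 50 : ℝ)) ^ 5 := by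
      rw [hr]
      gcongr
      linarith [hpw z hz 5 (by norm_num), pow_pos hτ0 5]
    linarith
  have hpos : ∀ z ∈ Metric.closedBall s r, 0 < ‖riemannZeta z‖ := by
    intro z hz
    have hz0 : 0 < |z.im| := by linarith [(im_lo z hz).1]
    exact lt_of_lt_of_le (by positivity) (hz_low z hz)
  have := norm_iteratedDeriv_le_of_forall_mem_sphere_norm_le (f := fun z => (riemannZeta z)⁻¹)
    (c := s) (R := r) (C := 2 * τ ^ 4 / c2) 4 hr0 ?_ ?_
  · refine this.trans ?_
    have e1 : |s.im| ^ (1 / 2 : ℝ) = τ ^ 25 := by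
      rw [hτ, ← Real.rpow_natCast, ← Real.rpow_mul (by positivity)]
      norm_num
    rw [e1]
    have e2 : ((Nat.factorial 4 : ℕ) : ℝ) * (2 * τ ^ 4 / c2) / r ^ 4 = 24 * (2 / c2) * (4 / c1) ^ 4 * τ ^ 24 := by
      rw [hr]
      simp only [Nat.factorial]
      push_cast
      field_simp
    rw [e2]
    gcongr
    norm_num
  · apply DifferentiableOn.diffContOnCl
    rw [closure_ball _ hr0.ne']
    intro z hz
    refine (DifferentiableAt.inv (differentiableAt_riemannZeta ?_) ?_).differentiableWithinAt
    · rintro rfl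
      have := (im_lo _ hz).1
      simp at this; linarith
    · exact norm_pos_iff.1 (hpos z hz)
  · intro z hz
    have hz' := Metric.sphere_subset_closedBall hz
    have hz0 : 0 < |z.im| := by linarith [(im_lo z hz').1]
    rw [norm_inv]
    calc ‖riemannZeta z‖⁻¹ ≤ (c2 / (|z.im| ^ (1 / 50 : ℝ)) ^ 4)⁻¹ :=
          inv_anti₀ (by positivity) (hz_low z hz')
      _ = (|z.im| ^ (1 / 50 : ℝ)) ^ 4 / c2 := by rw [inv_div]
      _ ≤ 2 * τ ^ 4 / c2 := by
          gcongr
          exact hpw z hz' 4 (by norm_num)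

lemma zeta1_ne_zero (s : ℂ) (hs : 1 ≤ s.re) : riemannZeta₁ s ≠ 0 := by
  by_cases h : s = 1
  · simp [h]
  · intro h0
    apply riemannZeta_ne_zero_of_one_le_re hs
    rw [riemannZeta_eq_inv_sub_mul h, h0, mul_zero]

lemma inv_zeta_iter_small : ∃ C : ℝ, 0 < C ∧ ∀ s : ℂ, |s.im| ≤ 3 → 1 < s.re → s.re ≤ 5 / 4 →
    ‖iteratedDeriv 4 (fun z => (riemannZeta z)⁻¹) s‖ ≤ C := by
  set g : ℂ → ℂ := fun z => (z - 1) / riemannZeta₁ z with hg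
  have hK : IsCompact (Set.Icc (1 : ℝ) (5 / 4) ×ℂ Set.Icc (-3 : ℝ) 3) :=
    isCompact_Icc.reProdIm isCompact_Icc
  have hcont : ContinuousOn (iteratedDeriv 4 g) (Set.Icc (1 : ℝ) (5 / 4) ×ℂ Set.Icc (-3 : ℝ) 3) := by
    intro s hs
    have h1 : 1 ≤ s.re := hs.1.1
    have ha : AnalyticAt ℂ g s := by
      refine AnalyticAt.div (by fun_prop) ?_ (zeta1_ne_zero s h1)
      exact differentiable_riemannZeta₁.analyticAt s
    have e : iteratedDeriv 4 g = deriv (deriv (deriv (deriv g))) := by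
      simp only [iteratedDeriv_succ, iteratedDeriv_zero]
    rw [e]
    exact ha.deriv.deriv.deriv.deriv.continuousAt.continuousWithinAt
  obtain ⟨C, hC⟩ := hK.exists_bound_of_continuousOn hcont
  refine ⟨max C 1, by positivity, fun s ht hs hs2 => ?_⟩
  have heq : (fun z => (riemannZeta z)⁻¹) =ᶠ[𝓝 s] g := by
    have hs1 : s ≠ 1 := by rintro rfl; simp at hs
    filter_upwards [isOpen_ne.mem_nhds hs1] with z hz
    rw [riemannZeta_eq_inv_sub_mul hz, mul_inv, inv_inv, hg]
    rfl
  rw [heq.iteratedDeriv_eq]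
  exact (hC s ⟨⟨hs.le, hs2⟩, abs_le.1 ht⟩).trans (le_max_left _ _)

/-- Uniform bound for the L-series of `μ log^4`. -/
lemma L_bound : ∃ C : ℝ, 0 < C ∧ ∀ s : ℂ, 1 < s.re → s.re ≤ 5 / 4 →
    ‖LSeries (LSeries.logMul^[4] (fun n => ((ArithmeticFunction.moebius n : ℤ) : ℂ))) s‖ ≤
      C * (1 + |s.im|) ^ (1 / 2 : ℝ) := by
  obtain ⟨C, hC, h⟩ := inv_zeta_iter_large
  obtain ⟨B, hB, h'⟩ := inv_zeta_iter_small
  refine ⟨C + B, by positivity, fun s hs hs2 => ?_⟩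
  have h1 := LSeries_iteratedDeriv (f := fun n => ((ArithmeticFunction.moebius n : ℤ) : ℂ)) 4 (s := s) (by
    rw [ArithmeticFunction.abscissaOfAbsConv_moebius]; exact_mod_cast hs)
  have heq : LSeries (fun n => ((ArithmeticFunction.moebius n : ℤ) : ℂ)) =ᶠ[𝓝 s] (fun z => (riemannZeta z)⁻¹) := by
    filter_upwards [(isOpen_lt continuous_const continuous_re).mem_nhds hs] with z hz
    have := ArithmeticFunction.LSeries_zeta_mul_Lseries_moebius hz
    rw [ArithmeticFunction.LSeries_zeta_eq_riemannZeta hz] at this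
    exact eq_inv_of_mul_eq_one_right this
  rw [heq.iteratedDeriv_eq] at h1
  have h2 : ‖LSeries (LSeries.logMul^[4] (fun n => ((ArithmeticFunction.moebius n : ℤ) : ℂ))) s‖ =
      ‖iteratedDeriv 4 (fun z => (riemannZeta z)⁻¹) s‖ := by
    rw [h1]; simp
  rw [h2]
  have h3 : 1 ≤ (1 + |s.im|) ^ (1 / 2 : ℝ) := Real.one_le_rpow (by linarith [abs_nonneg s.im]) (by norm_num)
  rcases le_total 3 |s.im| with ht | ht
  · refine (h s ht hs hs2).trans ?_
    gcongr
    · linarith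
    · linarith
  · refine (h' s ht hs hs2).trans ?_
    nlinarith
end MO

namespace MO
open Complex Filter Topology MeasureTheory

noncomputable def K (s : ℂ) : ℂ := 1 / s - 1 / (s + 1)

lemma K_norm {s : ℂ} (hs : 1 ≤ s.re) : ‖K s‖ ≤ 2 * (1 + |s.im|) ^ (-2 : ℝ) := by
  have h0 : s ≠ 0 := by rintro rfl; norm_num at hs
  have h1 : s + 1 ≠ 0 := by
    intro h
    have := congrArg Complex.re h
    simp at this; linarith
  have hK : K s = 1 / (s * (s + 1)) := by unfold K; field_simp; ring
  have ha : 1 + s.im ^ 2 ≤ ‖s‖ * ‖s + 1‖ := by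
    have e1 : 1 + s.im ^ 2 ≤ ‖s‖ ^ 2 := by
      rw [← Complex.normSq_eq_norm_sq, Complex.normSq_apply]; nlinarith
    have e2 : ‖s‖ ^ 2 ≤ ‖s + 1‖ ^ 2 := by
      rw [← Complex.normSq_eq_norm_sq, ← Complex.normSq_eq_norm_sq, Complex.normSq_apply, Complex.normSq_apply]
      simp; nlinarith
    have e3 : ‖s‖ ≤ ‖s + 1‖ := by
      exact le_of_sq_le_sq e2 (norm_nonneg _)
    nlinarith [norm_nonneg s]
  have hb : (1 + |s.im|) ^ 2 ≤ 2 * (1 + s.im ^ 2) := by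
    nlinarith [sq_abs s.im, sq_nonneg (1 - |s.im|)]
  rw [hK, norm_div, norm_mul, norm_one]
  have hp : 0 < 1 + |s.im| := by positivity
  rw [Real.rpow_neg hp.le, show (2:ℝ) = ((2:ℕ):ℝ) by norm_num, Real.rpow_natCast]
  push_cast
  rw [← div_eq_mul_inv, div_le_div_iff₀ (by positivity) (by positivity)]
  nlinarith

lemma int_bound (r : ℝ) (hr : 1 < r) : Integrable (fun y : ℝ => (1 + |y|) ^ (-r)) := by
  have := integrable_one_add_norm (E := ℝ) (μ := volume) (r := r) (by simpa using hr)
  simpa using this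

lemma K_cont {σ : ℝ} (hσ : 1 ≤ σ) : Continuous (fun y : ℝ => K (σ + y * I)) := by
  unfold K
  have h0 : ∀ y : ℝ, (σ : ℂ) + y * I ≠ 0 := by
    intro y h
    have := congrArg Complex.re h
    simp at this; linarith
  have h1 : ∀ y : ℝ, (σ : ℂ) + y * I + 1 ≠ 0 := by
    intro y h
    have := congrArg Complex.re h
    simp at this; linarith
  fun_prop (disch := assumption)

lemma K_int {σ : ℝ} (hσ : 1 ≤ σ) : Integrable (fun y : ℝ => K (σ + y * I)) := by
  refine Integrable.mono' ((int_bound 2 (by norm_num)).const_mul 2)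
    (K_cont hσ).aestronglyMeasurable (Eventually.of_forall fun y => ?_)
  have := K_norm (s := (σ : ℂ) + y * I) (by simpa using hσ)
  simpa using this

lemma perron {σ u : ℝ} (hσ : 1 ≤ σ) (hu : 0 < u) :
    ∫ y : ℝ, (u : ℂ) ^ (-((σ : ℂ) + y * I)) * K (σ + y * I) = 2 * Real.pi * ((max (1 - u) 0 : ℝ) : ℂ) := by
  set f : ℝ → ℂ := fun t => (Set.indicator (Set.Ioc 0 1) (fun _ => 1 : ℝ → ℂ)) t -
    (Set.indicator (Set.Ioc 0 1) (fun t => (t : ℂ) ^ (1 : ℂ) : ℝ → ℂ)) t with hf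
  have hM : ∀ s : ℂ, 0 < s.re → HasMellin f s (K s) := by
    intro s hs
    have h1 := hasMellin_one_Ioc hs
    have h2 := hasMellin_cpow_Ioc 1 (s := s) (by simp; linarith)
    have := hasMellin_sub h1.1 h2.1
    rw [h1.2, h2.2] at this
    exact this
  have hre : ∀ y : ℝ, 0 < ((σ : ℂ) + y * I).re := by intro y; simp; linarith
  have hfe : ∀ t : ℝ, 0 < t → f t = ((max (1 - t) 0 : ℝ) : ℂ) := by
    intro t ht
    by_cases h : t ≤ 1
    · simp [hf, Set.indicator, ht, h]
    · simp [hf, Set.indicator, ht, h]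
      rw [max_eq_right (by linarith)]; simp
  have hc : ContinuousAt f u := by
    have : ContinuousAt (fun t : ℝ => ((max (1 - t) 0 : ℝ) : ℂ)) u := by fun_prop
    refine this.congr ?_
    filter_upwards [lt_mem_nhds hu] with t ht using (hfe t ht).symm
  have hV : VerticalIntegrable (mellin f) σ := by
    refine (K_int hσ).congr (Eventually.of_forall fun y => ?_)
    exact ((hM _ (hre y)).2).symm
  have key := mellinInv_mellin_eq σ f hu (hM σ (by simp; linarith)).1 hV hc
  rw [mellinInv, hfe u hu] at key
  rw [← key]
  have : ∀ y : ℝ, mellin f (σ + y * I) = K (σ + y * I) := fun y => (hM _ (hre y)).2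
  simp only [this, smul_eq_mul]
  have hpi : (Real.pi : ℂ) ≠ 0 := by exact_mod_cast Real.pi_ne_zero
  generalize (∫ y : ℝ, (u : ℂ) ^ (-((σ : ℂ) + y * I)) * K (σ + y * I)) = J
  rw [Complex.real_smul]
  push_cast
  field_simp

noncomputable def bb (n : ℕ) : ℝ := (ArithmeticFunction.moebius n : ℝ) * Real.log n ^ 4

noncomputable def cc : ℕ → ℂ := LSeries.logMul^[4] (fun n => ((ArithmeticFunction.moebius n : ℤ) : ℂ))

lemma cc_eq (n : ℕ) : cc n = (bb n : ℂ) := by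
  simp only [cc, bb, Function.iterate_succ, Function.iterate_zero, Function.comp, id, LSeries.logMul]
  push_cast
  rw [← Complex.ofReal_natCast, ← Complex.ofReal_log (Nat.cast_nonneg n)]
  ring

lemma cc_summable {s : ℂ} (hs : 1 < s.re) : LSeriesSummable cc s := by
  apply LSeriesSummable_of_abscissaOfAbsConv_lt_re
  rw [cc, LSeries.absicssaOfAbsConv_logPowMul]
  have := ArithmeticFunction.abscissaOfAbsConv_moebius
  rw [this]
  exact_mod_cast hs

lemma weighted_eq {σ x : ℝ} (hσ : 1 < σ) (hx : 0 < x) :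
    HasSum (fun n : ℕ => 2 * Real.pi * ((bb n * max (1 - n / x) 0 : ℝ) : ℂ))
      (∫ y : ℝ, (x : ℂ) ^ ((σ : ℂ) + y * I) * K (σ + y * I) * LSeries cc (σ + y * I)) := by
  set F : ℕ → ℝ → ℂ := fun n y => (x : ℂ) ^ ((σ : ℂ) + y * I) * K (σ + y * I) *
    LSeries.term cc (σ + y * I) n with hF
  have hxc : (x : ℂ) ≠ 0 := by exact_mod_cast hx.ne'
  have hFn : ∀ n : ℕ, n ≠ 0 → ∀ y, F n y =
      cc n * ((((n / x : ℝ)) : ℂ) ^ (-((σ : ℂ) + y * I)) * K (σ + y * I)) := by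
    intro n hn y
    simp only [hF, LSeries.term_of_ne_zero hn]
    rw [Complex.cpow_neg]
    push_cast
    rw [show (n : ℂ) / x = ((n : ℝ) : ℂ) * ((x⁻¹ : ℝ) : ℂ) by push_cast; rw [div_eq_mul_inv],
      Complex.mul_cpow_ofReal_nonneg (by positivity) (by positivity)]
    rw [Complex.ofReal_inv, Complex.inv_cpow _ _ (by rw [Complex.arg_ofReal_of_nonneg hx.le]; exact Real.pi_pos.ne)]
    rw [mul_inv, inv_inv]
    push_cast
    ring
  have hnorm : ∀ n y, ‖F n y‖ = x ^ σ * ‖LSeries.term cc (σ : ℂ) n‖ * ‖K (σ + y * I)‖ := by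
    intro n y
    simp only [hF, norm_mul, LSeries.norm_term_eq]
    rw [Complex.norm_cpow_eq_rpow_re_of_pos hx]
    simp
    ring
  have hcont : ∀ n, Continuous (F n) := by
    intro n
    by_cases hn : n = 0
    · subst hn; simp [hF]; exact continuous_const
    · have hnc : (n : ℂ) ≠ 0 := by exact_mod_cast hn
      have := K_cont hσ.le
      simp only [hF, LSeries.term_of_ne_zero hn]
      refine (Continuous.mul ?_ this).mul (Continuous.div continuous_const ?_ ?_)
      · exact Continuous.const_cpow (by fun_prop) (Or.inl hxc)
      · exact Continuous.const_cpow (by fun_prop) (Or.inl hnc)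
      · intro y; rw [Ne, Complex.cpow_eq_zero_iff]; tauto
  have hFint : ∀ n, Integrable (F n) := by
    intro n
    refine Integrable.mono' ((K_int hσ.le).norm.const_mul (x ^ σ * ‖LSeries.term cc (σ : ℂ) n‖))
      (hcont n).aestronglyMeasurable (Eventually.of_forall fun y => ?_)
    rw [hnorm]
  have hsum : Summable fun n => ∫ y, ‖F n y‖ := by
    simp only [hnorm]
    simp only [integral_const_mul]
    refine Summable.mul_right _ (Summable.mul_left _ ?_)
    exact (cc_summable (s := σ) (by simpa using hσ)).norm
  have H := hasSum_integral_of_summable_integral_norm hFint hsum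
  have e1 : (fun n => ∫ y, F n y) = (fun n : ℕ => 2 * Real.pi * ((bb n * max (1 - n / x) 0 : ℝ) : ℂ)) := by
    funext n
    by_cases hn : n = 0
    · subst hn; simp [hF, bb]
    · simp only [hFn n hn, integral_const_mul]
      rw [perron hσ.le (by positivity), cc_eq]
      push_cast; ring
  rw [e1] at H
  have e2 : (fun y : ℝ => (x : ℂ) ^ ((σ : ℂ) + y * I) * K (σ + y * I) * LSeries cc (σ + y * I)) =
      fun y => ∑' n, F n y := by
    funext y
    simp only [hF, tsum_mul_left]
    rfl
  rw [e2]
  exact H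

lemma weighted_bound : ∃ C : ℝ, 0 < C ∧ ∀ x : ℝ, Real.exp 4 ≤ x →
    |∑ n ∈ Finset.Icc 1 ⌊x⌋₊, bb n * (1 - n / x)| ≤ C * x := by
  obtain ⟨C, hC, hL⟩ := L_bound
  set J : ℝ := ∫ y : ℝ, (1 + |y|) ^ (-(3/2) : ℝ) with hJ
  have hJ0 : 0 ≤ J := integral_nonneg fun y => by positivity
  refine ⟨Real.exp 1 * (2 * C) * J + 1, by positivity, fun x hx => ?_⟩
  have hx0 : 0 < x := (Real.exp_pos 4).trans_le hx
  have hl : 4 ≤ Real.log x := (Real.le_log_iff_exp_le hx0).2 hx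
  set σ : ℝ := 1 + 1 / Real.log x with hσ
  have hlp : 0 < 1 / Real.log x := by positivity
  have hl4 : 1 / Real.log x ≤ 1 / 4 := one_div_le_one_div_of_le (by norm_num) hl
  have hxσ : x ^ σ = Real.exp 1 * x := by
    rw [Real.rpow_def_of_pos hx0, hσ, mul_add, mul_one, mul_one_div_cancel (by linarith), Real.exp_add,
      Real.exp_log hx0, mul_comm]
  have H := weighted_eq (σ := σ) (x := x) (by linarith) hx0
  have H2 : HasSum (fun n : ℕ => 2 * Real.pi * ((bb n * max (1 - n / x) 0 : ℝ) : ℂ))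
      (∑ n ∈ Finset.Icc 1 ⌊x⌋₊, 2 * Real.pi * ((bb n * max (1 - n / x) 0 : ℝ) : ℂ)) := by
    apply hasSum_sum_of_ne_finset_zero
    intro n hn
    rw [Finset.mem_Icc, not_and_or] at hn
    rcases hn with hn | hn
    · have : n = 0 := by omega
      subst this; simp [bb]
    · have : x < n := by
        have := Nat.lt_of_floor_lt (not_le.1 hn); exact this
      rw [max_eq_right]
      · simp
      · rw [sub_nonpos, le_div_iff₀ hx0]; linarith
  have E := H2.unique H
  have hsumeq : (∑ n ∈ Finset.Icc 1 ⌊x⌋₊, 2 * Real.pi * ((bb n * max (1 - n / x) 0 : ℝ) : ℂ)) =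
      ((2 * Real.pi * ∑ n ∈ Finset.Icc 1 ⌊x⌋₊, bb n * (1 - n / x) : ℝ) : ℂ) := by
    rw [Finset.mul_sum]
    push_cast
    refine Finset.sum_congr rfl fun n hn => ?_
    rw [max_eq_left]
    · push_cast; ring
    · rw [Finset.mem_Icc] at hn
      have : (n : ℝ) ≤ x := (Nat.le_floor_iff hx0.le).1 hn.2
      rw [sub_nonneg, div_le_iff₀ hx0]; linarith
  rw [hsumeq] at E
  have hb : ‖∫ y : ℝ, (x : ℂ) ^ ((σ : ℂ) + y * I) * K (σ + y * I) * LSeries cc (σ + y * I)‖ ≤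
      ∫ y : ℝ, (Real.exp 1 * x * (2 * C)) * (1 + |y|) ^ (-(3/2) : ℝ) := by
    refine norm_integral_le_of_norm_le ((int_bound _ (by norm_num)).const_mul _)
      (Eventually.of_forall fun y => ?_)
    rw [norm_mul, norm_mul, Complex.norm_cpow_eq_rpow_re_of_pos hx0]
    have h1 := K_norm (s := (σ : ℂ) + y * I) (by simp; linarith)
    have h2 := hL ((σ : ℂ) + y * I) (by simp; linarith) (by simp; linarith)
    have e1 : ((σ : ℂ) + y * I).re = σ := by simp
    have e2 : ((σ : ℂ) + y * I).im = y := by simp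
    rw [e2] at h1 h2
    rw [e1, hxσ]
    have hp : 0 < 1 + |y| := by positivity
    have e3 : (1 + |y|) ^ (-(3/2) : ℝ) = (1 + |y|) ^ (-2 : ℝ) * (1 + |y|) ^ (1/2 : ℝ) := by
      rw [← Real.rpow_add hp]; norm_num
    rw [e3]
    calc _ ≤ Real.exp 1 * x * (2 * (1 + |y|) ^ (-2 : ℝ)) * (C * (1 + |y|) ^ (1 / 2 : ℝ)) := by
          gcongr
          exact h2
      _ = _ := by ring
  rw [← E, integral_const_mul, Complex.norm_real, Real.norm_eq_abs, abs_mul, abs_of_pos (by positivity : (0:ℝ) < 2 * Real.pi)] at hb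
  have hpi := Real.pi_gt_three
  have := abs_nonneg (∑ n ∈ Finset.Icc 1 ⌊x⌋₊, bb n * (1 - n / x))
  rw [← hJ] at hb
  nlinarith

end MO

namespace MO
open Complex Filter Topology MeasureTheory

lemma sq_le_exp (t : ℝ) (ht : 0 ≤ t) : t ^ 2 ≤ Real.exp t := by
  have h := Real.quadratic_le_exp_of_nonneg (x := t / 2) (by positivity)
  have e : Real.exp t = Real.exp (t / 2) ^ 2 := by
    rw [← Real.exp_nat_mul]; congr 1; push_cast; ring
  rw [e]
  have : t ≤ Real.exp (t / 2) := by nlinarith [sq_nonneg (t - 2)]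
  gcongr

lemma bb_abs (n : ℕ) (hn : 1 ≤ n) (z : ℝ) (hz : (n : ℝ) ≤ z) : |bb n| ≤ Real.log z ^ 4 := by
  have h1 : (1 : ℝ) ≤ n := by exact_mod_cast hn
  have h0 : 0 ≤ Real.log n := Real.log_nonneg h1
  unfold bb
  rw [abs_mul, abs_of_nonneg (by positivity : (0:ℝ) ≤ Real.log n ^ 4)]
  have hm : |(ArithmeticFunction.moebius n : ℝ)| ≤ 1 := by
    exact_mod_cast ArithmeticFunction.abs_moebius_le_one (n := n)
  calc _ ≤ 1 * Real.log n ^ 4 := by gcongr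
    _ ≤ _ := by rw [one_mul]; gcongr

lemma taub : ∃ C : ℝ, 0 < C ∧ ∀ x : ℝ, Real.exp 4 ≤ x →
    |∑ n ∈ Finset.Icc 1 ⌊x⌋₊, bb n| ≤ C * x * Real.log x ^ 2 := by
  obtain ⟨C, hC, hW⟩ := weighted_bound
  refine ⟨5 * C + 32, by positivity, fun x hx => ?_⟩
  have hx0 : 0 < x := (Real.exp_pos 4).trans_le hx
  have hl : 4 ≤ Real.log x := (Real.le_log_iff_exp_le hx0).2 hx
  have hx1 : 1 ≤ x := by
    rw [← Real.log_nonneg_iff hx0]; linarith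
  set l := Real.log x with hl'
  set h : ℝ := x / l ^ 2 with hh
  have hl2 : l ^ 2 ≤ x := by
    have := sq_le_exp l (by linarith)
    rwa [hl', Real.exp_log hx0] at this
  have hh1 : 1 ≤ h := by rw [hh, le_div_iff₀ (by positivity)]; linarith
  have hhx : h ≤ x := by
    rw [hh]; apply div_le_self hx0.le; nlinarith
  have S : ∀ y : ℝ, Real.exp 4 ≤ y → |∑ n ∈ Finset.Icc 1 ⌊y⌋₊, bb n * (y - n)| ≤ C * y ^ 2 := by
    intro y hy
    have hy0 : 0 < y := (Real.exp_pos 4).trans_le hy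
    have : ∑ n ∈ Finset.Icc 1 ⌊y⌋₊, bb n * (y - n) = y * ∑ n ∈ Finset.Icc 1 ⌊y⌋₊, bb n * (1 - n / y) := by
      rw [Finset.mul_sum]
      refine Finset.sum_congr rfl fun n _ => ?_
      field_simp
    rw [this, abs_mul, abs_of_pos hy0]
    nlinarith [hW y hy]
  have S1 := S x hx
  have S2 := S (x + h) (by linarith)
  have hfl : ⌊x⌋₊ ≤ ⌊x + h⌋₊ := Nat.floor_mono (by linarith)
  have split : ∑ n ∈ Finset.Icc 1 ⌊x + h⌋₊, bb n * (x + h - n) =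
      ∑ n ∈ Finset.Icc 1 ⌊x⌋₊, bb n * (x + h - n) + ∑ n ∈ Finset.Ioc ⌊x⌋₊ ⌊x + h⌋₊, bb n * (x + h - n) := by
    have := Finset.sum_Ioc_consecutive (fun n : ℕ => bb n * (x + h - n)) (Nat.zero_le _) hfl
    exact this.symm
  have e1 : ∑ n ∈ Finset.Icc 1 ⌊x⌋₊, bb n * (x + h - n) =
     ∑ n ∈ Finset.Icc 1 ⌊x⌋₊, bb n * (x - n) + h * ∑ n ∈ Finset.Icc 1 ⌊x⌋₊, bb n := by
    rw [Finset.mul_sum, ← Finset.sum_add_distrib]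
    refine Finset.sum_congr rfl fun n _ => ?_
    ring
  have herr : |∑ n ∈ Finset.Ioc ⌊x⌋₊ ⌊x + h⌋₊, bb n * (x + h - n)| ≤ 2 * h * ((2 * l) ^ 4 * h) := by
    refine (Finset.abs_sum_le_sum_abs _ _).trans ?_
    have hcard : ((Finset.Ioc ⌊x⌋₊ ⌊x + h⌋₊).card : ℝ) ≤ 2 * h := by
      rw [Nat.card_Ioc, Nat.cast_sub hfl]
      have := Nat.floor_le (a := x + h) (by linarith)
      have := Nat.lt_floor_add_one x
      linarith
    calc _ ≤ ∑ n ∈ Finset.Ioc ⌊x⌋₊ ⌊x + h⌋₊, (2 * l) ^ 4 * h := by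
          refine Finset.sum_le_sum fun n hn => ?_
          rw [Finset.mem_Ioc] at hn
          have hn1 : (n : ℝ) ≤ x + h := (Nat.le_floor_iff (by linarith)).1 hn.2
          have hn2 : x < n := Nat.lt_of_floor_lt hn.1
          have hb := bb_abs n (by omega) (x ^ 2) (by nlinarith [Real.add_one_le_exp 4])
          rw [Real.log_pow] at hb
          rw [abs_mul, abs_of_nonneg (by linarith : 0 ≤ x + h - n)]
          push_cast at hb
          gcongr
          linarith
      _ = ((Finset.Ioc ⌊x⌋₊ ⌊x + h⌋₊).card : ℝ) * ((2 * l) ^ 4 * h) := by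
          rw [Finset.sum_const, nsmul_eq_mul]
      _ ≤ _ := by gcongr
  set A := ∑ n ∈ Finset.Icc 1 ⌊x⌋₊, bb n
  set Sx := ∑ n ∈ Finset.Icc 1 ⌊x⌋₊, bb n * (x - n)
  set Er := ∑ n ∈ Finset.Ioc ⌊x⌋₊ ⌊x + h⌋₊, bb n * (x + h - n)
  rw [split, e1] at S2
  have hA : |h * A| ≤ 5 * C * x ^ 2 + 2 * h * ((2 * l) ^ 4 * h) := by
    have hsq : C * (x + h) ^ 2 ≤ C * (2 * x) ^ 2 := by gcongr; linarith
    rw [abs_le] at *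
    constructor <;> nlinarith
  rw [abs_mul, abs_of_pos (by linarith)] at hA
  have hhl : h * l ^ 2 = x := by rw [hh]; field_simp
  have : h * |A| ≤ h * ((5 * C + 32) * x * l ^ 2) := by
    calc _ ≤ _ := hA
      _ = 5 * C * x * x + 32 * h * l ^ 2 * (h * l ^ 2) := by ring
      _ = 5 * C * x * (h * l ^ 2) + 32 * h * l ^ 2 * (h * l ^ 2) := by rw [hhl]
      _ = h * (5 * C * x * l ^ 2 + 32 * (h * l ^ 2) * l ^ 2) := by ring
      _ = _ := by rw [hhl]; ring
  exact le_of_mul_le_mul_left this (by linarith)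

lemma abel_ineq (b w : ℕ → ℝ) (m N : ℕ) (B : ℝ) (hw : ∀ k, m + 1 ≤ k → w (k + 1) ≤ w k)
    (hw0 : ∀ k, m + 1 ≤ k → 0 ≤ w k)
    (hB : ∀ k, m ≤ k → k ≤ N → |∑ n ∈ Finset.Ioc m k, b n| ≤ B) (hmN : m + 1 ≤ N) :
    |∑ n ∈ Finset.Ioc m N, b n * w n| ≤ B * w (m + 1) := by
  have key : ∀ k, m + 1 ≤ k → k ≤ N →
      |∑ n ∈ Finset.Ioc m k, b n * w n - w k * ∑ n ∈ Finset.Ioc m k, b n| ≤ B * (w (m + 1) - w k) := by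
    intro k hk
    induction k, hk using Nat.le_induction with
    | base => intro _; simp [mul_comm]
    | succ k hk ih =>
      intro hkN
      have ih := ih (by omega)
      have hBk := hB k (by omega) (by omega)
      rw [Finset.sum_Ioc_succ_top (by omega), Finset.sum_Ioc_succ_top (by omega)]
      set T := ∑ n ∈ Finset.Ioc m k, b n * w n
      set D := ∑ n ∈ Finset.Ioc m k, b n
      have e : T + b (k + 1) * w (k + 1) - w (k + 1) * (D + b (k + 1)) =
        (T - w k * D) + (w k - w (k + 1)) * D := by ring
      rw [e]
      have h2 : |(w k - w (k + 1)) * D| ≤ (w k - w (k + 1)) * B := by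
        rw [abs_mul, abs_of_nonneg (by linarith [hw k hk])]
        exact mul_le_mul_of_nonneg_left hBk (by linarith [hw k hk])
      refine (abs_add_le _ _).trans ?_
      linarith
  have h1 := key N hmN le_rfl
  have h2 := hB N (by omega) le_rfl
  have h3 : |w N * ∑ n ∈ Finset.Ioc m N, b n| ≤ w N * B := by
    rw [abs_mul, abs_of_nonneg (hw0 N hmN)]
    exact mul_le_mul_of_nonneg_left h2 (hw0 N hmN)
  have := abs_sub_abs_le_abs_sub (∑ n ∈ Finset.Ioc m N, b n * w n) (w N * ∑ n ∈ Finset.Ioc m N, b n)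
  linarith

noncomputable def MM (y : ℝ) : ℝ := ∑ n ∈ Finset.Icc 1 ⌊y⌋₊, (ArithmeticFunction.moebius n : ℝ)

lemma moeb_abs (n : ℕ) : |(ArithmeticFunction.moebius n : ℝ)| ≤ 1 := by
  exact_mod_cast ArithmeticFunction.abs_moebius_le_one (n := n)

lemma MM_triv (y : ℝ) (hy : 0 ≤ y) : |MM y| ≤ y := by
  refine (Finset.abs_sum_le_sum_abs _ _).trans ?_
  calc _ ≤ ∑ n ∈ Finset.Icc 1 ⌊y⌋₊, (1 : ℝ) := Finset.sum_le_sum fun n _ => moeb_abs n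
    _ = ⌊y⌋₊ := by simp
    _ ≤ y := Nat.floor_le hy

lemma MM_large : ∃ C : ℝ, 0 < C ∧ ∀ x : ℝ, Real.exp 10 ≤ x → |MM x| ≤ C * x / Real.log x ^ 2 := by
  obtain ⟨C, hC, hT⟩ := taub
  refine ⟨8 + 32 * C, by positivity, fun x hx => ?_⟩
  have hx0 : 0 < x := (Real.exp_pos _).trans_le hx
  have hl : 10 ≤ Real.log x := (Real.le_log_iff_exp_le hx0).2 hx
  set l := Real.log x with hl'
  set q := Real.exp (l / 2) with hq
  have hqq : q * q = x := by
    rw [hq, ← Real.exp_add, add_halves, hl', Real.exp_log hx0]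
  have hq5 : Real.exp 5 ≤ q := Real.exp_le_exp.2 (by linarith)
  have h54 : Real.exp 4 + 1 ≤ Real.exp 5 := by
    rw [show (5:ℝ) = 4 + 1 by norm_num, Real.exp_add]
    have := Real.add_one_le_exp (4:ℝ)
    have := Real.add_one_le_exp (1:ℝ)
    nlinarith
  have hq4 : Real.exp 4 + 1 ≤ q := by linarith
  have he4 := Real.add_one_le_exp (4:ℝ)
  have hq1 : 5 ≤ q := by linarith
  set m := ⌊q⌋₊ with hm
  set N := ⌊x⌋₊ with hN
  have hmq : (m : ℝ) ≤ q := Nat.floor_le (by linarith)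
  have hqm : q < m + 1 := Nat.lt_floor_add_one q
  have hNx : (N : ℝ) ≤ x := Nat.floor_le hx0.le
  have hmN : m + 1 ≤ N := by
    rw [hN, Nat.le_floor_iff hx0.le]; push_cast; nlinarith
  have hmpos : 1 ≤ m := by
    rw [hm, Nat.le_floor_iff (by linarith)]; push_cast; linarith
  have split : MM x = MM q + ∑ n ∈ Finset.Ioc m N, bb n * (1 / Real.log n ^ 4) := by
    have := Finset.sum_Ioc_consecutive (fun n : ℕ => (ArithmeticFunction.moebius n : ℝ)) (Nat.zero_le m) (by omega : m ≤ N)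
    have e : ∑ n ∈ Finset.Ioc m N, bb n * (1 / Real.log n ^ 4) = ∑ n ∈ Finset.Ioc m N, (ArithmeticFunction.moebius n : ℝ) := by
      refine Finset.sum_congr rfl fun n hn => ?_
      rw [Finset.mem_Ioc] at hn
      have : 0 < Real.log n := Real.log_pos (by exact_mod_cast (by omega : 1 < n))
      unfold bb
      field_simp
    rw [e]
    exact this.symm
  have hAk : ∀ k, m ≤ k → k ≤ N → |∑ n ∈ Finset.Icc 1 k, bb n| ≤ C * x * l ^ 2 := by
    intro k h1 h2
    have h1' : (m : ℝ) ≤ k := by exact_mod_cast h1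
    have h2' : (k : ℝ) ≤ N := by exact_mod_cast h2
    have := hT k (by linarith)
    rw [Nat.floor_natCast] at this
    have hk1 : (1:ℝ) ≤ k := by linarith
    have hlk : 0 ≤ Real.log k := Real.log_nonneg hk1
    have hlkl : Real.log k ≤ l := Real.log_le_log (by linarith) (by linarith)
    refine this.trans ?_
    have : (k : ℝ) ≤ x := by linarith
    gcongr
  have hab := abel_ineq bb (fun n => 1 / Real.log n ^ 4) m N (2 * (C * x * l ^ 2)) ?_ ?_ ?_ hmN
  · have hw : 1 / Real.log ((m + 1 : ℕ) : ℝ) ^ 4 ≤ 1 / (l / 2) ^ 4 := by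
      have : l / 2 ≤ Real.log ((m + 1 : ℕ) : ℝ) := by
        rw [Real.le_log_iff_exp_le (by positivity)]
        push_cast; exact hqm.le
      gcongr
    have hab2 : |∑ n ∈ Finset.Ioc m N, bb n * (1 / Real.log n ^ 4)| ≤ 32 * C * x / l ^ 2 := by
      refine hab.trans ((mul_le_mul_of_nonneg_left hw (by positivity)).trans (le_of_eq ?_))
      field_simp; norm_num
    have hMq : |MM q| ≤ 8 * x / l ^ 2 := by
      refine (MM_triv q (by linarith)).trans ?_
      rw [le_div_iff₀ (by positivity)]
      have := Real.quadratic_le_exp_of_nonneg (x := l / 2) (by positivity)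
      have : l ^ 2 ≤ 8 * q := by nlinarith
      nlinarith
    rw [split]
    calc _ ≤ _ := abs_add_le _ _
      _ ≤ 8 * x / l ^ 2 + 32 * C * x / l ^ 2 := add_le_add hMq hab2
      _ = _ := by ring
  · intro k hk
    have : 0 < Real.log k := Real.log_pos (by exact_mod_cast (by omega : 1 < k))
    have h0 : (0:ℝ) < k := by exact_mod_cast (by omega : 0 < k)
    have : Real.log k ≤ Real.log ((k + 1 : ℕ) : ℝ) := Real.log_le_log h0 (by push_cast; linarith)
    show 1 / Real.log ((k + 1 : ℕ) : ℝ) ^ 4 ≤ 1 / Real.log k ^ 4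
    gcongr
  · intro k _; positivity
  · intro k h1 h2
    have := Finset.sum_Ioc_consecutive bb (Nat.zero_le m) h1
    have e : ∑ n ∈ Finset.Ioc m k, bb n = ∑ n ∈ Finset.Icc 1 k, bb n - ∑ n ∈ Finset.Icc 1 m, bb n :=
      eq_sub_of_add_eq' this
    rw [e]
    have := hAk k h1 h2
    have := hAk m le_rfl (by omega)
    refine (abs_sub _ _).trans ?_
    linarith

lemma MM_bound : ∃ C : ℝ, 0 < C ∧ ∀ y : ℝ, 1 ≤ y → |MM y| ≤ C * y / (10 + Real.log y) ^ 2 := by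
  obtain ⟨C, hC, h⟩ := MM_large
  refine ⟨4 * C + 400, by positivity, fun y hy => ?_⟩
  have hl := Real.log_nonneg hy
  have hy0 : 0 < y := by linarith
  by_cases hy' : Real.exp 10 ≤ y
  · have h10 : 10 ≤ Real.log y := (Real.le_log_iff_exp_le hy0).2 hy'
    refine (h y hy').trans ?_
    rw [div_le_div_iff₀ (by positivity) (by positivity)]
    have : (10 + Real.log y) ^ 2 ≤ 4 * Real.log y ^ 2 := by nlinarith
    have h2 : 0 ≤ y * Real.log y ^ 2 := by positivity
    calc C * y * (10 + Real.log y) ^ 2 ≤ C * y * (4 * Real.log y ^ 2) := by gcongr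
      _ ≤ _ := by nlinarith
  · have h10 : Real.log y ≤ 10 := (Real.log_le_iff_le_exp hy0).2 (not_le.1 hy').le
    refine (MM_triv y hy0.le).trans ?_
    rw [le_div_iff₀ (by positivity)]
    have : (10 + Real.log y) ^ 2 ≤ 400 := by nlinarith
    nlinarith

end MO

namespace MO
open Filter Topology

noncomputable def Mp (p N : ℕ) : ℝ :=
  ∑ m ∈ (Finset.Icc 1 N).filter (fun m => ¬ p ∣ m), (ArithmeticFunction.moebius m : ℝ)

lemma moeb_prime_mul {p : ℕ} (hp : p.Prime) (m : ℕ) :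
    (ArithmeticFunction.moebius (p * m) : ℝ) = if ¬ p ∣ m then -(ArithmeticFunction.moebius m : ℝ) else 0 := by
  by_cases h : ¬ p ∣ m
  · rw [if_pos h]
    have hc : Nat.Coprime p m := (Nat.Prime.coprime_iff_not_dvd hp).2 h
    rw [ArithmeticFunction.isMultiplicative_moebius.map_mul_of_coprime hc,
      ArithmeticFunction.moebius_apply_prime hp]
    push_cast; ring
  · rw [if_neg h]
    rw [not_not] at h
    have : ¬ Squarefree (p * m) := by
      intro hs
      obtain ⟨k, rfl⟩ := h
      have := hs p ⟨k, by ring⟩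
      exact hp.one_lt.ne' (Nat.isUnit_iff.1 this)
    rw [ArithmeticFunction.moebius_eq_zero_of_not_squarefree this]
    simp

lemma G_eq {p : ℕ} (hp : p.Prime) (N : ℕ) :
    ∑ n ∈ (Finset.Icc 1 N).filter (fun n => p ∣ n), (ArithmeticFunction.moebius n : ℝ) = - Mp p (N / p) := by
  have himg : (Finset.Icc 1 N).filter (fun n => p ∣ n) = (Finset.Icc 1 (N / p)).image (fun m => p * m) := by
    ext n
    simp only [Finset.mem_filter, Finset.mem_Icc, Finset.mem_image]
    constructor
    · rintro ⟨⟨h1, h2⟩, k, rfl⟩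
      refine ⟨k, ⟨?_, ?_⟩, rfl⟩
      · exact Nat.pos_of_ne_zero (by rintro rfl; simp at h1)
      · rw [Nat.le_div_iff_mul_le hp.pos]; linarith
    · rintro ⟨k, ⟨h1, h2⟩, rfl⟩
      rw [Nat.le_div_iff_mul_le hp.pos] at h2
      exact ⟨⟨Nat.mul_pos hp.pos h1, by linarith⟩, dvd_mul_right _ _⟩
  rw [himg, Finset.sum_image (fun a _ b _ h => Nat.eq_of_mul_eq_mul_left hp.pos h)]
  simp only [moeb_prime_mul hp]
  rw [Mp, ← Finset.sum_filter, Finset.sum_neg_distrib]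

lemma Mp_rec {p : ℕ} (hp : p.Prime) (y : ℝ) : Mp p ⌊y⌋₊ = MM y + Mp p ⌊y / p⌋₊ := by
  have h1 := Finset.sum_filter_add_sum_filter_not (Finset.Icc 1 ⌊y⌋₊) (fun n => p ∣ n)
    (fun n => (ArithmeticFunction.moebius n : ℝ))
  rw [G_eq hp] at h1
  rw [Nat.floor_div_natCast]
  have : MM y = -Mp p (⌊y⌋₊ / p) + Mp p ⌊y⌋₊ := h1.symm
  linarith

lemma Mp_bound : ∃ C : ℝ, 0 < C ∧ ∀ p : ℕ, p.Prime → ∀ y : ℝ, 1 ≤ y →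
    |Mp p ⌊y⌋₊| ≤ C * y / (10 + Real.log y) ^ 2 := by
  obtain ⟨C, hC, hM⟩ := MM_bound
  refine ⟨10 * C, by positivity, fun p hp => ?_⟩
  have hp2 : (2 : ℝ) ≤ p := by exact_mod_cast hp.two_le
  have hp0 : (0 : ℝ) < p := by linarith
  set l := Real.log p with hl
  have hl2 : 0.69 ≤ l := by
    have := Real.log_two_gt_d9
    have := Real.log_le_log (by norm_num) hp2
    linarith
  have hratio : (1 + l / 10) ^ 2 ≤ 0.9 * p := by
    have := Real.quadratic_le_exp_of_nonneg (x := l) (by linarith)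
    rw [hl, Real.exp_log hp0, ← hl] at this
    nlinarith
  suffices H : ∀ N : ℕ, ∀ y : ℝ, ⌊y⌋₊ = N → 1 ≤ y →
    |Mp p ⌊y⌋₊| ≤ 10 * C * y / (10 + Real.log y) ^ 2 from fun y hy => H _ y rfl hy
  intro N
  induction N using Nat.strong_induction_on with
  | _ N ih =>
  intro y hyN hy
  have hy0 : 0 < y := by linarith
  have hL := Real.log_nonneg hy
  have hMy := hM y hy
  rw [Mp_rec hp y]
  by_cases hyp : y / p < 1
  · rw [Nat.floor_eq_zero.2 hyp]
    simp only [Mp]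
    simp only [zero_lt_one, Finset.Icc_eq_empty_of_lt, Finset.filter_empty, Finset.sum_empty, add_zero]
    refine hMy.trans ?_
    gcongr
    linarith
  · have hyp : 1 ≤ y / p := not_lt.1 hyp
    have hlt : ⌊y / p⌋₊ < N := by
      rw [Nat.floor_div_natCast, hyN]
      apply Nat.div_lt_self _ hp.one_lt
      rw [← hyN]; exact Nat.floor_pos.2 hy
    have h1 := ih _ hlt (y / p) rfl hyp
    have hlog : Real.log (y / p) = Real.log y - l := Real.log_div hy0.ne' hp0.ne'
    have hlog0 := Real.log_nonneg hyp
    rw [hlog] at h1 hlog0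
    set L := Real.log y
    have h2 : 10 * C * (y / p) / (10 + (L - l)) ^ 2 ≤ 9 * C * y / (10 + L) ^ 2 := by
      have ha : 10 + L ≤ (1 + l / 10) * (10 + (L - l)) := by nlinarith
      have hb : (10 + L) ^ 2 ≤ 0.9 * p * (10 + (L - l)) ^ 2 := by
        calc (10 + L) ^ 2 ≤ ((1 + l / 10) * (10 + (L - l))) ^ 2 := by gcongr
          _ = (1 + l / 10) ^ 2 * (10 + (L - l)) ^ 2 := by ring
          _ ≤ _ := by gcongr
      rw [div_le_div_iff₀ (by positivity) (by positivity)]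
      calc 10 * C * (y / p) * (10 + L) ^ 2 ≤ 10 * C * (y / p) * (0.9 * p * (10 + (L - l)) ^ 2) := by gcongr
        _ = _ := by field_simp; norm_num
    calc _ ≤ |MM y| + |Mp p ⌊y / p⌋₊| := abs_add_le _ _
      _ ≤ C * y / (10 + L) ^ 2 + 9 * C * y / (10 + L) ^ 2 := add_le_add hMy (h1.trans h2)
      _ = _ := by ring

lemma F_eq (N : ℕ) : ∑ n ∈ Finset.Icc 1 N, (ArithmeticFunction.moebius n : ℝ) * (n.primeFactors.card : ℝ) =
    - ∑ p ∈ (Finset.Icc 1 N).filter Nat.Prime, Mp p (N / p) := by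
  have h1 : ∀ n ∈ Finset.Icc 1 N, (ArithmeticFunction.moebius n : ℝ) * (n.primeFactors.card : ℝ) =
      ∑ p ∈ (Finset.Icc 1 N).filter Nat.Prime, if p ∣ n then (ArithmeticFunction.moebius n : ℝ) else 0 := by
    intro n hn
    rw [Finset.mem_Icc] at hn
    rw [← Finset.sum_filter, Finset.sum_const, nsmul_eq_mul, mul_comm]
    congr 3
    ext p
    simp only [Nat.mem_primeFactors, Finset.mem_filter, Finset.mem_Icc]
    constructor
    · rintro ⟨hp, hd, h0⟩
      exact ⟨⟨⟨hp.one_le, (Nat.le_of_dvd hn.1 hd).trans hn.2⟩, hp⟩, hd⟩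
    · rintro ⟨⟨_, hp⟩, hd⟩
      exact ⟨hp, hd, by omega⟩
  rw [Finset.sum_congr rfl h1, Finset.sum_comm, ← Finset.sum_neg_distrib]
  refine Finset.sum_congr rfl fun p hp => ?_
  rw [← Finset.sum_filter, G_eq (Finset.mem_filter.1 hp).2]

lemma sum_inv_sq (J : ℕ) : ∑ j ∈ Finset.range J, 1 / (10 + (j : ℝ)) ^ 2 ≤ 1 / 9 - 1 / (9 + (J : ℝ)) := by
  induction J with
  | zero => simp
  | succ J ih =>
    rw [Finset.sum_range_succ]
    have : 1 / (10 + (J : ℝ)) ^ 2 ≤ 1 / (9 + (J : ℝ)) - 1 / (9 + ((J + 1 : ℕ) : ℝ)) := by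
      have h9 : (0:ℝ) < 9 + J := by positivity
      push_cast
      have e : 1 / (9 + (J : ℝ)) - 1 / (9 + (J + 1)) = 1 / ((9 + J) * (10 + J)) := by
        field_simp; ring
      rw [e]
      apply one_div_le_one_div_of_le (by positivity)
      nlinarith
    linarith

lemma theta_sum (x : ℝ) (hx : 2 ≤ x) :
    ∑ p ∈ (Finset.Icc 1 ⌊x⌋₊).filter Nat.Prime, Real.log p / (p * (10 + Real.log (x / p)) ^ 2) ≤ 1 := by
  have hx0 : 0 < x := by linarith
  have hmem : ∀ p ∈ (Finset.Icc 1 ⌊x⌋₊).filter Nat.Prime, (1:ℝ) ≤ p ∧ (p : ℝ) ≤ x := by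
    intro p hp
    rw [Finset.mem_filter, Finset.mem_Icc] at hp
    exact ⟨by exact_mod_cast hp.1.1, (Nat.le_floor_iff hx0.le).1 hp.1.2⟩
  set J := ⌊Real.log x⌋₊ + 1 with hJ
  have hmap : ∀ p ∈ (Finset.Icc 1 ⌊x⌋₊).filter Nat.Prime, ⌊Real.log (x / p)⌋₊ ∈ Finset.range J := by
    intro p hp
    obtain ⟨h1, h2⟩ := hmem p hp
    rw [Finset.mem_range, hJ, Nat.lt_succ_iff]
    apply Nat.floor_mono
    apply Real.log_le_log (by positivity)
    exact div_le_self hx0.le h1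
  rw [← Finset.sum_fiberwise_of_maps_to hmap]
  have hfib : ∀ j ∈ Finset.range J, ∑ p ∈ ((Finset.Icc 1 ⌊x⌋₊).filter Nat.Prime).filter (fun p => ⌊Real.log (x / (p : ℕ))⌋₊ = j),
      Real.log p / (p * (10 + Real.log (x / p)) ^ 2) ≤ 9 * (1 / (10 + (j : ℝ)) ^ 2) := by
    intro j _
    have hterm : ∀ p ∈ ((Finset.Icc 1 ⌊x⌋₊).filter Nat.Prime).filter (fun p => ⌊Real.log (x / (p : ℕ))⌋₊ = j),
        Real.log p / (p * (10 + Real.log (x / p)) ^ 2) ≤ (Real.exp (j + 1) / (x * (10 + j) ^ 2)) * Real.log p := by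
      intro p hp
      rw [Finset.mem_filter] at hp
      obtain ⟨h1, h2⟩ := hmem p hp.1
      have hxp : 1 ≤ x / p := by rw [le_div_iff₀ (by linarith)]; linarith
      have hlog := Real.log_nonneg hxp
      have hj1 : (j : ℝ) ≤ Real.log (x / p) := by rw [← hp.2]; exact Nat.floor_le hlog
      have hj2 : Real.log (x / p) < j + 1 := by rw [← hp.2]; exact Nat.lt_floor_add_one _
      have hpx : x ≤ p * Real.exp (j + 1) := by
        have := (Real.log_lt_iff_lt_exp (by linarith)).1 hj2
        rw [div_lt_iff₀ (by linarith)] at this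
        linarith
      have hlp := Real.log_nonneg h1
      rw [div_mul_eq_mul_div, div_le_div_iff₀ (by positivity) (by positivity)]
      have : x * (10 + (j:ℝ)) ^ 2 ≤ p * Real.exp (j + 1) * (10 + Real.log (x / p)) ^ 2 := by gcongr
      nlinarith
    refine (Finset.sum_le_sum hterm).trans ?_
    rw [← Finset.mul_sum]
    have hth : ∑ p ∈ ((Finset.Icc 1 ⌊x⌋₊).filter Nat.Prime).filter (fun p => ⌊Real.log (x / (p : ℕ))⌋₊ = j), Real.log p
        ≤ Real.log 4 * (x / Real.exp j) := by
      refine le_trans ?_ (Chebyshev.theta_le_log4_mul_x (by positivity))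
      unfold Chebyshev.theta
      apply Finset.sum_le_sum_of_subset_of_nonneg
      · intro p hp
        rw [Finset.mem_filter] at hp
        obtain ⟨h1, h2⟩ := hmem p hp.1
        have hxp : 1 ≤ x / p := by rw [le_div_iff₀ (by linarith)]; linarith
        have hlog := Real.log_nonneg hxp
        have hj1 : (j : ℝ) ≤ Real.log (x / p) := by rw [← hp.2]; exact Nat.floor_le hlog
        rw [Finset.mem_filter, Finset.mem_Ioc]
        refine ⟨⟨by exact_mod_cast h1, ?_⟩, (Finset.mem_filter.1 hp.1).2⟩
        rw [Nat.le_floor_iff (by positivity), le_div_iff₀ (Real.exp_pos _)]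
        rw [Real.le_log_iff_exp_le (by linarith), le_div_iff₀ (by linarith)] at hj1
        linarith
      · intro p hp _
        exact Real.log_natCast_nonneg p
    refine (mul_le_mul_of_nonneg_left hth (by positivity)).trans ?_
    have e : Real.exp (j + 1) / (x * (10 + (j:ℝ)) ^ 2) * (Real.log 4 * (x / Real.exp j)) =
        (Real.exp 1 * Real.log 4) * (1 / (10 + (j : ℝ)) ^ 2) := by
      rw [Real.exp_add]; field_simp
    rw [e]
    gcongr
    have h4 : Real.log 4 = 2 * Real.log 2 := by
      rw [show (4:ℝ) = 2 ^ 2 by norm_num, Real.log_pow]; norm_num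
    have := Real.log_two_lt_d9
    have := Real.exp_one_lt_d9
    have := Real.exp_pos 1
    rw [h4]
    nlinarith
  refine (Finset.sum_le_sum hfib).trans ?_
  rw [← Finset.mul_sum]
  have := sum_inv_sq J
  have : (0:ℝ) ≤ 1 / (9 + J) := by positivity
  linarith

lemma prime_sum (x : ℝ) (hx : 2 ≤ x) :
    ∑ p ∈ (Finset.Icc 1 ⌊x⌋₊).filter Nat.Prime, 1 / (p * (10 + Real.log (x / p)) ^ 2) ≤ 14 / Real.log x := by
  have hx0 : 0 < x := by linarith
  have hL : 0.69 ≤ Real.log x := by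
    have := Real.log_two_gt_d9
    have := Real.log_le_log (by norm_num) hx
    linarith
  set L := Real.log x with hLd
  have hterm : ∀ p ∈ (Finset.Icc 1 ⌊x⌋₊).filter Nat.Prime, 1 / (p * (10 + Real.log (x / p)) ^ 2) ≤
      4 / L ^ 2 * (p : ℝ)⁻¹ + 2 / L * (Real.log p / (p * (10 + Real.log (x / p)) ^ 2)) := by
    intro p hp
    rw [Finset.mem_filter, Finset.mem_Icc] at hp
    have h1 : (1:ℝ) ≤ p := by exact_mod_cast hp.1.1
    have h2 : (p:ℝ) ≤ x := (Nat.le_floor_iff hx0.le).1 hp.1.2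
    have hlog : Real.log (x / p) = L - Real.log p := Real.log_div hx0.ne' (by linarith)
    have hxp : 1 ≤ x / p := by rw [le_div_iff₀ (by linarith)]; linarith
    have hlog0 := Real.log_nonneg hxp
    have hlp := Real.log_nonneg h1
    set v := Real.log (x / p)
    by_cases hc : Real.log p ≤ L / 2
    · have : 1 / (p * (10 + v) ^ 2) ≤ 4 / L ^ 2 * (p : ℝ)⁻¹ := by
        have e : 4 / L ^ 2 * (p : ℝ)⁻¹ = 1 / (p * (L / 2) ^ 2) := by field_simp; norm_num
        rw [e]
        gcongr
        linarith
      have : 0 ≤ 2 / L * (Real.log p / (p * (10 + v) ^ 2)) := by positivity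
      linarith
    · have : 1 / (p * (10 + v) ^ 2) ≤ 2 / L * (Real.log p / (p * (10 + v) ^ 2)) := by
        rw [div_mul_div_comm, div_le_div_iff₀ (by positivity) (by positivity)]
        have : 0 ≤ p * (10 + v) ^ 2 := by positivity
        nlinarith
      have : 0 ≤ 4 / L ^ 2 * (p : ℝ)⁻¹ := by positivity
      linarith
  refine (Finset.sum_le_sum hterm).trans ?_
  rw [Finset.sum_add_distrib, ← Finset.mul_sum, ← Finset.mul_sum]
  have h1 : ∑ p ∈ (Finset.Icc 1 ⌊x⌋₊).filter Nat.Prime, (p : ℝ)⁻¹ ≤ 1 + L := by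
    have := harmonic_floor_le_one_add_log x (by linarith)
    rw [harmonic_eq_sum_Icc] at this
    push_cast at this
    refine le_trans (Finset.sum_le_sum_of_subset_of_nonneg (Finset.filter_subset _ _) ?_) this
    intros; positivity
  have h2 := theta_sum x hx
  calc _ ≤ 4 / L ^ 2 * (1 + L) + 2 / L * 1 := by gcongr
    _ ≤ _ := by
      have e : 4 / L ^ 2 * (1 + L) + 2 / L * 1 = (4 / L + 6) / L := by field_simp; ring
      rw [e]
      gcongr
      have : 4 / L ≤ 8 := by rw [div_le_iff₀ (by linarith)]; linarith
      linarith

lemma final : ∃ C > (0 : ℝ), ∀ x : ℝ, 2 ≤ x →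
      |∑ n ∈ Finset.Icc 1 ⌊x⌋₊, (ArithmeticFunction.moebius n : ℝ) * (n.primeFactors.card : ℝ)|
        ≤ C * x / Real.log x := by
  obtain ⟨C, hC, hM⟩ := Mp_bound
  refine ⟨14 * C, by positivity, fun x hx => ?_⟩
  have hx0 : 0 < x := by linarith
  rw [F_eq, abs_neg]
  refine (Finset.abs_sum_le_sum_abs _ _).trans ?_
  calc _ ≤ ∑ p ∈ (Finset.Icc 1 ⌊x⌋₊).filter Nat.Prime, C * x * (1 / (p * (10 + Real.log (x / p)) ^ 2)) := by
        refine Finset.sum_le_sum fun p hp => ?_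
        rw [Finset.mem_filter, Finset.mem_Icc] at hp
        have h1 : (1:ℝ) ≤ p := by exact_mod_cast hp.1.1
        have h2 : (p:ℝ) ≤ x := (Nat.le_floor_iff hx0.le).1 hp.1.2
        have hxp : 1 ≤ x / p := by rw [le_div_iff₀ (by linarith)]; linarith
        have := hM p hp.2 (x / p) hxp
        rw [Nat.floor_div_natCast] at this
        refine this.trans (le_of_eq ?_)
        have := Real.log_nonneg hxp
        field_simp
    _ = C * x * ∑ p ∈ (Finset.Icc 1 ⌊x⌋₊).filter Nat.Prime, (1 / (p * (10 + Real.log (x / p)) ^ 2)) := by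
        rw [Finset.mul_sum]
    _ ≤ C * x * (14 / Real.log x) := by
        gcongr
        exact prime_sum x hx
    _ = _ := by ring

end MO


open Finset ArithmeticFunction Real

/-- There is a constant `C > 0` such that for all `x ≥ 2`,
`|Σ_{n ≤ x} μ(n) ω(n)| ≤ C x / log x`. -/
theorem moebius_omega_sum_bound :
    ∃ C > (0 : ℝ), ∀ x : ℝ, 2 ≤ x →
      |∑ n ∈ Finset.Icc 1 ⌊x⌋₊, (moebius n : ℝ) * (n.primeFactors.card : ℝ)|
        ≤ C * x / Real.log x := by
  exact MO.final
end
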